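/- Assume 𝕋 is bounded, p > 0 dρ-a.e., L²(𝕋_κ; r dσ_κ) is infinite dimensional, and let S be a self-adjoint operator with separated boundary conditions as above. Suppose L := ∫_𝕋 √(r(t)/p(t)) dt > 0 (Lebesgue integral over 𝕋). Then the set of eigenvalues of S is an infinite subset of ℝ which is bounded from below and has no finite accumulation point, and, enumerating it as a strictly increasing sequence E₀ < E₁ < E₂ < ⋯, one has lim_{n→∞} E_n/n² = π²/L². -/

import Mathlib

open MeasureTheory Set Filter
open scoped ENNReal NNReal Classical

/-- Forward shift of a time scale. -/
noncomputable def tsSigma (T : Set ℝ) (t : ℝ) : ℝ :=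
  if ({s | s ∈ T ∧ t < s}).Nonempty then sInf {s | s ∈ T ∧ t < s} else sSup T

/-- Backward shift of a time scale. -/
noncomputable def tsRho (T : Set ℝ) (t : ℝ) : ℝ :=
  if ({s | s ∈ T ∧ s < t}).Nonempty then sSup {s | s ∈ T ∧ s < t} else sInf T

/-- `𝕋_κ` : the time scale with the left endpoint removed if it is finite and right-scattered. -/
noncomputable def tsKappa (T : Set ℝ) : Set ℝ :=
  if BddBelow T ∧ sInf T < tsSigma T (sInf T) then T \ {sInf T} else T

/-- Extension `p̄` of a function on `𝕋_κ` to all of `ℝ`. -/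
noncomputable def extK (T : Set ℝ) (p : ℝ → ℂ) (t : ℝ) : ℂ :=
  if t ∈ tsKappa T then p t else p (tsSigma (tsKappa T) t)

/-- Coercion of a real-valued coefficient to a complex-valued one. -/
def cR (f : ℝ → ℝ) : ℝ → ℂ := fun t => (f t : ℂ)

/-- `(u, u^[1])` is an integrated pair with density `h` against the measure `μ = dσ_κ`. -/
def IsPair (T : Set ℝ) (μ : Measure ℝ) (p : ℝ → ℂ) (u u1 h : ℝ → ℂ) : Prop :=
  ∀ c x : ℝ, c ≤ x →
    u x = u c + ∫ t in c..x, u1 t / extK T p t ∧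
    u1 x = u1 c + ∫ t in Set.Ioc c x, h t ∂μ

/-- `(u, u^[1])` is a solution pair of `(ℓ - z) u = g`. -/
def IsSLSol (T : Set ℝ) (μ : Measure ℝ) (p r q : ℝ → ℂ) (z : ℂ) (g : ℝ → ℂ)
    (u u1 : ℝ → ℂ) : Prop :=
  IsPair T μ p u u1 (fun t => (q t - z * r t) * u t - r t * g t)

/-- Wronskian of two pairs. -/
def Wr (u u1 v v1 : ℝ → ℂ) (x : ℝ) : ℂ := u x * v1 x - u1 x * v x

/-- The integrand `|u|² r` as an `ℝ≥0∞`-valued function. -/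
noncomputable def sqWeight (r : ℝ → ℝ) (u : ℝ → ℂ) (t : ℝ) : ℝ≥0∞ :=
  ((‖u t‖₊ : ℝ≥0∞)) ^ 2 * ENNReal.ofReal (r t)

/-- `u` lies in `L²` near the left endpoint `a`. -/
def L2NearLeft (T : Set ℝ) (μ : Measure ℝ) (r : ℝ → ℝ) (u : ℝ → ℂ) : Prop :=
  ∀ c ∈ tsKappa T, ∫⁻ t in {t | (∃ s ∈ T, s < t) ∧ t ≤ c} ∩ tsKappa T, sqWeight r u t ∂μ < ∞

/-- `u` lies in `L²` near the right endpoint `b`. -/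
def L2NearRight (T : Set ℝ) (μ : Measure ℝ) (r : ℝ → ℝ) (u : ℝ → ℂ) : Prop :=
  ∀ c ∈ tsKappa T, ∫⁻ t in {t | c ≤ t ∧ ∃ s ∈ T, t < s} ∩ tsKappa T, sqWeight r u t ∂μ < ∞

/-- `ℓ` is in the limit-circle case at the left endpoint. -/
def LimitCircleLeft (T : Set ℝ) (μ : Measure ℝ) (p r q : ℝ → ℝ) : Prop :=
  ∀ z : ℂ, ∀ u u1 : ℝ → ℂ, IsSLSol T μ (cR p) (cR r) (cR q) z 0 u u1 → L2NearLeft T μ r u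

/-- `ℓ` is in the limit-point case at the left endpoint. -/
def LimitPointLeft (T : Set ℝ) (μ : Measure ℝ) (p r q : ℝ → ℝ) : Prop :=
  ∀ z : ℂ, ∃ u u1 : ℝ → ℂ, IsSLSol T μ (cR p) (cR r) (cR q) z 0 u u1 ∧ ¬ L2NearLeft T μ r u

/-- `ℓ` is in the limit-circle case at the right endpoint. -/
def LimitCircleRight (T : Set ℝ) (μ : Measure ℝ) (p r q : ℝ → ℝ) : Prop :=
  ∀ z : ℂ, ∀ u u1 : ℝ → ℂ, IsSLSol T μ (cR p) (cR r) (cR q) z 0 u u1 → L2NearRight T μ r u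

/-- `ℓ` is in the limit-point case at the right endpoint. -/
def LimitPointRight (T : Set ℝ) (μ : Measure ℝ) (p r q : ℝ → ℝ) : Prop :=
  ∀ z : ℂ, ∃ u u1 : ℝ → ℂ, IsSLSol T μ (cR p) (cR r) (cR q) z 0 u u1 ∧ ¬ L2NearRight T μ r u

/-- The action `ℓ u = (-h + q u)/r` of the differential expression on a pair with density `h`. -/
noncomputable def ellApply (r q : ℝ → ℝ) (h u : ℝ → ℂ) (t : ℝ) : ℂ :=
  (-h t + (q t : ℂ) * u t) / (r t : ℂ)

/-- Membership in `L²(𝕋_κ; r dσ_κ)`. -/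
def MemL2T (T : Set ℝ) (μ : Measure ℝ) (r : ℝ → ℝ) (u : ℝ → ℂ) : Prop :=
  ∫⁻ t in tsKappa T, sqWeight r u t ∂μ < ∞

/-- The pair `(u, u^[1])` with density `h` belongs to `D_ℓ²`. -/
def MemD2 (T : Set ℝ) (μ : Measure ℝ) (p r q : ℝ → ℝ) (u u1 h : ℝ → ℂ) : Prop :=
  LocallyIntegrable h μ ∧ IsPair T μ (cR p) u u1 h ∧ MemL2T T μ r u ∧
    MemL2T T μ r (ellApply r q h u)

/-- The filter `x ↓ a`, `x ∈ 𝕋`. -/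
noncomputable def leftLimFilter (T : Set ℝ) : Filter ℝ :=
  if BddBelow T then nhdsWithin (sInf T) T else Filter.atBot ⊓ Filter.principal T

/-- The filter `x ↑ b`, `x ∈ 𝕋`. -/
noncomputable def rightLimFilter (T : Set ℝ) : Filter ℝ :=
  if BddAbove T then nhdsWithin (sSup T) T else Filter.atTop ⊓ Filter.principal T

/-- The measure `r dσ_κ` on `𝕋_κ`, giving the Hilbert space `L²(𝕋_κ; r dσ_κ)`. -/
noncomputable def wM (T : Set ℝ) (μ : Measure ℝ) (r : ℝ → ℝ) : Measure ℝ :=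
  (μ.restrict (tsKappa T)).withDensity fun t => ENNReal.ofReal (r t)

/-!
Write `X = 𝕋_κ` and `[a, b]` for its convex hull. Almost every point of a gap of `X` lies either in
its left half or in its right half. Giving Lebesgue measure the weight `2` on left halves and `0` on
right halves, and moving each gap to its left end, produces the forward shift measure; exchanging
left and right produces the backward one. The time-scale equation thus becomes the continuous system
`y' = P y₁`, `y₁' = (Q - E R) y` on `[a, b]`, in which `P` lives on the right halves and `Q`, `R` on
the left halves of the gaps, so that `P R` vanishes off `X` and `∫ √(P R) = ∫_𝕋 √(r / p)`.

A real `E` is an eigenvalue if and only if the Prüfer angle `θ E` of the solution satisfying the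
condition at `a` has `θ E b ≡ φβ` modulo `π`. The function `E ↦ θ E b` is nonnegative, continuous
and strictly increasing, so the eigenvalues form an increasing sequence with `θ (E n) b ~ n π`.
For `E = w²`, a modified Prüfer angle whose radial scaling approximates `w √(R / P)` by the
exponential of a polynomial gives `θ (w²) b / w → ∫ √(P R)`.
-/

/-! ### Absolutely continuous functions on an interval -/

theorem absolutelyContinuousOnInterval_congr {X : Type*} [PseudoMetricSpace X] {f g : ℝ → X}
    {a b : ℝ} (hf : AbsolutelyContinuousOnInterval f a b) (hfg : EqOn g f (uIcc a b)) :
    AbsolutelyContinuousOnInterval g a b := by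
  rw [absolutelyContinuousOnInterval_iff] at hf ⊢
  intro ε hε
  obtain ⟨δ, hδ, H⟩ := hf ε hε
  refine ⟨δ, hδ, fun I hI hs => (Finset.sum_congr rfl fun i hi => ?_).trans_lt (H I hI hs)⟩
  rw [hfg (hI.1 i hi).1, hfg (hI.1 i hi).2]

theorem absolutelyContinuousOnInterval_prodMk {X Y : Type*} [PseudoMetricSpace X]
    [PseudoMetricSpace Y] {f : ℝ → X} {g : ℝ → Y} {a b : ℝ}
    (hf : AbsolutelyContinuousOnInterval f a b) (hg : AbsolutelyContinuousOnInterval g a b) :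
    AbsolutelyContinuousOnInterval (fun x => (f x, g x)) a b := by
  refine squeeze_zero (fun I => Finset.sum_nonneg fun i _ => dist_nonneg) (fun I => ?_)
    (by simpa using Tendsto.add hf hg)
  rw [← Finset.sum_add_distrib]
  refine Finset.sum_le_sum fun i _ => ?_
  rw [Prod.dist_eq]
  exact max_le (le_add_of_nonneg_right dist_nonneg) (le_add_of_nonneg_left dist_nonneg)

theorem absolutelyContinuousOnInterval_comp_of_lipschitzOnWith {X Y : Type*}
    [PseudoMetricSpace X] [PseudoMetricSpace Y] {f : ℝ → X} {F : X → Y} {K : ℝ≥0} {s : Set X}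
    {a b : ℝ} (hf : AbsolutelyContinuousOnInterval f a b) (hF : LipschitzOnWith K F s)
    (hs : MapsTo f (uIcc a b) s) : AbsolutelyContinuousOnInterval (F ∘ f) a b := by
  refine squeeze_zero' (Eventually.of_forall fun I => Finset.sum_nonneg fun i _ => dist_nonneg)
    ?_ (by simpa using Tendsto.const_mul (K : ℝ) hf)
  filter_upwards [mem_inf_of_right (mem_principal_self _)] with I hI
  rw [Finset.mul_sum]
  exact Finset.sum_le_sum fun i hi =>
    hF.dist_le_mul _ (hs (hI.1 i hi).1) _ (hs (hI.1 i hi).2)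

theorem absolutelyContinuousOnInterval_comp₂ {f g : ℝ → ℝ} {a b : ℝ} {F : ℝ × ℝ → ℝ}
    (hf : AbsolutelyContinuousOnInterval f a b) (hg : AbsolutelyContinuousOnInterval g a b)
    (hF : ContDiff ℝ 1 F) : AbsolutelyContinuousOnInterval (fun x => F (f x, g x)) a b := by
  obtain ⟨A, hA⟩ := hf.exists_bound
  obtain ⟨B, hB⟩ := hg.exists_bound
  obtain ⟨K, hK⟩ := (hF.contDiffOn (s := Icc (-A) A ×ˢ Icc (-B) B)).exists_lipschitzOnWith
    (by decide) ((convex_Icc _ _).prod (convex_Icc _ _)) (isCompact_Icc.prod isCompact_Icc)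
  exact absolutelyContinuousOnInterval_comp_of_lipschitzOnWith
    (absolutelyContinuousOnInterval_prodMk hf hg) hK
    fun x hx => ⟨abs_le.1 (hA x hx), abs_le.1 (hB x hx)⟩

/-- `f` is absolutely continuous on the interval `[a, b]` with almost everywhere derivative `f'`,
encoded by the fundamental theorem of calculus; the order `a ≤ b` is part of the notion. -/
structure HasACDerivOn (f f' : ℝ → ℝ) (a b : ℝ) : Prop where
  le : a ≤ b
  intervalIntegrable : IntervalIntegrable f' volume a b
  eq_add_integral : ∀ x ∈ Icc a b, f x = f a + ∫ t in a..x, f' t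

namespace HasACDerivOn

variable {f f' g g' : ℝ → ℝ} {a b : ℝ}

theorem of_intervalIntegrable (hab : a ≤ b) (hg : IntervalIntegrable g volume a b) (c : ℝ) :
    HasACDerivOn (fun x => c + ∫ t in a..x, g t) g a b :=
  ⟨hab, hg, fun x _ => by simp⟩

theorem absolutelyContinuousOnInterval (hf : HasACDerivOn f f' a b) :
    AbsolutelyContinuousOnInterval f a b := by
  have hI := hf.intervalIntegrable.absolutelyContinuousOnInterval_intervalIntegral
    (c := a) left_mem_uIcc
  refine absolutelyContinuousOnInterval_congr
    (absolutelyContinuousOnInterval_comp₂ (F := fun z => f a + z.1) hI hI (by fun_prop)) ?_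
  rw [uIcc_of_le hf.le]
  exact hf.eq_add_integral

theorem continuousOn (hf : HasACDerivOn f f' a b) : ContinuousOn f (uIcc a b) :=
  hf.absolutelyContinuousOnInterval.continuousOn

theorem ae_hasDerivAt (hf : HasACDerivOn f f' a b) :
    ∀ᵐ x ∂volume.restrict (Icc a b), HasDerivAt f (f' x) x := by
  rw [← Measure.restrict_congr_set Ioo_ae_eq_Icc, ae_restrict_iff' measurableSet_Ioo]
  filter_upwards [hf.intervalIntegrable.ae_hasDerivAt_integral] with x hx hxI
  rw [uIcc_of_le hf.le] at hx
  refine ((hx (Ioo_subset_Icc_self hxI) a (left_mem_Icc.2 hf.le)).const_add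
    (f a)).congr_of_eventuallyEq ?_
  filter_upwards [Icc_mem_nhds hxI.1 hxI.2] with y hy using hf.eq_add_integral y hy

theorem of_ae_hasDerivAt (hab : a ≤ b) (hf : AbsolutelyContinuousOnInterval f a b)
    (hf' : ∀ᵐ x ∂volume.restrict (Icc a b), HasDerivAt f (f' x) x) : HasACDerivOn f f' a b := by
  have hderiv : deriv f =ᵐ[volume.restrict (Icc a b)] f' := hf'.mono fun x hx => hx.deriv
  refine ⟨hab, hf.intervalIntegrable_deriv.congr_ae ?_, fun x hx => ?_⟩
  · rw [uIoc_of_le hab]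
    exact ae_restrict_of_ae_restrict_of_subset Ioc_subset_Icc_self hderiv
  · have hsub : uIcc a x ⊆ uIcc a b := uIcc_subset_uIcc_left (Icc_subset_uIcc hx)
    have hcongr : ∫ t in a..x, deriv f t = ∫ t in a..x, f' t := by
      refine intervalIntegral.integral_congr_ae_restrict
        (ae_restrict_of_ae_restrict_of_subset ?_ hderiv)
      rw [uIoc_of_le hx.1]
      exact Ioc_subset_Icc_self.trans (Icc_subset_Icc_right hx.2)
    rw [← hcongr, (hf.mono hsub).integral_deriv_eq_sub]
    ring

theorem comp₂ (hf : HasACDerivOn f f' a b) (hg : HasACDerivOn g g' a b) {F : ℝ × ℝ → ℝ}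
    {k : ℝ → ℝ} (hF : ContDiff ℝ 1 F)
    (hk : ∀ x, HasDerivAt f (f' x) x → HasDerivAt g (g' x) x →
      HasDerivAt (fun x => F (f x, g x)) (k x) x) :
    HasACDerivOn (fun x => F (f x, g x)) k a b := by
  refine of_ae_hasDerivAt hf.le (absolutelyContinuousOnInterval_comp₂
    hf.absolutelyContinuousOnInterval hg.absolutelyContinuousOnInterval hF) ?_
  filter_upwards [hf.ae_hasDerivAt, hg.ae_hasDerivAt] with x hfx hgx using hk x hfx hgx

theorem sub (hf : HasACDerivOn f f' a b) (hg : HasACDerivOn g g' a b) :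
    HasACDerivOn (fun x => f x - g x) (fun x => f' x - g' x) a b :=
  hf.comp₂ hg (F := fun z => z.1 - z.2) (by fun_prop) fun _ hfx hgx => hfx.sub hgx

theorem mul (hf : HasACDerivOn f f' a b) (hg : HasACDerivOn g g' a b) :
    HasACDerivOn (fun x => f x * g x) (fun x => f' x * g x + f x * g' x) a b :=
  hf.comp₂ hg (F := fun z => z.1 * z.2) (by fun_prop) fun _ hfx hgx => hfx.mul hgx

theorem exp_const_mul (hf : HasACDerivOn f f' a b) (c : ℝ) :
    HasACDerivOn (fun x => Real.exp (c * f x)) (fun x => Real.exp (c * f x) * (c * f' x)) a b :=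
  hf.comp₂ hf (F := fun z => Real.exp (c * z.1)) (by fun_prop)
    fun _ hfx _ => (hfx.const_mul c).exp

theorem integral_eq_sub (hf : HasACDerivOn f f' a b) : ∫ t in a..b, f' t = f b - f a := by
  rw [hf.eq_add_integral b (right_mem_Icc.2 hf.le), add_sub_cancel_left]

theorem mono_right {c : ℝ} (hf : HasACDerivOn f f' a b) (hc : c ∈ Icc a b) :
    HasACDerivOn f f' a c :=
  ⟨hc.1, hf.intervalIntegrable.mono_set (uIcc_subset_uIcc_left (Icc_subset_uIcc hc)),
    fun x hx => hf.eq_add_integral x ⟨hx.1, hx.2.trans hc.2⟩⟩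

theorem eq_of_eqOn_zero {s t : ℝ} (hf : HasACDerivOn f f' a b) (hs : s ∈ Icc a b)
    (ht : t ∈ Icc a b) (hst : s ≤ t) (h0 : EqOn f' 0 (Ioo s t)) : f t = f s := by
  have hint : ∀ {x}, x ∈ Icc a b → IntervalIntegrable f' volume a x := fun hx =>
    (hf.mono_right hx).intervalIntegrable
  have hzero : ∫ x in s..t, f' x = 0 := by
    rw [intervalIntegral.integral_of_le hst, integral_Ioc_eq_integral_Ioo,
      setIntegral_congr_fun measurableSet_Ioo h0]
    exact integral_zero ..
  rw [← intervalIntegral.integral_interval_sub_left (hint ht) (hint hs), sub_eq_zero] at hzero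
  rw [hf.eq_add_integral t ht, hzero, ← hf.eq_add_integral s hs]

theorem congr_ae (hf : HasACDerivOn f f' a b) (h : f' =ᵐ[volume.restrict (Icc a b)] g') :
    HasACDerivOn f g' a b :=
  of_ae_hasDerivAt hf.le hf.absolutelyContinuousOnInterval <| by
    filter_upwards [hf.ae_hasDerivAt, h] with x hx hxg using hxg ▸ hx

end HasACDerivOn

/-! ### Linear equations and Grönwall bounds -/

section Linear

variable {A g y : ℝ → ℝ} {a b : ℝ}

theorem hasACDerivOn_linear_intervalIntegrable (hA : IntervalIntegrable A volume a b)
    (hy : HasACDerivOn y (fun s => A s * y s + g s) a b) : IntervalIntegrable g volume a b := by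
  simpa using hy.intervalIntegrable.sub (hA.mul_continuousOn hy.continuousOn)

theorem variation_of_constants (hA : IntervalIntegrable A volume a b)
    (hy : HasACDerivOn y (fun s => A s * y s + g s) a b) :
    IntervalIntegrable (fun t => Real.exp (∫ s in t..b, A s) * g t) volume a b ∧
      y b = Real.exp (∫ s in a..b, A s) * y a + ∫ t in a..b, Real.exp (∫ s in t..b, A s) * g t := by
  have hJ : HasACDerivOn (fun x => (∫ s in b..a, A s) + ∫ s in a..x, A s) A a b :=
    .of_intervalIntegrable hy.le hA _
  have hz := ((hJ.exp_const_mul (-1)).mul hy).congr_ae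
    (g' := fun t => Real.exp (∫ s in t..b, A s) * g t) <| by
      filter_upwards [ae_restrict_mem measurableSet_Icc] with t ht
      have hat : IntervalIntegrable A volume a t :=
        hA.mono_set (uIcc_subset_uIcc_left (Icc_subset_uIcc ht))
      rw [intervalIntegral.integral_add_adjacent_intervals hA.symm hat,
        intervalIntegral.integral_symm b t]
      ring_nf
  refine ⟨hz.intervalIntegrable, ?_⟩
  have hb := hz.integral_eq_sub
  simp only [intervalIntegral.integral_same, intervalIntegral.integral_symm a b, add_zero,
    neg_mul, neg_neg, neg_add_cancel, one_mul, neg_zero, Real.exp_zero] at hb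
  linarith

theorem abs_integral_le_integral_abs_of_mem_Icc (hA : IntervalIntegrable A volume a b)
    {t : ℝ} (ht : t ∈ Icc a b) :
    |∫ s in t..b, A s| ≤ ∫ s in a..b, |A s| :=
  (intervalIntegral.abs_integral_le_integral_abs ht.2).trans <|
    intervalIntegral.integral_mono_interval ht.1 ht.2 le_rfl
      (Eventually.of_forall fun _ => abs_nonneg _) hA.abs

theorem exp_neg_mul_le_of_hasACDerivOn_linear (hA : IntervalIntegrable A volume a b)
    (hy : HasACDerivOn y (fun s => A s * y s + g s) a b)
    (hg : 0 ≤ᵐ[volume.restrict (Icc a b)] g) (hya : 0 ≤ y a) :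
    Real.exp (-∫ t in a..b, |A t|) * (y a + ∫ t in a..b, g t) ≤ y b := by
  obtain ⟨hint, hyb⟩ := variation_of_constants hA hy
  rw [hyb, mul_add, ← intervalIntegral.integral_const_mul]
  have hexp : ∀ t ∈ Icc a b, Real.exp (-∫ s in a..b, |A s|) ≤ Real.exp (∫ s in t..b, A s) :=
    fun t ht => Real.exp_le_exp.2
      (abs_le.1 (abs_integral_le_integral_abs_of_mem_Icc hA ht)).1
  refine add_le_add (mul_le_mul_of_nonneg_right (hexp a (left_mem_Icc.2 hy.le)) hya)
    (intervalIntegral.integral_mono_ae_restrict hy.le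
      ((hasACDerivOn_linear_intervalIntegrable hA hy).const_mul _) hint ?_)
  filter_upwards [hg, ae_restrict_mem measurableSet_Icc] with t hgt ht
    using mul_le_mul_of_nonneg_right (hexp t ht) hgt

theorem le_exp_mul_of_hasACDerivOn_linear (hA : IntervalIntegrable A volume a b)
    (hy : HasACDerivOn y (fun s => A s * y s + g s) a b)
    (hg : 0 ≤ᵐ[volume.restrict (Icc a b)] g) (hya : 0 ≤ y a) :
    y b ≤ Real.exp (∫ t in a..b, |A t|) * (y a + ∫ t in a..b, g t) := by
  obtain ⟨hint, hyb⟩ := variation_of_constants hA hy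
  rw [hyb, mul_add, ← intervalIntegral.integral_const_mul]
  have hexp : ∀ t ∈ Icc a b, Real.exp (∫ s in t..b, A s) ≤ Real.exp (∫ s in a..b, |A s|) :=
    fun t ht => Real.exp_le_exp.2
      (abs_le.1 (abs_integral_le_integral_abs_of_mem_Icc hA ht)).2
  refine add_le_add (mul_le_mul_of_nonneg_right (hexp a (left_mem_Icc.2 hy.le)) hya)
    (intervalIntegral.integral_mono_ae_restrict hy.le hint
      ((hasACDerivOn_linear_intervalIntegrable hA hy).const_mul _) ?_)
  filter_upwards [hg, ae_restrict_mem measurableSet_Icc] with t hgt ht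
    using mul_le_mul_of_nonneg_right (hexp t ht) hgt

end Linear

/-! ### Carathéodory equations with an integrable Lipschitz constant -/

section Caratheodory

variable {f : ℝ → ℝ → ℝ} {k : ℝ → ℝ} {a b : ℝ}

/-- The path on `[a, b]` whose quotient by the Bielecki weight `exp (2 ∫ k)` is `y`. In terms of
`y`, the Picard map of an equation with Lipschitz constant `k` contracts by the factor `1 / 2` on
the whole interval. -/
noncomputable def bieleckiPath (hab : a ≤ b) (k : ℝ → ℝ) (y : C(Icc a b, ℝ)) (t : ℝ) : ℝ :=
  Real.exp (2 * ∫ s in a..t, k s) * IccExtend hab y t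

theorem hasACDerivOn_exp_two_mul_integral (hab : a ≤ b) (hk : IntervalIntegrable k volume a b) :
    HasACDerivOn (fun x => Real.exp (2 * ∫ s in a..x, k s))
      (fun x => Real.exp (2 * ∫ s in a..x, k s) * (2 * k x)) a b := by
  simpa only [zero_add] using (HasACDerivOn.of_intervalIntegrable hab hk 0).exp_const_mul 2

theorem continuousOn_bieleckiPath (hab : a ≤ b) (hk : IntervalIntegrable k volume a b)
    (y : C(Icc a b, ℝ)) : ContinuousOn (bieleckiPath hab k y) (uIcc a b) :=
  (hasACDerivOn_exp_two_mul_integral hab hk).continuousOn.mul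
    (y.continuous.Icc_extend' (h := hab)).continuousOn

/-- The Picard map of `θ' = f s θ`, `θ a = θ₀`, acting on paths divided by the Bielecki weight. -/
noncomputable def bieleckiPicard (hab : a ≤ b) (hk : IntervalIntegrable k volume a b)
    (hf : ∀ θ : ℝ → ℝ, ContinuousOn θ (uIcc a b) →
      IntervalIntegrable (fun s => f s (θ s)) volume a b) (θ₀ : ℝ) (y : C(Icc a b, ℝ)) :
    C(Icc a b, ℝ) where
  toFun s := (Real.exp (2 * ∫ t in a..(s : ℝ), k t))⁻¹ *
    (θ₀ + ∫ t in a..(s : ℝ), f t (bieleckiPath hab k y t))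
  continuous_toFun := by
    have hweight := (hasACDerivOn_exp_two_mul_integral hab hk).continuousOn.inv₀
      fun _ _ => (Real.exp_pos _).ne'
    have hpicard := (HasACDerivOn.of_intervalIntegrable hab
      (hf _ (continuousOn_bieleckiPath hab hk y)) θ₀).continuousOn
    rw [uIcc_of_le hab] at hweight hpicard
    exact (hweight.mul hpicard).domRestrict

theorem bieleckiPicard_apply (hab : a ≤ b) (hk : IntervalIntegrable k volume a b)
    (hf : ∀ θ : ℝ → ℝ, ContinuousOn θ (uIcc a b) →
      IntervalIntegrable (fun s => f s (θ s)) volume a b) (θ₀ : ℝ) (y : C(Icc a b, ℝ))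
    (s : Icc a b) : bieleckiPicard hab hk hf θ₀ y s =
      (Real.exp (2 * ∫ t in a..(s : ℝ), k t))⁻¹ *
        (θ₀ + ∫ t in a..(s : ℝ), f t (bieleckiPath hab k y t)) :=
  rfl

theorem abs_sub_bieleckiPath_le (hab : a ≤ b) (hlip : ∀ s x y, |f s x - f s y| ≤ k s * |x - y|)
    (y z : C(Icc a b, ℝ)) (t : ℝ) :
    |f t (bieleckiPath hab k y t) - f t (bieleckiPath hab k z t)| ≤
      Real.exp (2 * ∫ s in a..t, k s) * (2 * k t) * (dist y z / 2) := by
  have hk0 : 0 ≤ k t := by simpa using (abs_nonneg _).trans (hlip t 1 0)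
  have hyz : |IccExtend hab y t - IccExtend hab z t| ≤ dist y z := by
    rw [← Real.dist_eq]
    exact ContinuousMap.dist_apply_le_dist _
  calc |f t (bieleckiPath hab k y t) - f t (bieleckiPath hab k z t)|
      ≤ k t * |bieleckiPath hab k y t - bieleckiPath hab k z t| := hlip _ _ _
    _ = k t * (Real.exp (2 * ∫ s in a..t, k s) * |IccExtend hab y t - IccExtend hab z t|) := by
        rw [bieleckiPath, bieleckiPath, ← mul_sub, abs_mul, Real.abs_exp]
    _ ≤ k t * (Real.exp (2 * ∫ s in a..t, k s) * dist y z) := by gcongr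
    _ = _ := by ring

theorem contractingWith_bieleckiPicard (hab : a ≤ b) (hk : IntervalIntegrable k volume a b)
    (hlip : ∀ s x y, |f s x - f s y| ≤ k s * |x - y|)
    (hf : ∀ θ : ℝ → ℝ, ContinuousOn θ (uIcc a b) →
      IntervalIntegrable (fun s => f s (θ s)) volume a b) (θ₀ : ℝ) :
    ContractingWith (1 / 2) (bieleckiPicard hab hk hf θ₀) := by
  refine ⟨by norm_num [← NNReal.coe_lt_coe], LipschitzWith.of_dist_le_mul fun y z => ?_⟩
  rw [ContinuousMap.dist_le (by positivity)]
  rintro ⟨s, hs⟩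
  have hint (y : C(Icc a b, ℝ)) :
      IntervalIntegrable (fun t => f t (bieleckiPath hab k y t)) volume a s :=
    (hf _ (continuousOn_bieleckiPath hab hk y)).mono_set
      (uIcc_subset_uIcc_left (Icc_subset_uIcc hs))
  have hweight := (hasACDerivOn_exp_two_mul_integral hab hk).mono_right hs
  set e := Real.exp (2 * ∫ t in a..s, k t) with he
  have hdiff : |(∫ t in a..s, f t (bieleckiPath hab k y t)) -
      ∫ t in a..s, f t (bieleckiPath hab k z t)| ≤ (e - 1) * (dist y z / 2) := by
    rw [← intervalIntegral.integral_sub (hint y) (hint z)]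
    refine (intervalIntegral.abs_integral_le_integral_abs hs.1).trans <|
      (intervalIntegral.integral_mono_on hs.1 ((hint y).sub (hint z)).abs
        (hweight.intervalIntegrable.mul_const _)
        fun t _ => abs_sub_bieleckiPath_le hab hlip y z t).trans_eq ?_
    rw [intervalIntegral.integral_mul_const, hweight.integral_eq_sub]
    simp [he]
  calc dist (bieleckiPicard hab hk hf θ₀ y ⟨s, hs⟩) (bieleckiPicard hab hk hf θ₀ z ⟨s, hs⟩)
      = e⁻¹ * |(∫ t in a..s, f t (bieleckiPath hab k y t)) -
          ∫ t in a..s, f t (bieleckiPath hab k z t)| := by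
        rw [bieleckiPicard_apply, bieleckiPicard_apply, Real.dist_eq, ← mul_sub,
          add_sub_add_left_eq_sub, abs_mul, abs_inv, Real.abs_exp]
    _ ≤ e⁻¹ * (e * (dist y z / 2)) := by
        refine mul_le_mul_of_nonneg_left (hdiff.trans ?_) (by positivity)
        exact mul_le_mul_of_nonneg_right (by linarith) (by positivity)
    _ = ((1 / 2 : ℝ≥0) : ℝ) * dist y z := by
        rw [inv_mul_cancel_left₀ (Real.exp_pos _).ne']
        push_cast
        ring

theorem exists_hasACDerivOn_of_lipschitz (hab : a ≤ b) (hk : IntervalIntegrable k volume a b)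
    (hlip : ∀ s x y, |f s x - f s y| ≤ k s * |x - y|)
    (hf : ∀ θ : ℝ → ℝ, ContinuousOn θ (uIcc a b) →
      IntervalIntegrable (fun s => f s (θ s)) volume a b) (θ₀ : ℝ) :
    ∃ θ : ℝ → ℝ, θ a = θ₀ ∧ HasACDerivOn θ (fun s => f s (θ s)) a b := by
  have hcontr := contractingWith_bieleckiPicard hab hk hlip hf θ₀
  have : Nonempty C(Icc a b, ℝ) := ⟨0⟩
  obtain ⟨y, hy⟩ : ∃ y, bieleckiPicard hab hk hf θ₀ y = y := ⟨_, hcontr.fixedPoint_isFixedPt⟩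
  have hθ : ∀ s ∈ Icc a b, bieleckiPath hab k y s =
      θ₀ + ∫ t in a..s, f t (bieleckiPath hab k y t) := by
    intro s hs
    conv_lhs => rw [bieleckiPath, IccExtend_of_mem hab _ hs, ← hy]
    exact mul_inv_cancel_left₀ (Real.exp_pos _).ne' _
  have hθa : bieleckiPath hab k y a = θ₀ := by simpa using hθ a (left_mem_Icc.2 hab)
  exact ⟨_, hθa, hab, hf _ (continuousOn_bieleckiPath hab hk y), fun s hs => by
    rw [hθa]; exact hθ s hs⟩

end Caratheodory

/-! ### Prüfer's equation -/

/-- The right-hand side of Prüfer's equation `θ' = P cos² θ + W sin² θ` for the angle of a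
solution `(y, y₁) = ρ (sin θ, cos θ)` of the system `y' = P y₁`, `y₁' = -W y`. -/
noncomputable def pruferField (P W : ℝ → ℝ) (s x : ℝ) : ℝ :=
  P s * Real.cos x ^ 2 + W s * Real.sin x ^ 2

theorem sin_sq_sub_sin_sq (x y : ℝ) :
    Real.sin x ^ 2 - Real.sin y ^ 2 = Real.sin (x + y) * Real.sin (x - y) := by
  rw [Real.sin_add, Real.sin_sub]
  linear_combination Real.sin y ^ 2 * Real.sin_sq_add_cos_sq x -
    Real.sin x ^ 2 * Real.sin_sq_add_cos_sq y

theorem sinc_mul_self (x : ℝ) : Real.sinc x * x = Real.sin x := by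
  rcases eq_or_ne x 0 with rfl | hx
  · simp
  · rw [Real.sinc_of_ne_zero hx, div_mul_cancel₀ _ hx]

theorem pruferField_sub_pruferField (P W : ℝ → ℝ) (s x y : ℝ) :
    pruferField P W s x - pruferField P W s y =
      (W s - P s) * (Real.sin (x + y) * Real.sinc (x - y)) * (x - y) := by
  rw [mul_assoc, mul_assoc, sinc_mul_self, ← sin_sq_sub_sin_sq, pruferField, pruferField,
    Real.cos_sq', Real.cos_sq']
  ring

theorem abs_sin_mul_sinc_le_one (x y : ℝ) : |Real.sin x * Real.sinc y| ≤ 1 := by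
  rw [abs_mul]
  exact mul_le_one₀ (Real.abs_sin_le_one _) (abs_nonneg _) (Real.abs_sinc_le_one _)

theorem abs_pruferField_sub_le (P W : ℝ → ℝ) (s x y : ℝ) :
    |pruferField P W s x - pruferField P W s y| ≤ (|P s| + |W s|) * |x - y| := by
  rw [pruferField_sub_pruferField, abs_mul, abs_mul]
  refine mul_le_mul_of_nonneg_right ?_ (abs_nonneg _)
  refine (mul_le_of_le_one_right (abs_nonneg _) (abs_sin_mul_sinc_le_one _ _)).trans ?_
  linarith [abs_sub (W s) (P s)]

section Prufer

variable {P W W₁ W₂ θ θ₁ θ₂ : ℝ → ℝ} {a b : ℝ}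

theorem intervalIntegrable_pruferField (hP : IntervalIntegrable P volume a b)
    (hW : IntervalIntegrable W volume a b) (hθ : ContinuousOn θ (uIcc a b)) :
    IntervalIntegrable (fun s => pruferField P W s (θ s)) volume a b :=
  (hP.mul_continuousOn ((Real.continuous_cos.comp_continuousOn hθ).pow 2)).add
    (hW.mul_continuousOn ((Real.continuous_sin.comp_continuousOn hθ).pow 2))

theorem exists_hasACDerivOn_pruferField (hab : a ≤ b) (hP : IntervalIntegrable P volume a b)
    (hW : IntervalIntegrable W volume a b) (θ₀ : ℝ) :
    ∃ θ : ℝ → ℝ, θ a = θ₀ ∧ HasACDerivOn θ (fun s => pruferField P W s (θ s)) a b :=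
  exists_hasACDerivOn_of_lipschitz hab (hP.abs.add hW.abs) (abs_pruferField_sub_le P W)
    (fun _ => intervalIntegrable_pruferField hP hW) θ₀

theorem pruferAngle_nonneg (hW : IntervalIntegrable W volume a b)
    (hP0 : 0 ≤ᵐ[volume.restrict (Icc a b)] P)
    (hθ : HasACDerivOn θ (fun s => pruferField P W s (θ s)) a b) (hθa : 0 ≤ θ a) : 0 ≤ θ b := by
  have hA : IntervalIntegrable (fun s => W s * (Real.sin (θ s) * Real.sinc (θ s))) volume a b :=
    hW.mul_continuousOn
      ((Real.continuous_sin.comp_continuousOn hθ.continuousOn).mul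
        (Real.continuous_sinc.comp_continuousOn hθ.continuousOn))
  have hlin : HasACDerivOn θ (fun s => W s * (Real.sin (θ s) * Real.sinc (θ s)) * θ s +
      P s * Real.cos (θ s) ^ 2) a b := by
    convert! hθ using 2 with s
    rw [mul_assoc, mul_assoc, sinc_mul_self, pruferField]
    ring
  have hg : 0 ≤ᵐ[volume.restrict (Icc a b)] fun s => P s * Real.cos (θ s) ^ 2 :=
    hP0.mono fun s hs => mul_nonneg hs (sq_nonneg _)
  refine le_trans ?_ (exp_neg_mul_le_of_hasACDerivOn_linear hA hlin hg hθa)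
  have := intervalIntegral.integral_nonneg_of_ae_restrict hθ.le hg
  positivity

theorem hasACDerivOn_pruferAngle_sub
    (hθ₁ : HasACDerivOn θ₁ (fun s => pruferField P W₁ s (θ₁ s)) a b)
    (hθ₂ : HasACDerivOn θ₂ (fun s => pruferField P W₂ s (θ₂ s)) a b) :
    HasACDerivOn (fun s => θ₂ s - θ₁ s)
      (fun s => (W₂ s - P s) * (Real.sin (θ₂ s + θ₁ s) * Real.sinc (θ₂ s - θ₁ s)) *
        (θ₂ s - θ₁ s) + (W₂ s - W₁ s) * Real.sin (θ₁ s) ^ 2) a b := by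
  convert! hθ₂.sub hθ₁ using 2 with s
  rw [← pruferField_sub_pruferField]
  simp only [pruferField]
  ring

theorem intervalIntegrable_pruferAngle_sub_coeff (hP : IntervalIntegrable P volume a b)
    (hW₂ : IntervalIntegrable W₂ volume a b) (hθ₁ : ContinuousOn θ₁ (uIcc a b))
    (hθ₂ : ContinuousOn θ₂ (uIcc a b)) :
    IntervalIntegrable (fun s => (W₂ s - P s) *
      (Real.sin (θ₂ s + θ₁ s) * Real.sinc (θ₂ s - θ₁ s))) volume a b :=
  (hW₂.sub hP).mul_continuousOn
    ((Real.continuous_sin.comp_continuousOn (hθ₂.add hθ₁)).mul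
      (Real.continuous_sinc.comp_continuousOn (hθ₂.sub hθ₁)))

theorem integral_abs_pruferAngle_sub_coeff_le (hab : a ≤ b) (hP : IntervalIntegrable P volume a b)
    (hW₂ : IntervalIntegrable W₂ volume a b) (hθ₁ : ContinuousOn θ₁ (uIcc a b))
    (hθ₂ : ContinuousOn θ₂ (uIcc a b)) :
    ∫ s in a..b, |(W₂ s - P s) * (Real.sin (θ₂ s + θ₁ s) * Real.sinc (θ₂ s - θ₁ s))| ≤
      (∫ s in a..b, |P s|) + ∫ s in a..b, |W₂ s| := by
  rw [← intervalIntegral.integral_add hP.abs hW₂.abs]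
  refine intervalIntegral.integral_mono hab
    (intervalIntegrable_pruferAngle_sub_coeff hP hW₂ hθ₁ hθ₂).abs (hP.abs.add hW₂.abs) fun s => ?_
  simp only [abs_mul (W₂ s - P s)]
  refine (mul_le_of_le_one_right (abs_nonneg _) (abs_sin_mul_sinc_le_one _ _)).trans ?_
  linarith [abs_sub (W₂ s) (P s)]

theorem exp_neg_mul_integral_le_pruferAngle_sub (hP : IntervalIntegrable P volume a b)
    (hW₂ : IntervalIntegrable W₂ volume a b) (hW : W₁ ≤ᵐ[volume.restrict (Icc a b)] W₂)
    (hθ₁ : HasACDerivOn θ₁ (fun s => pruferField P W₁ s (θ₁ s)) a b)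
    (hθ₂ : HasACDerivOn θ₂ (fun s => pruferField P W₂ s (θ₂ s)) a b) (hθa : θ₁ a = θ₂ a) :
    Real.exp (-((∫ s in a..b, |P s|) + ∫ s in a..b, |W₂ s|)) *
      ∫ s in a..b, (W₂ s - W₁ s) * Real.sin (θ₁ s) ^ 2 ≤ θ₂ b - θ₁ b := by
  have hg : 0 ≤ᵐ[volume.restrict (Icc a b)] fun s => (W₂ s - W₁ s) * Real.sin (θ₁ s) ^ 2 :=
    hW.mono fun s hs => mul_nonneg (sub_nonneg.2 hs) (sq_nonneg _)
  have hbound := exp_neg_mul_le_of_hasACDerivOn_linear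
    (intervalIntegrable_pruferAngle_sub_coeff hP hW₂ hθ₁.continuousOn hθ₂.continuousOn)
    (hasACDerivOn_pruferAngle_sub hθ₁ hθ₂) hg (sub_nonneg.2 hθa.le)
  rw [hθa, sub_self, zero_add] at hbound
  refine (mul_le_mul_of_nonneg_right (Real.exp_le_exp.2 (neg_le_neg ?_))
    (intervalIntegral.integral_nonneg_of_ae_restrict hθ₁.le hg)).trans hbound
  exact integral_abs_pruferAngle_sub_coeff_le hθ₁.le hP hW₂ hθ₁.continuousOn hθ₂.continuousOn

theorem pruferAngle_sub_le_exp_mul_integral (hP : IntervalIntegrable P volume a b)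
    (hW₁ : IntervalIntegrable W₁ volume a b) (hW₂ : IntervalIntegrable W₂ volume a b)
    (hW : W₁ ≤ᵐ[volume.restrict (Icc a b)] W₂)
    (hθ₁ : HasACDerivOn θ₁ (fun s => pruferField P W₁ s (θ₁ s)) a b)
    (hθ₂ : HasACDerivOn θ₂ (fun s => pruferField P W₂ s (θ₂ s)) a b) (hθa : θ₁ a = θ₂ a) :
    θ₂ b - θ₁ b ≤ Real.exp ((∫ s in a..b, |P s|) + ∫ s in a..b, |W₂ s|) *
      ∫ s in a..b, (W₂ s - W₁ s) := by
  have hg : 0 ≤ᵐ[volume.restrict (Icc a b)] fun s => (W₂ s - W₁ s) * Real.sin (θ₁ s) ^ 2 :=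
    hW.mono fun s hs => mul_nonneg (sub_nonneg.2 hs) (sq_nonneg _)
  have hbound := le_exp_mul_of_hasACDerivOn_linear
    (intervalIntegrable_pruferAngle_sub_coeff hP hW₂ hθ₁.continuousOn hθ₂.continuousOn)
    (hasACDerivOn_pruferAngle_sub hθ₁ hθ₂) hg (sub_nonneg.2 hθa.le)
  rw [hθa, sub_self, zero_add] at hbound
  refine hbound.trans (mul_le_mul (Real.exp_le_exp.2 ?_) ?_
    (intervalIntegral.integral_nonneg_of_ae_restrict hθ₁.le hg) (Real.exp_pos _).le)
  · exact integral_abs_pruferAngle_sub_coeff_le hθ₁.le hP hW₂ hθ₁.continuousOn hθ₂.continuousOn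
  · refine intervalIntegral.integral_mono_ae_restrict hθ₁.le
      ((hW₂.sub hW₁).mul_continuousOn
        ((Real.continuous_sin.comp_continuousOn hθ₁.continuousOn).pow 2)) (hW₂.sub hW₁) ?_
    exact hW.mono fun s hs =>
      mul_le_of_le_one_right (sub_nonneg.2 hs) (Real.sin_sq_le_one _)

end Prufer

/-! ### The Prüfer angle is transversal to `πℤ` -/

theorem countable_setOf_eq_zero_hasDerivAt_ne_zero (g : ℝ → ℝ) :
    {x | g x = 0 ∧ ∃ d ≠ 0, HasDerivAt g d x}.Countable := by
  set I : Set ℝ := {x | g x = 0 ∧ ∃ d ≠ 0, HasDerivAt g d x}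
  refine (countable_setOfPred_isolated_right_within (s := I)).mono fun x hx => ?_
  refine ⟨hx, ?_⟩
  obtain ⟨-, d, hd, hgx⟩ := hx
  rw [← empty_mem_iff_bot]
  have hne : ∀ᶠ y in nhdsWithin x (I ∩ Ioi x), g y ≠ 0 :=
    nhdsWithin_mono _ (fun _ hy => ne_of_gt hy.2) (hgx.eventually_ne (c := 0) hd)
  have hfalse : ∀ᶠ _ in nhdsWithin x (I ∩ Ioi x), False := by
    filter_upwards [hne, self_mem_nhdsWithin] with _ hy hyI using hy hyI.1.1
  exact hfalse

section Prufer

variable {P W θ : ℝ → ℝ} {a b : ℝ}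

theorem ae_sin_ne_zero_of_hasACDerivOn_pruferField
    (hθ : HasACDerivOn θ (fun s => pruferField P W s (θ s)) a b) :
    ∀ᵐ x ∂volume.restrict (Icc a b), P x ≠ 0 → Real.sin (θ x) ≠ 0 := by
  have hcount : ∀ᵐ x : ℝ, ¬(Real.sin (θ x) = 0 ∧
      ∃ d ≠ 0, HasDerivAt (fun y => Real.sin (θ y)) d x) := by
    rw [ae_iff]
    simpa only [not_not] using
      (countable_setOf_eq_zero_hasDerivAt_ne_zero fun y => Real.sin (θ y)).measure_zero volume
  filter_upwards [ae_restrict_of_ae hcount, hθ.ae_hasDerivAt] with x hx hθx hP hsin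
  have hcos : Real.cos (θ x) ≠ 0 := fun h => by
    simpa [hsin, h] using Real.sin_sq_add_cos_sq (θ x)
  refine hx ⟨hsin, _, mul_ne_zero hcos ?_, hθx.sin⟩
  simp [pruferField, hsin, hP, hcos]

theorem integral_mul_sin_sq_pruferAngle_pos {R : ℝ → ℝ} (hR : IntervalIntegrable R volume a b)
    (hR0 : 0 ≤ᵐ[volume.restrict (Icc a b)] R)
    (hPR : ¬(fun x => P x * R x) =ᵐ[volume.restrict (Icc a b)] 0)
    (hθ : HasACDerivOn θ (fun s => pruferField P W s (θ s)) a b) :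
    0 < ∫ t in a..b, R t * Real.sin (θ t) ^ 2 := by
  have hnn : 0 ≤ᵐ[volume.restrict (Icc a b)] fun t => R t * Real.sin (θ t) ^ 2 :=
    hR0.mono fun t ht => mul_nonneg ht (sq_nonneg _)
  refine lt_of_le_of_ne' (intervalIntegral.integral_nonneg_of_ae_restrict hθ.le hnn)
    fun hzero => hPR ?_
  have hae := (intervalIntegral.integral_eq_zero_iff_of_le_of_nonneg_ae hθ.le
    (ae_restrict_of_ae_restrict_of_subset Ioc_subset_Icc_self hnn)
    (hR.mul_continuousOn ((Real.continuous_sin.comp_continuousOn hθ.continuousOn).pow 2))).1 hzero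
  rw [restrict_Ioc_eq_restrict_Icc] at hae
  filter_upwards [hae, ae_sin_ne_zero_of_hasACDerivOn_pruferField hθ] with x hx hsin
  by_contra hne
  obtain ⟨hP, hRx⟩ := mul_ne_zero_iff.1 hne
  exact mul_ne_zero hRx (pow_ne_zero 2 (hsin hP)) hx

end Prufer

/-! ### Polynomial balancing of the coefficients -/

/-- A regularization of `log (y / x) / 2`, bounded for nonnegative `x` and `y`. Without it (`δ = 0`)
the exponent `g` solves `exp g * x = √(x * y) = exp (-g) * y`. -/
noncomputable def halfLogRatio (δ x y : ℝ) : ℝ :=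
  1 / 2 * Real.log ((y + δ * (x + y)) / (x + δ * (x + y)))

theorem neg_halfLogRatio (δ x y : ℝ) : -halfLogRatio δ x y = halfLogRatio δ y x := by
  rw [halfLogRatio, halfLogRatio, ← inv_div (x + δ * (x + y)), Real.log_inv, add_comm y x]
  ring

theorem halfLogRatio_le {δ x y : ℝ} (hδ : 0 < δ) (hx : 0 ≤ x) (hy : 0 ≤ y) :
    halfLogRatio δ x y ≤ Real.log ((1 + δ) / δ) := by
  have hlog : 0 ≤ Real.log ((1 + δ) / δ) := Real.log_nonneg (by rw [le_div_iff₀ hδ]; linarith)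
  rcases (add_nonneg hx hy).eq_or_lt with hxy | hxy
  · obtain ⟨rfl, rfl⟩ := (add_eq_zero_iff_of_nonneg hx hy).1 hxy.symm
    simpa [halfLogRatio] using hlog
  · have hle : Real.log ((y + δ * (x + y)) / (x + δ * (x + y))) ≤ Real.log ((1 + δ) / δ) := by
      apply Real.log_le_log (by positivity)
      rw [div_le_div_iff₀ (by positivity) hδ]
      nlinarith [mul_nonneg hδ.le hx, mul_nonneg hδ.le hy]
    rw [halfLogRatio]
    linarith

theorem abs_halfLogRatio_le {δ x y : ℝ} (hδ : 0 < δ) (hx : 0 ≤ x) (hy : 0 ≤ y) :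
    |halfLogRatio δ x y| ≤ Real.log ((1 + δ) / δ) :=
  abs_le'.2 ⟨halfLogRatio_le hδ hx hy, neg_halfLogRatio δ x y ▸ halfLogRatio_le hδ hy hx⟩

theorem sq_exp_halfLogRatio {δ x y : ℝ} (hδ : 0 < δ) (hx : 0 ≤ x) (hy : 0 ≤ y) (hxy : 0 < x + y) :
    Real.exp (halfLogRatio δ x y) ^ 2 = (y + δ * (x + y)) / (x + δ * (x + y)) := by
  rw [← Real.exp_nat_mul, halfLogRatio, Nat.cast_ofNat, ← mul_assoc, mul_one_div_cancel two_ne_zero,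
    one_mul, Real.exp_log (by positivity)]

theorem abs_sub_le_of_abs_sq_sub_sq_le {x y c : ℝ} (hx : 0 ≤ x) (hy : 0 ≤ y) (hc : 0 ≤ c)
    (h : |x ^ 2 - y ^ 2| ≤ c ^ 2) : |x - y| ≤ c := by
  refine abs_le_of_sq_le_sq (le_trans ?_ h) hc
  rw [sq_sub_sq, abs_mul, abs_of_nonneg (add_nonneg hx hy), ← sq_abs, sq]
  gcongr
  exact abs_le.2 ⟨by linarith, by linarith⟩

theorem abs_exp_halfLogRatio_mul_sub_sqrt_le {δ x y : ℝ} (hδ : 0 < δ) (hx : 0 ≤ x) (hy : 0 ≤ y) :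
    |Real.exp (halfLogRatio δ x y) * x - √(x * y)| ≤ √δ * (x + y) := by
  rcases (add_nonneg hx hy).eq_or_lt with hxy | hxy
  · obtain ⟨rfl, rfl⟩ := (add_eq_zero_iff_of_nonneg hx hy).1 hxy.symm
    simp
  refine abs_sub_le_of_abs_sq_sub_sq_le (by positivity) (by positivity) (by positivity) ?_
  have hden : 0 < x + δ * (x + y) := by positivity
  have hdiff : (y + δ * (x + y)) / (x + δ * (x + y)) * x ^ 2 - x * y =
      δ * (x + y) * (x - y) * (x / (x + δ * (x + y))) := by
    field_simp
    ring
  rw [mul_pow, mul_pow, Real.sq_sqrt hδ.le, Real.sq_sqrt (by positivity),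
    sq_exp_halfLogRatio hδ hx hy hxy, hdiff, abs_mul, abs_mul,
    abs_of_nonneg (show 0 ≤ δ * (x + y) by positivity),
    abs_of_nonneg (show 0 ≤ x / (x + δ * (x + y)) by positivity)]
  have hfrac : x / (x + δ * (x + y)) ≤ 1 := (div_le_one hden).2 (by nlinarith)
  have habs : |x - y| ≤ x + y := abs_le.2 ⟨by linarith, by linarith⟩
  calc δ * (x + y) * |x - y| * (x / (x + δ * (x + y)))
      ≤ δ * (x + y) * (x + y) * 1 := by gcongr
    _ = δ * (x + y) ^ 2 := by ring

theorem abs_exp_sub_exp_le {x y A : ℝ} (hx : x ≤ A) (hy : y ≤ A) :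
    |Real.exp x - Real.exp y| ≤ Real.exp A * |x - y| :=
  Convex.norm_image_sub_le_of_norm_deriv_le (s := Iic A) (fun _ _ => Real.differentiableAt_exp)
    (fun z hz => by simpa using hz) (convex_Iic A) hy hx

theorem abs_exp_mul_sub_sqrt_le {δ x y g B : ℝ} (hδ : 0 < δ) (hx : 0 ≤ x) (hy : 0 ≤ y)
    (hg : g ≤ B) (hB : halfLogRatio δ x y ≤ B) :
    |Real.exp g * x - √(x * y)| ≤
      √δ * (x + y) + Real.exp B * |g - halfLogRatio δ x y| * x := by
  have htri := abs_sub_le (Real.exp g * x) (Real.exp (halfLogRatio δ x y) * x) (√(x * y))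
  rw [← sub_mul, abs_mul, abs_of_nonneg hx] at htri
  linarith [mul_le_mul_of_nonneg_right (abs_exp_sub_exp_le hg hB) hx,
    abs_exp_halfLogRatio_mul_sub_sqrt_le hδ hx hy]

theorem abs_exp_mul_sub_sqrt_add_le {δ x y g B : ℝ} (hδ : 0 < δ) (hx : 0 ≤ x) (hy : 0 ≤ y)
    (hg : |g| ≤ B) (hB : |halfLogRatio δ x y| ≤ B) :
    |Real.exp g * x - √(x * y)| + |Real.exp (-g) * y - √(x * y)| ≤
      2 * √δ * (x + y) + Real.exp B * ((x + y) * |g - halfLogRatio δ x y|) := by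
  have hneg := abs_exp_mul_sub_sqrt_le hδ hy hx (neg_le.1 (neg_le_of_abs_le hg))
    (neg_halfLogRatio δ x y ▸ neg_le.1 (neg_le_of_abs_le hB))
  rw [← neg_halfLogRatio δ x y, neg_sub_neg, abs_sub_comm (halfLogRatio δ x y),
    mul_comm y x] at hneg
  linarith [abs_exp_mul_sub_sqrt_le hδ hx hy (le_of_abs_le hg) (le_of_abs_le hB)]

theorem abs_max_neg_min_sub_le {A x y : ℝ} (hx : |x| ≤ A) : |max (-A) (min A y) - x| ≤ |y - x| := by
  obtain ⟨hlo, hhi⟩ := abs_le.1 hx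
  have hclamp : x = max (-A) (min A x) := by rw [min_eq_right hhi, max_eq_right hlo]
  calc |max (-A) (min A y) - x| = |max (-A) (min A y) - max (-A) (min A x)| := by rw [← hclamp]
    _ ≤ |min A y - min A x| := by simpa using abs_max_sub_max_le_max (-A) (min A y) (-A) (min A x)
    _ ≤ |y - x| := by simpa using abs_min_sub_min_le_max A y A x

theorem exists_boundedContinuous_integral_mul_abs_sub_le {X : Type*} [PseudoMetricSpace X]
    [MeasurableSpace X] [BorelSpace X] {μ : Measure X} {S g : X → ℝ} (hS : Integrable S μ)
    (hS0 : 0 ≤ᵐ[μ] S) (hgm : AEStronglyMeasurable g μ) {A : ℝ} (hgA : ∀ᵐ x ∂μ, |g x| ≤ A)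
    {ε : ℝ} (hε : 0 < ε) :
    ∃ f : BoundedContinuousFunction X ℝ, ∫ x, S x * |f x - g x| ∂μ ≤ ε := by
  set η := μ.withDensity fun x => ENNReal.ofReal (S x)
  have : IsFiniteMeasure η := isFiniteMeasure_withDensity_ofReal hS.2
  have hac : η ≪ μ := withDensity_absolutelyContinuous _ _
  have hgη : Integrable g η := Integrable.of_bound (hgm.mono_ac hac) A (hac.ae_le hgA)
  obtain ⟨f, hf, -⟩ := hgη.exists_boundedContinuous_integral_sub_le hε
  refine ⟨f, le_trans (le_of_eq ?_) hf⟩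
  rw [integral_withDensity_eq_integral_toReal_smul₀ hS.1.aemeasurable.ennreal_ofReal (by simp)]
  refine integral_congr_ae (hS0.mono fun x hx => ?_)
  simp only [ENNReal.toReal_ofReal hx, smul_eq_mul, Real.norm_eq_abs, abs_sub_comm]

theorem integrable_mul_abs_sub {X : Type*} [MeasurableSpace X] {μ : Measure X} {S f g : X → ℝ}
    (hS : Integrable S μ) (hfm : AEStronglyMeasurable f μ) (hgm : AEStronglyMeasurable g μ)
    {A B : ℝ} (hfB : ∀ᵐ x ∂μ, |f x| ≤ B) (hgA : ∀ᵐ x ∂μ, |g x| ≤ A) :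
    Integrable (fun x => S x * |f x - g x|) μ := by
  refine hS.mul_bdd (c := B + A) (hfm.sub hgm).norm ?_
  filter_upwards [hfB, hgA] with x hf hg
  rw [Real.norm_eq_abs, abs_abs]
  exact (abs_sub _ _).trans (add_le_add hf hg)

theorem exists_polynomial_integral_mul_abs_sub_le {μ : Measure ℝ} {a b : ℝ} {S g : ℝ → ℝ}
    (hS : IntegrableOn S (Icc a b) μ) (hS0 : 0 ≤ᵐ[μ.restrict (Icc a b)] S)
    (hgm : AEStronglyMeasurable g (μ.restrict (Icc a b))) {A : ℝ} (hA : 0 ≤ A)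
    (hgA : ∀ᵐ x ∂μ.restrict (Icc a b), |g x| ≤ A) {ε : ℝ} (hε : 0 < ε) :
    ∃ p : Polynomial ℝ, (∀ x ∈ Icc a b, |p.eval x| ≤ A + 1) ∧
      ∫ x in Icc a b, S x * |p.eval x - g x| ∂μ ≤ ε := by
  obtain ⟨f, hf⟩ := exists_boundedContinuous_integral_mul_abs_sub_le hS hS0 hgm hgA (half_pos hε)
  set I := ∫ x in Icc a b, S x ∂μ
  have hI0 : 0 ≤ I := integral_nonneg_of_ae hS0
  set e := min 1 (ε / (2 * (I + 1)))
  obtain ⟨p, hp⟩ := exists_polynomial_near_of_continuousOn a b (fun x => max (-A) (min A (f x)))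
    (by fun_prop) e (by positivity)
  have hclamp (x : ℝ) : |max (-A) (min A (f x))| ≤ A :=
    abs_le.2 ⟨le_max_left _ _, max_le (by linarith) (min_le_left _ _)⟩
  have hpA : ∀ x ∈ Icc a b, |p.eval x| ≤ A + 1 := fun x hx => by
    linarith [hclamp x, hp x hx, min_le_left 1 (ε / (2 * (I + 1))),
      abs_sub_abs_le_abs_sub (p.eval x) (max (-A) (min A (f x)))]
  refine ⟨p, hpA, ?_⟩
  have hfint := integrable_mul_abs_sub hS f.continuous.aestronglyMeasurable hgm
    (Eventually.of_forall f.norm_coe_le_norm) hgA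
  calc ∫ x in Icc a b, S x * |p.eval x - g x| ∂μ
      ≤ ∫ x in Icc a b, (S x * |f x - g x| + S x * e) ∂μ := by
        refine integral_mono_ae (integrable_mul_abs_sub hS p.continuous.aestronglyMeasurable hgm
          (ae_restrict_of_forall_mem measurableSet_Icc hpA) hgA)
          (hfint.add (hS.mul_const e)) ?_
        filter_upwards [hS0, hgA, ae_restrict_mem measurableSet_Icc] with x hSx hgx hx
        rw [← mul_add]
        refine mul_le_mul_of_nonneg_left ?_ hSx
        linarith [abs_sub_le (p.eval x) (max (-A) (min A (f x))) (g x), hp x hx,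
          abs_max_neg_min_sub_le (y := f x) hgx]
    _ = (∫ x in Icc a b, S x * |f x - g x| ∂μ) + I * e := by
        rw [integral_add hfint (hS.mul_const e), integral_mul_const]
    _ ≤ ε / 2 + (I + 1) * (ε / (2 * (I + 1))) := by
        gcongr
        · linarith
        · exact min_le_right _ _
    _ = ε := by field_simp; norm_num

theorem exists_polynomial_integral_abs_exp_mul_sub_sqrt_le {μ : Measure ℝ} {a b : ℝ} {P R : ℝ → ℝ}
    (hP : IntegrableOn P (Icc a b) μ) (hR : IntegrableOn R (Icc a b) μ)
    (hP0 : 0 ≤ᵐ[μ.restrict (Icc a b)] P) (hR0 : 0 ≤ᵐ[μ.restrict (Icc a b)] R) {ε : ℝ}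
    (hε : 0 < ε) :
    ∃ g : Polynomial ℝ, ∫ s in Icc a b, (|Real.exp (g.eval s) * P s - √(P s * R s)| +
      |Real.exp (-g.eval s) * R s - √(P s * R s)|) ∂μ ≤ ε := by
  have hS : IntegrableOn (fun s => P s + R s) (Icc a b) μ := hP.add hR
  have hS0 : 0 ≤ᵐ[μ.restrict (Icc a b)] fun s => P s + R s := by
    filter_upwards [hP0, hR0] with s hPs hRs using add_nonneg hPs hRs
  set I := ∫ s in Icc a b, (P s + R s) ∂μ
  have hI0 : 0 ≤ I := integral_nonneg_of_ae hS0
  set d := ε / (4 * (I + 1))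
  have hδ : 0 < d ^ 2 := by positivity
  set A := Real.log ((1 + d ^ 2) / d ^ 2)
  have hA0 : 0 ≤ A := Real.log_nonneg (by rw [le_div_iff₀ hδ]; linarith)
  set g₀ : ℝ → ℝ := fun s => halfLogRatio (d ^ 2) (P s) (R s)
  have hg₀m : AEStronglyMeasurable g₀ (μ.restrict (Icc a b)) := by
    have hmeas : Measurable fun z : ℝ × ℝ => halfLogRatio (d ^ 2) z.1 z.2 := by
      unfold halfLogRatio
      fun_prop
    exact (hmeas.comp_aemeasurable
      (hP.1.aemeasurable.prodMk hR.1.aemeasurable)).aestronglyMeasurable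
  have hg₀A : ∀ᵐ s ∂μ.restrict (Icc a b), |g₀ s| ≤ A := by
    filter_upwards [hP0, hR0] with s hPs hRs using abs_halfLogRatio_le hδ hPs hRs
  obtain ⟨g, hgA, hg⟩ := exists_polynomial_integral_mul_abs_sub_le hS hS0 hg₀m hA0 hg₀A
    (ε := ε / (2 * Real.exp (A + 1))) (by positivity)
  have hint := (integrable_mul_abs_sub hS g.continuous.aestronglyMeasurable hg₀m
    (ae_restrict_of_forall_mem measurableSet_Icc hgA) hg₀A).const_mul (Real.exp (A + 1))
  refine ⟨g, ?_⟩
  calc ∫ s in Icc a b, (|Real.exp (g.eval s) * P s - √(P s * R s)| +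
        |Real.exp (-g.eval s) * R s - √(P s * R s)|) ∂μ
      ≤ ∫ s in Icc a b, (2 * d * (P s + R s) +
          Real.exp (A + 1) * ((P s + R s) * |g.eval s - g₀ s|)) ∂μ := by
        refine integral_mono_of_nonneg (Eventually.of_forall fun s => by positivity)
          ((hS.const_mul (2 * d)).add hint) ?_
        filter_upwards [hP0, hR0, hg₀A, ae_restrict_mem measurableSet_Icc] with s hPs hRs hgs hs
        have hbound := abs_exp_mul_sub_sqrt_add_le hδ hPs hRs (hgA s hs) (hgs.trans (by linarith))
        rwa [Real.sqrt_sq (by positivity)] at hbound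
    _ = 2 * d * I + Real.exp (A + 1) * ∫ s in Icc a b, (P s + R s) * |g.eval s - g₀ s| ∂μ := by
        rw [integral_add (hS.const_mul (2 * d)) hint, integral_const_mul, integral_const_mul]
    _ ≤ 2 * d * (I + 1) + Real.exp (A + 1) * (ε / (2 * Real.exp (A + 1))) := by
        gcongr
        linarith
    _ = ε := by
        simp only [d]
        field_simp
        norm_num

theorem intervalIntegrable_sqrt_mul {P R : ℝ → ℝ} {a b : ℝ} (hP : IntervalIntegrable P volume a b)
    (hR : IntervalIntegrable R volume a b) :
    IntervalIntegrable (fun s => √(P s * R s)) volume a b := by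
  refine (hP.abs.add hR.abs).mono_fun ?_ (Eventually.of_forall fun s => ?_)
  · exact Real.continuous_sqrt.comp_aestronglyMeasurable
      (hP.def'.aestronglyMeasurable.mul hR.def'.aestronglyMeasurable)
  · beta_reduce
    rw [Real.norm_of_nonneg (Real.sqrt_nonneg _), Real.norm_of_nonneg (by positivity)]
    refine Real.sqrt_le_iff.2 ⟨by positivity, ?_⟩
    nlinarith [abs_nonneg (P s), abs_nonneg (R s), le_abs_self (P s * R s), abs_mul (P s) (R s)]

/-! ### The modified Prüfer angle -/

theorem cos_sq_add_mul_sin_sq_pos {k : ℝ} (hk : 0 < k) (x : ℝ) :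
    0 < Real.cos x ^ 2 + k * Real.sin x ^ 2 := by
  rcases eq_or_ne (Real.sin x) 0 with hs | hs
  · have hc : Real.cos x ^ 2 = 1 := by rw [Real.cos_sq', hs]; ring
    simp [hs, hc]
  · positivity

/-- The angle with tangent `k * tan x` in the same quarter turn as `x`. Applied to a Prüfer angle
with `k = exp γ`, it is the modified Prüfer angle of the rescaled pair `(exp γ * y, y₁)`. -/
noncomputable def tanScaledAngle (k x : ℝ) : ℝ :=
  x + Real.arctan ((k - 1) * (Real.sin x * Real.cos x) / (Real.cos x ^ 2 + k * Real.sin x ^ 2))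

theorem abs_tanScaledAngle_sub_le (k x : ℝ) : |tanScaledAngle k x - x| ≤ Real.pi / 2 := by
  rw [tanScaledAngle, add_sub_cancel_left]
  exact abs_le.2 ⟨(Real.neg_pi_div_two_lt_arctan _).le, (Real.arctan_lt_pi_div_two _).le⟩

theorem contDiff_tanScaledAngle_exp :
    ContDiff ℝ 1 fun z : ℝ × ℝ => tanScaledAngle (Real.exp z.2) z.1 :=
  contDiff_fst.add <| Real.contDiff_arctan.comp <| ContDiff.div (by fun_prop) (by fun_prop)
    fun z => (cos_sq_add_mul_sin_sq_pos (Real.exp_pos z.2) z.1).ne'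

theorem hasDerivAt_tanScaledAngle_exp {θ γ : ℝ → ℝ} {θ' γ' x : ℝ} (hθ : HasDerivAt θ θ' x)
    (hγ : HasDerivAt γ γ' x) :
    HasDerivAt (fun t => tanScaledAngle (Real.exp (γ t)) (θ t))
      (Real.exp (γ x) * (θ' + γ' * (Real.sin (θ x) * Real.cos (θ x))) /
        (Real.cos (θ x) ^ 2 + Real.exp (γ x) ^ 2 * Real.sin (θ x) ^ 2)) x := by
  have hk := hγ.exp
  have hM := (hθ.cos.pow 2).add (hk.mul (hθ.sin.pow 2))
  have hN := (hk.sub_const 1).mul (hθ.sin.mul hθ.cos)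
  have hM0 := cos_sq_add_mul_sin_sq_pos (Real.exp_pos (γ x)) (θ x)
  refine (hθ.add (hN.div hM hM0.ne').arctan).congr_deriv ?_
  have hD0 := cos_sq_add_mul_sin_sq_pos (pow_pos (Real.exp_pos (γ x)) 2) (θ x)
  have hsc := Real.cos_sq' (θ x)
  simp only [Pi.mul_apply, Pi.add_apply, Pi.div_apply, Pi.pow_apply]
  generalize Real.exp (γ x) = k at *
  generalize Real.sin (θ x) = s at *
  generalize Real.cos (θ x) = c at *
  have hsum : 1 + ((k - 1) * (s * c) / (c ^ 2 + k * s ^ 2)) ^ 2 =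
      (c ^ 2 + k ^ 2 * s ^ 2) / (c ^ 2 + k * s ^ 2) ^ 2 := by
    field_simp
    linear_combination (c ^ 2 + k ^ 2 * s ^ 2) * hsc
  rw [hsum, eq_div_iff hD0.ne', add_mul]
  field_simp
  have hc3 : c ^ 3 = c * (1 - s ^ 2) := by rw [← hsc]; ring
  have hc4 : c ^ 4 = (1 - s ^ 2) ^ 2 := by rw [← hsc]; ring
  ring_nf
  rw [hc4, hc3, hsc]
  ring

theorem abs_mul_mul_div_le_one (k s c : ℝ) : |k * s * c / (c ^ 2 + k ^ 2 * s ^ 2)| ≤ 1 := by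
  rw [abs_div, abs_of_nonneg (a := c ^ 2 + k ^ 2 * s ^ 2) (by positivity)]
  refine div_le_one_of_le₀ (abs_le.2 ⟨?_, ?_⟩) (by positivity)
  · nlinarith [sq_nonneg (c + k * s)]
  · nlinarith [sq_nonneg (c - k * s)]

/-- The derivative of the modified angle is a convex combination of `k * P` and `k⁻¹ * W`, up to
the term produced by the variation of `k`. -/
theorem abs_tanScaledAngle_deriv_sub_le (P W : ℝ → ℝ) {k : ℝ} (hk : 0 < k) (γ' h s x : ℝ) :
    |k * (pruferField P W s x + γ' * (Real.sin x * Real.cos x)) /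
        (Real.cos x ^ 2 + k ^ 2 * Real.sin x ^ 2) - h| ≤
      |k * P s - h| + |k⁻¹ * W s - h| + |γ'| := by
  set D := Real.cos x ^ 2 + k ^ 2 * Real.sin x ^ 2 with hD
  have hD0 : 0 < D := cos_sq_add_mul_sin_sq_pos (pow_pos hk 2) x
  set l := Real.cos x ^ 2 / D with hl
  have hl' : 1 - l = k ^ 2 * Real.sin x ^ 2 / D := by
    rw [hl, eq_div_iff hD0.ne', sub_mul, div_mul_cancel₀ _ hD0.ne', hD]
    ring
  have hl0 : 0 ≤ l := by positivity
  have hl1 : 0 ≤ 1 - l := by rw [hl']; positivity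
  have hsplit : k * (pruferField P W s x + γ' * (Real.sin x * Real.cos x)) / D - h =
      l * (k * P s - h) + (1 - l) * (k⁻¹ * W s - h) +
        γ' * (k * Real.sin x * Real.cos x / D) := by
    have hexp : l * (k * P s - h) + (1 - l) * (k⁻¹ * W s - h) =
        l * (k * P s) + (1 - l) * (k⁻¹ * W s) - h := by ring
    rw [hexp, hl', hl, pruferField]
    field_simp
    ring
  rw [hsplit]
  refine (abs_add_three _ _ _).trans (add_le_add (add_le_add ?_ ?_) ?_)
  · rw [abs_mul, abs_of_nonneg hl0]
    exact mul_le_of_le_one_left (abs_nonneg _) (by linarith)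
  · rw [abs_mul, abs_of_nonneg hl1]
    exact mul_le_of_le_one_left (abs_nonneg _) (by linarith)
  · rw [abs_mul]
    exact mul_le_of_le_one_right (abs_nonneg _) (abs_mul_mul_div_le_one _ _ _)

theorem abs_mul_sub_add_abs_inv_mul_sub_le {w y : ℝ} (hw : 1 ≤ w) (hy : 0 ≤ y)
    (x P Q R S : ℝ) :
    |w * x * P - w * S| + |w⁻¹ * y * (w ^ 2 * R - Q) - w * S| ≤
      w * (|x * P - S| + |y * R - S|) + y * |Q| := by
  have hw0 : 0 < w := by linarith
  have hx : w * x * P - w * S = w * (x * P - S) := by ring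
  have hy' : w⁻¹ * y * (w ^ 2 * R - Q) - w * S = w * (y * R - S) - w⁻¹ * (y * Q) := by
    field_simp
    ring
  rw [hx, hy', abs_mul w, abs_of_pos hw0, mul_add, add_assoc, add_le_add_iff_left]
  refine (abs_sub _ _).trans ?_
  rw [abs_mul w, abs_of_pos hw0, abs_mul w⁻¹, abs_mul y, abs_of_nonneg hy,
    abs_of_pos (inv_pos.2 hw0), add_le_add_iff_left]
  exact mul_le_of_le_one_left (by positivity) (inv_le_one_of_one_le₀ hw)

theorem abs_pruferAngle_sub_sub_integral_le {P W γ γ' h θ : ℝ → ℝ} {a b : ℝ}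
    (hP : IntervalIntegrable P volume a b) (hW : IntervalIntegrable W volume a b)
    (hh : IntervalIntegrable h volume a b) (hγ : HasACDerivOn γ γ' a b)
    (hθ : HasACDerivOn θ (fun s => pruferField P W s (θ s)) a b) :
    |θ b - θ a - ∫ s in a..b, h s| ≤ Real.pi +
      ∫ s in a..b, (|Real.exp (γ s) * P s - h s| + |(Real.exp (γ s))⁻¹ * W s - h s| + |γ' s|) := by
  have hψ := hθ.comp₂ hγ contDiff_tanScaledAngle_exp
    fun x hθx hγx => hasDerivAt_tanScaledAngle_exp hθx hγx
  have hexp : ContinuousOn (fun s => Real.exp (γ s)) (uIcc a b) :=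
    Real.continuous_exp.comp_continuousOn hγ.continuousOn
  have hexp' : ContinuousOn (fun s => (Real.exp (γ s))⁻¹) (uIcc a b) :=
    hexp.inv₀ fun s _ => (Real.exp_pos _).ne'
  have hint := (((hP.continuousOn_mul hexp).sub hh).abs.add
    ((hW.continuousOn_mul hexp').sub hh).abs).add hγ.intervalIntegrable.abs
  have hbound := intervalIntegral.norm_integral_le_of_norm_le hθ.le
    (Eventually.of_forall fun s _ => (Real.norm_eq_abs _).trans_le <|
      abs_tanScaledAngle_deriv_sub_le P W (Real.exp_pos (γ s)) (γ' s) (h s) s (θ s)) hint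
  rw [intervalIntegral.integral_sub hψ.intervalIntegrable hh, hψ.integral_eq_sub,
    Real.norm_eq_abs] at hbound
  have ha := abs_tanScaledAngle_sub_le (Real.exp (γ a)) (θ a)
  have hb := abs_tanScaledAngle_sub_le (Real.exp (γ b)) (θ b)
  rw [abs_le] at *
  constructor <;> linarith

/-! ### The family of Prüfer angles of an eigenvalue problem -/

/-- The Prüfer angles, one for each spectral parameter `E`, of the solutions of
`y' = P y₁`, `y₁' = (Q - E R) y` which start with the angle `φ` at `a`. -/
structure IsPruferFamily (P Q R : ℝ → ℝ) (a b φ : ℝ) (θ : ℝ → ℝ → ℝ) : Prop where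
  left_eq : ∀ E, θ E a = φ
  hasACDerivOn : ∀ E,
    HasACDerivOn (θ E) (fun s => pruferField P (fun t => E * R t - Q t) s (θ E s)) a b

theorem exists_isPruferFamily {P Q R : ℝ → ℝ} {a b : ℝ} (hab : a ≤ b)
    (hP : IntervalIntegrable P volume a b) (hQ : IntervalIntegrable Q volume a b)
    (hR : IntervalIntegrable R volume a b) (φ : ℝ) : ∃ θ, IsPruferFamily P Q R a b φ θ := by
  choose θ hθa hθ using fun E =>
    exists_hasACDerivOn_pruferField hab hP ((hR.const_mul E).sub hQ) φ
  exact ⟨θ, hθa, hθ⟩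

namespace IsPruferFamily

variable {P Q R : ℝ → ℝ} {a b φ : ℝ} {θ : ℝ → ℝ → ℝ}

theorem strictMono (hθ : IsPruferFamily P Q R a b φ θ) (hP : IntervalIntegrable P volume a b)
    (hQ : IntervalIntegrable Q volume a b) (hR : IntervalIntegrable R volume a b)
    (hR0 : 0 ≤ᵐ[volume.restrict (Icc a b)] R)
    (hPR : ¬(fun x => P x * R x) =ᵐ[volume.restrict (Icc a b)] 0) :
    StrictMono fun E => θ E b := by
  intro E₁ E₂ hE
  have hW : (fun s => E₁ * R s - Q s) ≤ᵐ[volume.restrict (Icc a b)] fun s => E₂ * R s - Q s :=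
    hR0.mono fun s hs => sub_le_sub_right (mul_le_mul_of_nonneg_right hE.le hs) _
  have hpos := integral_mul_sin_sq_pruferAngle_pos hR hR0 hPR (hθ.hasACDerivOn E₁)
  have hle := exp_neg_mul_integral_le_pruferAngle_sub hP ((hR.const_mul E₂).sub hQ) hW
    (hθ.hasACDerivOn E₁) (hθ.hasACDerivOn E₂) ((hθ.left_eq E₁).trans (hθ.left_eq E₂).symm)
  simp only [sub_sub_sub_cancel_right, ← sub_mul, mul_assoc,
    intervalIntegral.integral_const_mul] at hle
  exact sub_pos.1 <| (mul_pos (Real.exp_pos _) (mul_pos (sub_pos.2 hE) hpos)).trans_le hle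

theorem sub_le_mul_sub (hθ : IsPruferFamily P Q R a b φ θ) (hP : IntervalIntegrable P volume a b)
    (hQ : IntervalIntegrable Q volume a b) (hR : IntervalIntegrable R volume a b)
    (hR0 : 0 ≤ᵐ[volume.restrict (Icc a b)] R) {E₁ E₂ M : ℝ} (hE : E₁ ≤ E₂) (hM : |E₂| ≤ M) :
    θ E₂ b - θ E₁ b ≤ Real.exp ((∫ s in a..b, |P s|) +
      ∫ s in a..b, (M * |R s| + |Q s|)) * (∫ s in a..b, R s) * (E₂ - E₁) := by
  have hab := (hθ.hasACDerivOn E₁).le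
  have hW : (fun s => E₁ * R s - Q s) ≤ᵐ[volume.restrict (Icc a b)] fun s => E₂ * R s - Q s :=
    hR0.mono fun s hs => sub_le_sub_right (mul_le_mul_of_nonneg_right hE hs) _
  have hle := pruferAngle_sub_le_exp_mul_integral hP ((hR.const_mul E₁).sub hQ)
    ((hR.const_mul E₂).sub hQ) hW (hθ.hasACDerivOn E₁) (hθ.hasACDerivOn E₂)
    ((hθ.left_eq E₁).trans (hθ.left_eq E₂).symm)
  simp only [sub_sub_sub_cancel_right, ← sub_mul, intervalIntegral.integral_const_mul] at hle
  have hR1 : 0 ≤ ∫ s in a..b, R s := intervalIntegral.integral_nonneg_of_ae_restrict hab hR0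
  have hWM : ∫ s in a..b, |E₂ * R s - Q s| ≤ ∫ s in a..b, (M * |R s| + |Q s|) :=
    intervalIntegral.integral_mono hab ((hR.const_mul E₂).sub hQ).abs
      ((hR.abs.const_mul M).add hQ.abs) fun s => (abs_sub _ _).trans <| by
        rw [abs_mul]
        gcongr
  calc θ E₂ b - θ E₁ b ≤ _ := hle
    _ ≤ Real.exp ((∫ s in a..b, |P s|) + ∫ s in a..b, (M * |R s| + |Q s|)) *
        ((E₂ - E₁) * ∫ s in a..b, R s) := by
      have := sub_nonneg.2 hE
      gcongr
    _ = _ := by ring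

theorem continuous (hθ : IsPruferFamily P Q R a b φ θ) (hP : IntervalIntegrable P volume a b)
    (hQ : IntervalIntegrable Q volume a b) (hR : IntervalIntegrable R volume a b)
    (hR0 : 0 ≤ᵐ[volume.restrict (Icc a b)] R)
    (hPR : ¬(fun x => P x * R x) =ᵐ[volume.restrict (Icc a b)] 0) :
    Continuous fun E => θ E b := by
  have hmono := (hθ.strictMono hP hQ hR hR0 hPR).monotone
  refine continuous_iff_continuousAt.2 fun E₀ =>
    continuousAt_of_locally_lipschitz (r := 1) one_pos (Real.exp ((∫ s in a..b, |P s|) +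
      ∫ s in a..b, ((|E₀| + 1) * |R s| + |Q s|)) * ∫ s in a..b, R s) fun E hE => ?_
  rw [Real.dist_eq] at hE ⊢
  rw [Real.dist_eq]
  have hEM : |E| ≤ |E₀| + 1 := by linarith [abs_sub_abs_le_abs_sub E E₀]
  rcases le_total E E₀ with h | h
  · rw [abs_sub_comm, abs_sub_comm E, abs_of_nonneg (sub_nonneg.2 (hmono h)),
      abs_of_nonneg (sub_nonneg.2 h)]
    exact hθ.sub_le_mul_sub hP hQ hR hR0 h (by linarith)
  · rw [abs_of_nonneg (sub_nonneg.2 (hmono h)), abs_of_nonneg (sub_nonneg.2 h)]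
    exact hθ.sub_le_mul_sub hP hQ hR hR0 h hEM

theorem nonneg (hθ : IsPruferFamily P Q R a b φ θ) (hQ : IntervalIntegrable Q volume a b)
    (hR : IntervalIntegrable R volume a b) (hP0 : 0 ≤ᵐ[volume.restrict (Icc a b)] P)
    (hφ : 0 ≤ φ) (E : ℝ) : 0 ≤ θ E b :=
  pruferAngle_nonneg ((hR.const_mul E).sub hQ) hP0 (hθ.hasACDerivOn E)
    (hφ.trans_eq (hθ.left_eq E).symm)

theorem abs_sub_sub_mul_integral_sqrt_le (hθ : IsPruferFamily P Q R a b φ θ)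
    (hP : IntervalIntegrable P volume a b) (hQ : IntervalIntegrable Q volume a b)
    (hR : IntervalIntegrable R volume a b) (g : Polynomial ℝ) {w : ℝ} (hw : 1 ≤ w) :
    |θ (w ^ 2) b - φ - w * ∫ s in a..b, √(P s * R s)| ≤ Real.pi +
      (w * (∫ s in a..b, (|Real.exp (g.eval s) * P s - √(P s * R s)| +
        |Real.exp (-g.eval s) * R s - √(P s * R s)|)) +
      ∫ s in a..b, (Real.exp (-g.eval s) * |Q s| + |g.derivative.eval s|)) := by
  have hw0 : 0 < w := by linarith
  have hab := (hθ.hasACDerivOn 0).le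
  have hS := intervalIntegrable_sqrt_mul hP hR
  have hg' : IntervalIntegrable (fun s => g.derivative.eval s) volume a b :=
    (by fun_prop : Continuous fun s => g.derivative.eval s).intervalIntegrable _ _
  have hγ : HasACDerivOn (fun s => Real.log w + g.eval s) (fun s => g.derivative.eval s) a b :=
    ⟨hab, hg', fun x _ => by
      rw [intervalIntegral.integral_eq_sub_of_hasDerivAt (fun y _ => g.hasDerivAt y)
        ((by fun_prop : Continuous fun s => g.derivative.eval s).intervalIntegrable _ _)]
      ring⟩
  have hexp : Continuous fun s => Real.exp (g.eval s) := by fun_prop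
  have hexp' : Continuous fun s => Real.exp (-g.eval s) := by fun_prop
  have hmain := abs_pruferAngle_sub_sub_integral_le hP ((hR.const_mul (w ^ 2)).sub hQ)
    (hS.const_mul w) hγ (hθ.hasACDerivOn (w ^ 2))
  rw [hθ.left_eq, intervalIntegral.integral_const_mul] at hmain
  have hint₁ := ((hP.continuousOn_mul hexp.continuousOn).sub hS).abs.add
    ((hR.continuousOn_mul hexp'.continuousOn).sub hS).abs
  have hint₂ := (hQ.abs.continuousOn_mul hexp'.continuousOn).add hg'.abs
  refine hmain.trans (add_le_add_right ?_ _)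
  rw [← intervalIntegral.integral_const_mul,
    ← intervalIntegral.integral_add (hint₁.const_mul w) hint₂]
  rw [intervalIntegral.integral_of_le hab, intervalIntegral.integral_of_le hab]
  refine integral_mono_of_nonneg (Eventually.of_forall fun s => by positivity)
    ((hint₁.const_mul w).add hint₂).1 (Eventually.of_forall fun s => ?_)
  have hC : (Real.exp (Real.log w + g.eval s))⁻¹ = w⁻¹ * Real.exp (-g.eval s) := by
    rw [Real.exp_add, Real.exp_log hw0, mul_inv, ← Real.exp_neg]
  beta_reduce
  rw [hC, Real.exp_add, Real.exp_log hw0]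
  linarith [abs_mul_sub_add_abs_inv_mul_sub_le hw (Real.exp_nonneg (-g.eval s))
    (Real.exp (g.eval s)) (P s) (Q s) (R s) √(P s * R s)]

theorem tendsto_div_atTop (hθ : IsPruferFamily P Q R a b φ θ)
    (hP : IntervalIntegrable P volume a b) (hQ : IntervalIntegrable Q volume a b)
    (hR : IntervalIntegrable R volume a b) (hP0 : 0 ≤ᵐ[volume.restrict (Icc a b)] P)
    (hR0 : 0 ≤ᵐ[volume.restrict (Icc a b)] R) :
    Tendsto (fun w => θ (w ^ 2) b / w) atTop (nhds (∫ s in a..b, √(P s * R s))) := by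
  have hab := (hθ.hasACDerivOn 0).le
  rw [Metric.tendsto_atTop]
  intro ε hε
  obtain ⟨g, hg⟩ := exists_polynomial_integral_abs_exp_mul_sub_sqrt_le
    ((intervalIntegrable_iff_integrableOn_Icc_of_le hab).1 hP)
    ((intervalIntegrable_iff_integrableOn_Icc_of_le hab).1 hR) hP0 hR0 (half_pos hε)
  rw [integral_Icc_eq_integral_Ioc, ← intervalIntegral.integral_of_le hab] at hg
  set M := ∫ s in a..b, (Real.exp (-g.eval s) * |Q s| + |g.derivative.eval s|)
  set L := ∫ s in a..b, √(P s * R s)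
  refine ⟨max 1 (2 * (Real.pi + |φ| + M) / ε + 1), fun w hw => ?_⟩
  have hw1 : 1 ≤ w := (le_max_left _ _).trans hw
  have hw2 : 2 * (Real.pi + |φ| + M) / ε < w := by linarith [(le_max_right _ _).trans hw]
  have hw0 : 0 < w := by linarith
  have hbound := hθ.abs_sub_sub_mul_integral_sqrt_le hP hQ hR g hw1
  have htri := abs_sub_abs_le_abs_sub (θ (w ^ 2) b - w * L) φ
  rw [sub_right_comm] at htri
  have hgw := mul_le_mul_of_nonneg_left hg hw0.le
  rw [div_lt_iff₀ hε] at hw2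
  rw [Real.dist_eq, show θ (w ^ 2) b / w - L = (θ (w ^ 2) b - w * L) / w by field_simp, abs_div,
    abs_of_pos hw0, div_lt_iff₀ hw0]
  linarith

end IsPruferFamily

/-! ### Counting the levels of an increasing phase -/

theorem tendsto_atTop_of_tendsto_sq_div {Θ : ℝ → ℝ} {L : ℝ} (hmono : Monotone Θ) (hL : 0 < L)
    (hΘ : Tendsto (fun w => Θ (w ^ 2) / w) atTop (nhds L)) : Tendsto Θ atTop atTop := by
  refine hmono.tendsto_atTop_atTop fun M => ?_
  have hmul : Tendsto (fun w => Θ (w ^ 2) / w * w) atTop atTop := hΘ.pos_mul_atTop hL tendsto_id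
  obtain ⟨w, hwM, hw⟩ := ((hmul.eventually_ge_atTop M).and (eventually_gt_atTop 0)).exists
  exact ⟨w ^ 2, by rwa [div_mul_cancel₀ _ hw.ne'] at hwM⟩

theorem int_nonneg_of_nonneg_add_mul {φ c : ℝ} (hφc : φ < c) {k : ℤ} (h : 0 ≤ φ + k * c)
    (hφ : 0 ≤ φ) : 0 ≤ k := by
  by_contra! hk
  have hk1 : (k : ℝ) ≤ -1 := by exact_mod_cast Int.le_sub_one_of_lt hk
  nlinarith

theorem exists_strictMono_range_eq_setOf_mem_progression {Θ : ℝ → ℝ} (hcont : Continuous Θ)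
    (hmono : StrictMono Θ) (h0 : ∀ E, 0 ≤ Θ E) (htop : Tendsto Θ atTop atTop) {φ c : ℝ}
    (hφ : 0 ≤ φ) (hφc : φ < c) :
    ∃ (E : ℕ → ℝ) (m : ℕ), StrictMono E ∧ range E = {x | ∃ k : ℤ, Θ x = φ + k * c} ∧
      ∀ n, Θ (E n) = φ + ((m + n : ℕ) : ℝ) * c := by
  have hc : 0 < c := hφ.trans_lt hφc
  have hsurj : ∀ {x y}, Θ x ≤ y → ∃ z, Θ z = y := fun {x y} hx =>
    mem_range_of_exists_le_of_exists_ge hcont ⟨x, hx⟩ (htop.eventually_ge_atTop y).exists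
  have hex : ∃ k : ℕ, ∃ x, Θ x = φ + k * c := by
    obtain ⟨k, hk⟩ := exists_nat_ge (Θ 0 / c)
    rw [div_le_iff₀ hc] at hk
    exact ⟨k, hsurj (x := 0) (by linarith)⟩
  obtain ⟨x₀, hx₀⟩ := Nat.find_spec hex
  set m := Nat.find hex
  have hlevel : ∀ n : ℕ, ∃ x, Θ x = φ + ((m + n : ℕ) : ℝ) * c := fun n =>
    hsurj (x := x₀) (by rw [hx₀]; gcongr; exact Nat.le_add_right m n)
  choose E hE using hlevel
  refine ⟨E, m, fun i j hij => ?_, ext fun x => ⟨?_, ?_⟩, hE⟩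
  · rw [← hmono.lt_iff_lt, hE, hE]
    gcongr
  · rintro ⟨n, rfl⟩
    exact ⟨(m + n : ℕ), by rw [hE, Int.cast_natCast]⟩
  · rintro ⟨k, hk⟩
    lift k to ℕ using int_nonneg_of_nonneg_add_mul hφc (hk ▸ h0 x) hφ
    rw [Int.cast_natCast] at hk
    refine ⟨k - m, hmono.injective ?_⟩
    rw [hE, hk, Nat.add_sub_cancel' (Nat.find_min' hex ⟨x, hk⟩)]

theorem tendsto_atTop_of_comp_eq_progression {Θ : ℝ → ℝ} (hmono : StrictMono Θ) {E : ℕ → ℝ}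
    {φ c : ℝ} (hc : 0 < c) {m : ℕ} (hE : ∀ n, Θ (E n) = φ + ((m + n : ℕ) : ℝ) * c) :
    Tendsto E atTop atTop := by
  refine tendsto_atTop.2 fun M => ?_
  have htop : Tendsto (fun n : ℕ => φ + ((m + n : ℕ) : ℝ) * c) atTop atTop :=
    tendsto_atTop_add_const_left _ _ <| (tendsto_natCast_atTop_atTop.comp
      (tendsto_atTop_mono (fun n => Nat.le_add_left n m) tendsto_id)).atTop_mul_const hc
  filter_upwards [htop.eventually_ge_atTop (Θ M)] with n hn
  rwa [← hmono.le_iff_le, hE]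

theorem tendsto_div_sq_of_comp_eq_progression {Θ : ℝ → ℝ} {L : ℝ} (hL : L ≠ 0)
    (hΘ : Tendsto (fun w => Θ (w ^ 2) / w) atTop (nhds L)) {E : ℕ → ℝ}
    (hEtop : Tendsto E atTop atTop) {φ c : ℝ} (hφ : 0 ≤ φ) (hc : 0 < c) {m : ℕ}
    (hE : ∀ n, Θ (E n) = φ + ((m + n : ℕ) : ℝ) * c) :
    Tendsto (fun n => E n / (n : ℝ) ^ 2) atTop (nhds (c ^ 2 / L ^ 2)) := by
  have hlevel : Tendsto (fun n : ℕ => Θ (E n) / n) atTop (nhds c) := by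
    have hshift : Tendsto (fun n : ℕ => (φ + m * c) / (n : ℝ) + c) atTop (nhds (0 + c)) :=
      (tendsto_const_div_atTop_nhds_zero_nat _).add_const _
    rw [zero_add] at hshift
    refine hshift.congr' ?_
    filter_upwards [eventually_gt_atTop 0] with n hn
    rw [hE]
    push_cast
    field_simp
    ring
  have hquot := (hlevel.div (hΘ.comp (Real.tendsto_sqrt_atTop.comp hEtop)) hL).pow 2
  rw [div_pow] at hquot
  refine hquot.congr' ?_
  filter_upwards [eventually_gt_atTop 0, hEtop.eventually_gt_atTop 0] with n hn hEn
  have hΘn : 0 < Θ (E n) := by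
    rw [hE]
    positivity
  simp only [Function.comp, Pi.div_apply, Real.sq_sqrt hEn.le]
  rw [div_div_div_comm, div_self hΘn.ne', one_div, inv_div, div_pow, Real.sq_sqrt hEn.le]

theorem not_accPt_range_of_tendsto_atTop {E : ℕ → ℝ} (hE : Tendsto E atTop atTop) (x : ℝ) :
    ¬AccPt x (Filter.principal (range E)) := by
  obtain ⟨N, hN⟩ := eventually_atTop.1 (hE.eventually_ge_atTop (x + 1))
  have hfin : (E '' Iio N).Finite := (finite_Iio N).image E
  rw [accPt_iff_frequently, not_frequently]
  filter_upwards [(hfin.subset (sdiff_subset (t := {x}))).isClosed.isOpen_compl.mem_nhds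
    (by simp), Iio_mem_nhds (lt_add_one x)] with y hy hyx
  rintro ⟨hne, n, rfl⟩
  exact hy ⟨⟨n, not_le.1 fun hn => (hN n hn).not_gt hyx, rfl⟩, hne⟩

theorem infinite_bddBelow_tendsto_div_sq_of_levels {Θ : ℝ → ℝ} (hcont : Continuous Θ)
    (hmono : StrictMono Θ) (h0 : ∀ E, 0 ≤ Θ E) {L : ℝ} (hL : 0 < L)
    (hΘ : Tendsto (fun w => Θ (w ^ 2) / w) atTop (nhds L)) {φ c : ℝ} (hφ : 0 ≤ φ) (hφc : φ < c)
    {Λ : Set ℝ} (hΛ : Λ = {x | ∃ k : ℤ, Θ x = φ + k * c}) :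
    Λ.Infinite ∧ BddBelow Λ ∧ (∀ x, ¬AccPt x (Filter.principal Λ)) ∧
      ∃ E : ℕ → ℝ, StrictMono E ∧ range E = Λ ∧
        Tendsto (fun n => E n / (n : ℝ) ^ 2) atTop (nhds (c ^ 2 / L ^ 2)) := by
  have hc : 0 < c := hφ.trans_lt hφc
  obtain ⟨E, m, hEmono, hErange, hE⟩ := exists_strictMono_range_eq_setOf_mem_progression hcont
    hmono h0 (tendsto_atTop_of_tendsto_sq_div hmono.monotone hL hΘ) hφ hφc
  have hEtop := tendsto_atTop_of_comp_eq_progression hmono hc hE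
  rw [hΛ, ← hErange]
  exact ⟨infinite_range_of_injective hEmono.injective,
    ⟨E 0, forall_mem_range.2 fun n => hEmono.monotone n.zero_le⟩,
    not_accPt_range_of_tendsto_atTop hEtop, E, hEmono, rfl,
    tendsto_div_sq_of_comp_eq_progression hL.ne' hΘ hEtop hφ hc hE⟩

/-! ### Bounded time scales and their shifts -/

/-- A closed set `X` with least element `a` and greatest element `b`, i.e. a bounded time scale. -/
structure IsBoundedTimeScale (X : Set ℝ) (a b : ℝ) : Prop where
  isClosed : IsClosed X
  isLeast : IsLeast X a
  isGreatest : IsGreatest X b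

/-- The largest point of `X` not exceeding `y`; points below `a = min X` are sent to `a`. -/
noncomputable def tsFloor (X : Set ℝ) (a y : ℝ) : ℝ := sSup (X ∩ Iic (max y a))

/-- The smallest point of `X` not less than `y`; points above `b = max X` are sent to `b`. -/
noncomputable def tsCeil (X : Set ℝ) (b y : ℝ) : ℝ := sInf (X ∩ Ici (min y b))

/-- The density equal to `1` on `X` and, in each gap of `X`, to `2` on the left half and `0` on the
right half. It moves the mass which the forward shift measure puts at the left end of a gap into
the left half of that gap. -/
noncomputable def gapWeight (X : Set ℝ) (a b y : ℝ) : ℝ :=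
  if 2 * y < tsFloor X a y + tsCeil X b y then 2
  else if tsFloor X a y + tsCeil X b y < 2 * y then 0 else 1

theorem gapWeight_mem_Icc (X : Set ℝ) (a b y : ℝ) : gapWeight X a b y ∈ Icc (0 : ℝ) 2 := by
  unfold gapWeight
  split_ifs <;> norm_num

theorem gapWeight_of_lt_mid {X : Set ℝ} {a b y : ℝ}
    (hmid : 2 * y < tsFloor X a y + tsCeil X b y) : gapWeight X a b y = 2 := if_pos hmid

theorem gapWeight_of_mid_lt {X : Set ℝ} {a b y : ℝ}
    (hmid : tsFloor X a y + tsCeil X b y < 2 * y) : gapWeight X a b y = 0 := by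
  rw [gapWeight, if_neg hmid.not_gt, if_pos hmid]

namespace IsBoundedTimeScale

variable {X : Set ℝ} {a b : ℝ}

theorem of_bddBelow_of_bddAbove (hne : X.Nonempty) (hcl : IsClosed X) (hbb : BddBelow X)
    (hba : BddAbove X) : IsBoundedTimeScale X (sInf X) (sSup X) :=
  ⟨hcl, hcl.isLeast_csInf hne hbb, hcl.isGreatest_csSup hne hba⟩

theorem le (h : IsBoundedTimeScale X a b) : a ≤ b := h.isLeast.2 h.isGreatest.1

theorem subset_Icc (h : IsBoundedTimeScale X a b) : X ⊆ Icc a b :=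
  fun _ hs => ⟨h.isLeast.2 hs, h.isGreatest.2 hs⟩

theorem tsFloor_mem_inter (h : IsBoundedTimeScale X a b) (y : ℝ) :
    tsFloor X a y ∈ X ∩ Iic (max y a) :=
  (h.isClosed.inter isClosed_Iic).csSup_mem ⟨a, h.isLeast.1, mem_Iic.2 (le_max_right _ _)⟩
    (h.isGreatest.bddAbove.mono inter_subset_left)

theorem tsCeil_mem_inter (h : IsBoundedTimeScale X a b) (y : ℝ) :
    tsCeil X b y ∈ X ∩ Ici (min y b) :=
  (h.isClosed.inter isClosed_Ici).csInf_mem ⟨b, h.isGreatest.1, mem_Ici.2 (min_le_right _ _)⟩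
    (h.isLeast.bddBelow.mono inter_subset_left)

theorem tsFloor_mem (h : IsBoundedTimeScale X a b) (y : ℝ) : tsFloor X a y ∈ X :=
  (h.tsFloor_mem_inter y).1

theorem tsCeil_mem (h : IsBoundedTimeScale X a b) (y : ℝ) : tsCeil X b y ∈ X :=
  (h.tsCeil_mem_inter y).1

theorem tsFloor_le (h : IsBoundedTimeScale X a b) {y : ℝ} (hy : a ≤ y) : tsFloor X a y ≤ y :=
  (h.tsFloor_mem_inter y).2.trans_eq (max_eq_left hy)

theorem le_tsCeil (h : IsBoundedTimeScale X a b) {y : ℝ} (hy : y ≤ b) : y ≤ tsCeil X b y :=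
  (min_eq_left hy).ge.trans (h.tsCeil_mem_inter y).2

theorem le_tsFloor (h : IsBoundedTimeScale X a b) {s y : ℝ} (hs : s ∈ X) (hsy : s ≤ y) :
    s ≤ tsFloor X a y :=
  le_csSup (h.isGreatest.bddAbove.mono inter_subset_left) ⟨hs, hsy.trans (le_max_left _ _)⟩

theorem tsCeil_le (h : IsBoundedTimeScale X a b) {s y : ℝ} (hs : s ∈ X) (hys : y ≤ s) :
    tsCeil X b y ≤ s :=
  csInf_le (h.isLeast.bddBelow.mono inter_subset_left) ⟨hs, (min_le_left _ _).trans hys⟩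

theorem monotone_tsFloor (h : IsBoundedTimeScale X a b) : Monotone (tsFloor X a) := fun _ _ hyz =>
  csSup_le_csSup (h.isGreatest.bddAbove.mono inter_subset_left)
    ⟨a, h.isLeast.1, mem_Iic.2 (le_max_right _ _)⟩
    (inter_subset_inter_right _ (Iic_subset_Iic.2 (max_le_max_right _ hyz)))

theorem monotone_tsCeil (h : IsBoundedTimeScale X a b) : Monotone (tsCeil X b) := fun _ _ hyz =>
  csInf_le_csInf (h.isLeast.bddBelow.mono inter_subset_left)
    ⟨b, h.isGreatest.1, mem_Ici.2 (min_le_right _ _)⟩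
    (inter_subset_inter_right _ (Ici_subset_Ici.2 (min_le_min_right _ hyz)))

theorem tsFloor_eq_self (h : IsBoundedTimeScale X a b) {y : ℝ} (hy : y ∈ X) : tsFloor X a y = y :=
  le_antisymm (h.tsFloor_le (h.isLeast.2 hy)) (h.le_tsFloor hy le_rfl)

theorem tsCeil_eq_self (h : IsBoundedTimeScale X a b) {y : ℝ} (hy : y ∈ X) : tsCeil X b y = y :=
  le_antisymm (h.tsCeil_le hy le_rfl) (h.le_tsCeil (h.isGreatest.2 hy))

theorem gapWeight_of_mem (h : IsBoundedTimeScale X a b) {y : ℝ} (hy : y ∈ X) :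
    gapWeight X a b y = 1 := by
  rw [gapWeight, h.tsFloor_eq_self hy, h.tsCeil_eq_self hy, two_mul, if_neg (lt_irrefl _),
    if_neg (lt_irrefl _)]

theorem tsFloor_lt (h : IsBoundedTimeScale X a b) {y : ℝ} (hy : a ≤ y) (hyX : y ∉ X) :
    tsFloor X a y < y :=
  lt_of_le_of_ne (h.tsFloor_le hy) fun e => hyX (e ▸ h.tsFloor_mem y)

theorem lt_tsCeil (h : IsBoundedTimeScale X a b) {y : ℝ} (hy : y ≤ b) (hyX : y ∉ X) :
    y < tsCeil X b y :=
  lt_of_le_of_ne' (h.le_tsCeil hy) fun e => hyX (e ▸ h.tsCeil_mem y)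

theorem tsFloor_eq_tsCeil_eq_of_mem_Ioo (h : IsBoundedTimeScale X a b) {y z : ℝ}
    (hz : z ∈ Ioo (tsFloor X a y) (tsCeil X b y)) :
    tsFloor X a z = tsFloor X a y ∧ tsCeil X b z = tsCeil X b y := by
  have hgap : ∀ s ∈ X, s ≤ tsFloor X a y ∨ tsCeil X b y ≤ s := fun s hs =>
    (le_total s y).imp (h.le_tsFloor hs) (h.tsCeil_le hs)
  have haz : a ≤ z := (h.isLeast.2 (h.tsFloor_mem y)).trans hz.1.le
  have hzb : z ≤ b := hz.2.le.trans (h.isGreatest.2 (h.tsCeil_mem y))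
  exact ⟨le_antisymm ((hgap _ (h.tsFloor_mem z)).resolve_right
      ((h.tsFloor_le haz).trans_lt hz.2).not_ge) (h.le_tsFloor (h.tsFloor_mem y) hz.1.le),
    le_antisymm (h.tsCeil_le (h.tsCeil_mem y) hz.2.le) ((hgap _ (h.tsCeil_mem z)).resolve_left
      (hz.1.trans_le (h.le_tsCeil hzb)).not_ge)⟩

theorem ae_lt_mid_or_mid_lt (h : IsBoundedTimeScale X a b) :
    ∀ᵐ y ∂volume.restrict (Icc a b), y ∉ X →
      2 * y < tsFloor X a y + tsCeil X b y ∨ tsFloor X a y + tsCeil X b y < 2 * y := by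
  set g : ℝ → ℝ := fun y => tsFloor X a y + tsCeil X b y - 2 * y
  have hnull : ∀ᵐ y, y ∉ {y | g y = 0 ∧ ∃ d ≠ 0, HasDerivAt g d y} :=
    measure_eq_zero_iff_ae_notMem.1 <|
      (countable_setOf_eq_zero_hasDerivAt_ne_zero g).measure_zero volume
  filter_upwards [ae_restrict_of_ae hnull, ae_restrict_mem measurableSet_Icc] with y hy hyI hyX
  refine (lt_or_gt_of_ne fun hmid => hy ⟨sub_eq_zero.2 hmid.symm, -2, by norm_num, ?_⟩)
  have hderiv : HasDerivAt (fun z => tsFloor X a y + tsCeil X b y - 2 * z) (-2) y := by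
    simpa using ((hasDerivAt_id y).const_mul 2).const_sub (tsFloor X a y + tsCeil X b y)
  refine hderiv.congr_of_eventuallyEq ?_
  filter_upwards [Ioo_mem_nhds (h.tsFloor_lt hyI.1 hyX) (h.lt_tsCeil hyI.2 hyX)] with z hz
  obtain ⟨hfloor, hceil⟩ := h.tsFloor_eq_tsCeil_eq_of_mem_Ioo hz
  simp only [g, hfloor, hceil]

theorem tsSigma_mem (h : IsBoundedTimeScale X a b) (c : ℝ) : tsSigma X c ∈ X := by
  unfold tsSigma
  split_ifs with hne
  · exact h.isClosed.closure_subset_iff.2 (fun s hs => hs.1)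
      (csInf_mem_closure hne (h.isLeast.bddBelow.mono fun s hs => hs.1))
  · exact h.isGreatest.csSup_mem

theorem tsSigma_le (h : IsBoundedTimeScale X a b) {c s : ℝ} (hs : s ∈ X) (hcs : c < s) :
    tsSigma X c ≤ s := by
  rw [tsSigma, if_pos ⟨s, hs, hcs⟩]
  exact csInf_le (h.isLeast.bddBelow.mono fun s hs => hs.1) ⟨hs, hcs⟩

theorem le_tsSigma (h : IsBoundedTimeScale X a b) {c : ℝ} (hc : c ≤ b) : c ≤ tsSigma X c := by
  unfold tsSigma
  split_ifs with hne
  · exact le_csInf hne fun s hs => hs.2.le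
  · rwa [h.isGreatest.csSup_eq]

theorem exists_mem_Ioo_of_tsSigma_lt (h : IsBoundedTimeScale X a b) {c y : ℝ} (hy : y ≤ b)
    (hcy : tsSigma X c < y) : ∃ s ∈ X, s ∈ Ioo c y := by
  unfold tsSigma at hcy
  split_ifs at hcy with hne
  · obtain ⟨s, hs, hsy⟩ := exists_lt_of_csInf_lt hne hcy
    exact ⟨s, hs.1, hs.2, hsy⟩
  · rw [h.isGreatest.csSup_eq] at hcy
    exact absurd hcy hy.not_gt

theorem tsSigma_of_lt (h : IsBoundedTimeScale X a b) {t : ℝ} (ht : t < a) : tsSigma X t = a :=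
  le_antisymm (h.tsSigma_le h.isLeast.1 ht) (h.isLeast.2 (h.tsSigma_mem t))

theorem tsSigma_of_ge (h : IsBoundedTimeScale X a b) {t : ℝ} (ht : b ≤ t) : tsSigma X t = b := by
  rw [tsSigma, if_neg, h.isGreatest.csSup_eq]
  rintro ⟨s, hs, hts⟩
  exact ((h.isGreatest.2 hs).trans ht).not_gt hts

theorem tsRho_mem (h : IsBoundedTimeScale X a b) (c : ℝ) : tsRho X c ∈ X := by
  unfold tsRho
  split_ifs with hne
  · exact h.isClosed.closure_subset_iff.2 (fun s hs => hs.1)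
      (csSup_mem_closure hne (h.isGreatest.bddAbove.mono fun s hs => hs.1))
  · exact h.isLeast.csInf_mem

theorem le_tsRho (h : IsBoundedTimeScale X a b) {c s : ℝ} (hs : s ∈ X) (hsc : s < c) :
    s ≤ tsRho X c := by
  rw [tsRho, if_pos ⟨s, hs, hsc⟩]
  exact le_csSup (h.isGreatest.bddAbove.mono fun s hs => hs.1) ⟨hs, hsc⟩

theorem exists_mem_Ioo_of_lt_tsRho (h : IsBoundedTimeScale X a b) {c y : ℝ} (hy : a ≤ y)
    (hyc : y < tsRho X c) : ∃ s ∈ X, s ∈ Ioo y c := by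
  unfold tsRho at hyc
  split_ifs at hyc with hne
  · obtain ⟨s, hs, hys⟩ := exists_lt_of_lt_csSup hne hyc
    exact ⟨s, hs.1, hys, hs.2⟩
  · rw [h.isLeast.csInf_eq] at hyc
    exact absurd hyc hy.not_gt

theorem tsCeil_of_ge (h : IsBoundedTimeScale X a b) {t : ℝ} (ht : b ≤ t) : tsCeil X b t = b := by
  have hb := h.tsCeil_eq_self h.isGreatest.1
  rw [tsCeil, min_self] at hb
  rwa [tsCeil, min_eq_right ht]

theorem tsSigma_eq_tsCeil_of_notMem (h : IsBoundedTimeScale X a b) {t : ℝ} (ht : t ∉ X) :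
    tsSigma X t = tsCeil X b t := by
  rcases le_or_gt b t with hbt | htb
  · rw [h.tsSigma_of_ge hbt, h.tsCeil_of_ge hbt]
  · exact le_antisymm (h.tsSigma_le (h.tsCeil_mem t) (h.lt_tsCeil htb.le ht))
      (h.tsCeil_le (h.tsSigma_mem t) (h.le_tsSigma htb.le))

theorem tsCeil_of_lt (h : IsBoundedTimeScale X a b) {t : ℝ} (ht : t < a) : tsCeil X b t = a := by
  rw [← h.tsSigma_eq_tsCeil_of_notMem fun htX => (h.isLeast.2 htX).not_gt ht, h.tsSigma_of_lt ht]

theorem ae_tsSigma_eq_tsCeil (h : IsBoundedTimeScale X a b) :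
    ∀ᵐ t ∂volume.restrict (Icc a b), tsSigma X t = tsCeil X b t := by
  have hcount : {y | y ∈ X ∧ y < tsSigma X y}.Countable := by
    refine (countable_setOfPred_isolated_right_within (s := X)).mono ?_
    intro y hy
    refine ⟨hy.1, ?_⟩
    have hfalse : ∀ᶠ _ in nhdsWithin y (X ∩ Ioi y), False := by
      filter_upwards [self_mem_nhdsWithin, mem_nhdsWithin_of_mem_nhds (Iio_mem_nhds hy.2)]
        with z hz hzσ
      exact absurd (h.tsSigma_le hz.1 hz.2) (not_le.2 hzσ)
    exact eventually_false_iff_eq_bot.1 hfalse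
  filter_upwards [ae_restrict_of_ae
    (measure_eq_zero_iff_ae_notMem.1 (hcount.measure_zero volume)),
    ae_restrict_mem measurableSet_Icc] with t ht htI
  by_cases htX : t ∈ X
  · rw [h.tsCeil_eq_self htX]
    exact le_antisymm (not_lt.1 fun hlt => ht ⟨htX, hlt⟩) (h.le_tsSigma htI.2)
  · exact h.tsSigma_eq_tsCeil_of_notMem htX

/-! ### The gap weight averages to one -/

theorem infDist_eq_of_mem_Ioo (h : IsBoundedTimeScale X a b) {y z : ℝ}
    (hz : z ∈ Ioo (tsFloor X a y) (tsCeil X b y)) :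
    Metric.infDist z X = min (z - tsFloor X a y) (tsCeil X b y - z) := by
  obtain ⟨hfloor, hceil⟩ := h.tsFloor_eq_tsCeil_eq_of_mem_Ioo hz
  refine le_antisymm (le_min ?_ ?_) ((Metric.le_infDist ⟨a, h.isLeast.1⟩).2 fun s hs => ?_)
  · simpa [Real.dist_eq, abs_of_pos (sub_pos.2 hz.1)]
      using Metric.infDist_le_dist_of_mem (x := z) (h.tsFloor_mem y)
  · simpa [Real.dist_eq, abs_of_neg (sub_neg.2 hz.2)]
      using Metric.infDist_le_dist_of_mem (x := z) (h.tsCeil_mem y)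
  · rw [Real.dist_eq, ← hfloor, ← hceil]
    rcases le_total s z with hsz | hzs
    · exact (min_le_left _ _).trans
        ((sub_le_sub_left (h.le_tsFloor hs hsz) z).trans (le_abs_self _))
    · exact (min_le_right _ _).trans
        ((sub_le_sub_right (h.tsCeil_le hs hzs) z).trans (abs_sub_comm z s ▸ le_abs_self _))

theorem hasDerivAt_infDist_of_lt_mid (h : IsBoundedTimeScale X a b) {y : ℝ} (hay : a ≤ y)
    (hyX : y ∉ X) (hmid : 2 * y < tsFloor X a y + tsCeil X b y) :
    HasDerivAt (fun z => Metric.infDist z X) 1 y := by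
  have hfloor := h.tsFloor_lt hay hyX
  refine ((hasDerivAt_id y).sub_const (tsFloor X a y)).congr_of_eventuallyEq ?_
  filter_upwards [Ioo_mem_nhds hfloor (show y < (tsFloor X a y + tsCeil X b y) / 2 by linarith)]
    with z hz
  rw [h.infDist_eq_of_mem_Ioo (y := y) ⟨hz.1, by linarith [hz.2]⟩, id, min_eq_left]
  linarith [hz.2]

theorem hasDerivAt_infDist_of_mid_lt (h : IsBoundedTimeScale X a b) {y : ℝ} (hyb : y ≤ b)
    (hyX : y ∉ X) (hmid : tsFloor X a y + tsCeil X b y < 2 * y) :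
    HasDerivAt (fun z => Metric.infDist z X) (-1) y := by
  have hceil := h.lt_tsCeil hyb hyX
  refine ((hasDerivAt_id y).const_sub (tsCeil X b y)).congr_of_eventuallyEq ?_
  filter_upwards [Ioo_mem_nhds (show (tsFloor X a y + tsCeil X b y) / 2 < y by linarith) hceil]
    with z hz
  rw [h.infDist_eq_of_mem_Ioo (y := y) ⟨by linarith [hz.1], hz.2⟩, id, min_eq_right]
  linarith [hz.1]

theorem hasACDerivOn_infDist (h : IsBoundedTimeScale X a b) :
    HasACDerivOn (fun y => Metric.infDist y X) (fun y => gapWeight X a b y - 1) a b := by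
  have hac : AbsolutelyContinuousOnInterval (fun y => Metric.infDist y X) a b :=
    (Metric.lipschitz_infDist_pt X).lipschitzOnWith.absolutelyContinuousOnInterval
  refine HasACDerivOn.of_ae_hasDerivAt h.le hac ?_
  filter_upwards [ae_restrict_of_ae hac.ae_differentiableAt, h.ae_lt_mid_or_mid_lt,
    ae_restrict_mem measurableSet_Icc] with y hdiff hmid hyI
  by_cases hyX : y ∈ X
  · have hderiv := (hdiff (Icc_subset_uIcc hyI)).hasDerivAt
    have hmin : IsLocalMin (fun z => Metric.infDist z X) y := Eventually.of_forall fun z => by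
      simpa only [Metric.infDist_zero_of_mem hyX] using Metric.infDist_nonneg
    rwa [hmin.hasDerivAt_eq_zero hderiv, ← sub_self (1 : ℝ),
      ← congrArg (· - 1) (h.gapWeight_of_mem hyX)] at hderiv
  · rcases hmid hyX with hlt | hlt
    · convert h.hasDerivAt_infDist_of_lt_mid hyI.1 hyX hlt using 1
      rw [gapWeight_of_lt_mid hlt]; norm_num
    · convert h.hasDerivAt_infDist_of_mid_lt hyI.2 hyX hlt using 1
      rw [gapWeight_of_mid_lt hlt]; norm_num

theorem measurable_gapWeight (h : IsBoundedTimeScale X a b) : Measurable (gapWeight X a b) := by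
  have hmid := h.monotone_tsFloor.measurable.add h.monotone_tsCeil.measurable
  have htwo : Measurable fun y : ℝ => 2 * y := measurable_const_mul 2
  exact Measurable.ite (measurableSet_lt htwo hmid) measurable_const
    (Measurable.ite (measurableSet_lt hmid htwo) measurable_const measurable_const)

theorem integrableOn_gapWeight_mul (h : IsBoundedTimeScale X a b) {f : ℝ → ℝ} {s : Set ℝ}
    (hf : IntegrableOn f s) : IntegrableOn (fun y => gapWeight X a b y * f y) s :=
  hf.bdd_mul (c := 2) h.measurable_gapWeight.aestronglyMeasurable <| Eventually.of_forall fun y =>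
    abs_le.2 ⟨by linarith [(gapWeight_mem_Icc X a b y).1], (gapWeight_mem_Icc X a b y).2⟩

theorem integral_gapWeight (h : IsBoundedTimeScale X a b) {x : ℝ} (hx : x ∈ X) :
    ∫ y in Icc a x, gapWeight X a b y = x - a := by
  have hdist := h.hasACDerivOn_infDist.eq_add_integral x (h.subset_Icc hx)
  have hint : IntegrableOn (gapWeight X a b) (Icc a x) := by
    simpa using h.integrableOn_gapWeight_mul (s := Icc a x) (integrable_const (1 : ℝ))
  rw [Metric.infDist_zero_of_mem hx, Metric.infDist_zero_of_mem h.isLeast.1, zero_add,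
    intervalIntegral.integral_of_le (h.isLeast.2 hx), ← integral_Icc_eq_integral_Ioc,
    integral_sub hint (integrable_const _), setIntegral_const] at hdist
  simpa [Real.volume_real_Icc_of_le (h.isLeast.2 hx), sub_eq_zero] using hdist.symm

variable {m : ℝ → ℝ} {c ξ : ℝ}

theorem preimage_Iic_inter_Icc_ae_eq (h : IsBoundedTimeScale X a b) (hξ : ξ ∈ X)
    (hmξ : ∀ᵐ y ∂volume.restrict (Icc a b), m y ≤ c ↔ y ≤ ξ) :
    (m ⁻¹' Iic c ∩ Icc a b : Set ℝ) =ᵐ[volume] Icc a ξ := by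
  filter_upwards [(ae_restrict_iff' measurableSet_Icc).1 hmξ] with y hy
  refine propext ⟨fun hyc => ⟨hyc.2.1, (hy hyc.2).1 hyc.1⟩, fun hyξ => ?_⟩
  have hyI : y ∈ Icc a b := ⟨hyξ.1, hyξ.2.trans (h.isGreatest.2 hξ)⟩
  exact ⟨(hy hyI).2 hyξ.2, hyI⟩

theorem integral_Iic_map (h : IsBoundedTimeScale X a b) (hm : Measurable m) (hξ : ξ ∈ X)
    (hmξ : ∀ᵐ y ∂volume.restrict (Icc a b), m y ≤ c ↔ y ≤ ξ) {H : ℝ → ℝ}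
    (hH : Integrable H ((volume.restrict (Icc a b)).map m)) :
    ∫ t in Iic c, H t ∂((volume.restrict (Icc a b)).map m) = ∫ y in Icc a ξ, H (m y) := by
  rw [setIntegral_map measurableSet_Iic hH.1 hm.aemeasurable,
    Measure.restrict_restrict (hm measurableSet_Iic),
    setIntegral_congr_set (h.preimage_Iic_inter_Icc_ae_eq hξ hmξ)]

theorem map_withDensity_gapWeight (h : IsBoundedTimeScale X a b) {Ξ : ℝ → ℝ} (hm : Measurable m)
    (hΞ : ∀ c, Ξ c ∈ X) (hmΞ : ∀ c, ∀ᵐ y ∂volume.restrict (Icc a b), m y ≤ c ↔ y ≤ Ξ c) :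
    ((volume.restrict (Icc a b)).withDensity fun y => ENNReal.ofReal (gapWeight X a b y)).map m =
      (volume.restrict (Icc a b)).map m := by
  refine (Measure.ext_of_Iic _ _ fun c => ?_).symm
  have hset := h.preimage_Iic_inter_Icc_ae_eq (hΞ c) (hmΞ c)
  have hint : IntegrableOn (gapWeight X a b) (Icc a (Ξ c)) := by
    simpa using h.integrableOn_gapWeight_mul (s := Icc a (Ξ c)) (integrable_const (1 : ℝ))
  rw [Measure.map_apply hm measurableSet_Iic, Measure.map_apply hm measurableSet_Iic,
    withDensity_apply _ (hm measurableSet_Iic), Measure.restrict_apply (hm measurableSet_Iic),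
    Measure.restrict_restrict (hm measurableSet_Iic), measure_congr hset,
    setLIntegral_congr hset, Real.volume_Icc, ← ofReal_integral_eq_lintegral_ofReal hint
      (Eventually.of_forall fun y => (gapWeight_mem_Icc X a b y).1), h.integral_gapWeight (hΞ c)]

theorem integral_gapWeight_mul_comp (h : IsBoundedTimeScale X a b) {Ξ : ℝ → ℝ}
    (hm : Measurable m) (hΞ : ∀ c, Ξ c ∈ X)
    (hmΞ : ∀ c, ∀ᵐ y ∂volume.restrict (Icc a b), m y ≤ c ↔ y ≤ Ξ c) {H : ℝ → ℝ}
    (hH : Integrable H ((volume.restrict (Icc a b)).map m)) (c : ℝ) :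
    ∫ y in Icc a (Ξ c), gapWeight X a b y * H (m y) = ∫ y in Icc a (Ξ c), H (m y) := by
  rw [← h.integral_Iic_map hm (hΞ c) (hmΞ c) hH, ← h.map_withDensity_gapWeight hm hΞ hmΞ]
  rw [← h.map_withDensity_gapWeight hm hΞ hmΞ] at hH
  rw [setIntegral_map measurableSet_Iic hH.1 hm.aemeasurable,
    setIntegral_withDensity_eq_setIntegral_toReal_smul h.measurable_gapWeight.ennreal_ofReal
      (by simp) _ (hm measurableSet_Iic),
    Measure.restrict_restrict (hm measurableSet_Iic),
    setIntegral_congr_set (h.preimage_Iic_inter_Icc_ae_eq (hΞ c) (hmΞ c))]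
  simp only [ENNReal.toReal_ofReal (gapWeight_mem_Icc X a b _).1, smul_eq_mul]

end IsBoundedTimeScale

/-! ### The shift measures as push-forwards of Lebesgue measure -/

/-- The push-forward of Lebesgue measure on `[a, b]` under `tsFloor`. This is the measure `dσ`
of the forward shift. -/
noncomputable def forwardMeasure (X : Set ℝ) (a b : ℝ) : Measure ℝ :=
  (volume.restrict (Icc a b)).map (tsFloor X a)

/-- The push-forward of Lebesgue measure on `[a, b]` under `tsCeil`. This is the measure `dρ`
of the backward shift. -/
noncomputable def backwardMeasure (X : Set ℝ) (a b : ℝ) : Measure ℝ :=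
  (volume.restrict (Icc a b)).map (tsCeil X b)

/-- The density on `[a, b]` which replaces `q dσ`: the mass that `q dσ` has at the left end of a
gap is spread over the left half of that gap. The indicator discards the point `a`, because the
quasi-derivative is only integrated over sets `(c, x]` with `a ≤ c`. -/
noncomputable def gapExtend (X : Set ℝ) (a b : ℝ) (q : ℝ → ℝ) (t : ℝ) : ℝ :=
  gapWeight X a b t * (Ioi a).indicator q (tsFloor X a t)

/-- The density on `[a, b]` which replaces `1 / p̄`: in a gap, `1 / p̄` is constant, and its
integral is spread over the right half of that gap. -/
noncomputable def gapExtendInv (X : Set ℝ) (a b : ℝ) (p : ℝ → ℝ) (t : ℝ) : ℝ :=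
  (2 - gapWeight X a b t) / p (tsCeil X b t)

namespace IsBoundedTimeScale

variable {X : Set ℝ} {a b : ℝ}

theorem ae_tsFloor_le_iff (h : IsBoundedTimeScale X a b) (c : ℝ) :
    ∀ᵐ y ∂volume.restrict (Icc a b), tsFloor X a y ≤ c ↔ y ≤ tsSigma X c := by
  filter_upwards [ae_restrict_of_ae (volume.ae_ne (tsSigma X c)),
    ae_restrict_mem measurableSet_Icc] with y hne hy
  refine ⟨fun hyc => not_lt.1 fun hlt => ?_, fun hyσ => not_lt.1 fun hlt => ?_⟩
  · obtain ⟨s, hs, hcs, hsy⟩ := h.exists_mem_Ioo_of_tsSigma_lt hy.2 hlt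
    exact ((h.le_tsFloor hs hsy.le).trans hyc).not_gt hcs
  · exact hne (hyσ.antisymm ((h.tsSigma_le (h.tsFloor_mem y) hlt).trans (h.tsFloor_le hy.1)))

theorem ae_tsCeil_le_iff (h : IsBoundedTimeScale X a b) (c : ℝ) :
    ∀ᵐ y ∂volume.restrict (Icc a b), tsCeil X b y ≤ c ↔ y ≤ tsFloor X a c := by
  filter_upwards [ae_restrict_of_ae (volume.ae_ne a), ae_restrict_mem measurableSet_Icc]
    with y hne hy
  refine ⟨fun hyc => (h.le_tsCeil hy.2).trans (h.le_tsFloor (h.tsCeil_mem y) hyc), fun hyc => ?_⟩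
  rcases le_max_iff.1 (mem_Iic.1 (h.tsFloor_mem_inter c).2) with hc | hc
  · exact (h.tsCeil_le (h.tsFloor_mem c) hyc).trans hc
  · exact absurd ((hyc.trans hc).antisymm hy.1) hne

theorem ae_tsCeil_lt_iff (h : IsBoundedTimeScale X a b) (c : ℝ) :
    ∀ᵐ y ∂volume.restrict (Icc a b), tsCeil X b y < c ↔ y ≤ tsRho X c := by
  filter_upwards [ae_restrict_of_ae (volume.ae_ne (tsRho X c)),
    ae_restrict_mem measurableSet_Icc] with y hne hy
  refine ⟨fun hyc => (h.le_tsCeil hy.2).trans (h.le_tsRho (h.tsCeil_mem y) hyc), fun hyρ => ?_⟩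
  obtain ⟨s, hs, hys, hsc⟩ := h.exists_mem_Ioo_of_lt_tsRho hy.1 (lt_of_le_of_ne hyρ hne)
  exact (h.tsCeil_le hs hys.le).trans_lt hsc

theorem map_apply_of_ae_mem_iff (h : IsBoundedTimeScale X a b) {m : ℝ → ℝ} (hm : Measurable m)
    {S : Set ℝ} (hS : MeasurableSet S) {s t : ℝ} (hs : s ∈ X) (ht : t ∈ X)
    (hmS : ∀ᵐ y ∂volume.restrict (Icc a b), m y ∈ S ↔ s < y ∧ y ≤ t) :
    (volume.restrict (Icc a b)).map m S = ENNReal.ofReal (t - s) := by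
  have hset : m ⁻¹' S =ᵐ[volume.restrict (Icc a b)] Ioc s t := hmS.mono fun _ hy => propext hy
  have hsub : Ioc s t ⊆ Icc a b :=
    Ioc_subset_Icc_self.trans (Icc_subset_Icc (h.isLeast.2 hs) (h.isGreatest.2 ht))
  rw [Measure.map_apply hm hS, measure_congr hset, Measure.restrict_apply measurableSet_Ioc,
    inter_eq_left.2 hsub, Real.volume_Ioc]

theorem eq_forwardMeasure (h : IsBoundedTimeScale X a b) {μ : Measure ℝ}
    (hμ : ∀ c d : ℝ, c ≤ d → μ (Ioc c d) = ENNReal.ofReal (tsSigma X d - tsSigma X c)) :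
    μ = forwardMeasure X a b := by
  have : IsFiniteMeasure (forwardMeasure X a b) := by unfold forwardMeasure; infer_instance
  refine (Measure.ext_of_Ioc _ _ fun c d hcd => ?_).symm
  rw [hμ c d hcd.le, forwardMeasure, h.map_apply_of_ae_mem_iff h.monotone_tsFloor.measurable
    measurableSet_Ioc (h.tsSigma_mem c) (h.tsSigma_mem d)]
  filter_upwards [h.ae_tsFloor_le_iff c, h.ae_tsFloor_le_iff d] with y hc hd
  rw [mem_Ioc, ← not_le, hc, hd, not_le]

theorem eq_backwardMeasure (h : IsBoundedTimeScale X a b) {ν : Measure ℝ}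
    (hν : ∀ c d : ℝ, c ≤ d → ν (Ico c d) = ENNReal.ofReal (tsRho X d - tsRho X c)) :
    ν = backwardMeasure X a b := by
  have : IsFiniteMeasure (backwardMeasure X a b) := by unfold backwardMeasure; infer_instance
  refine (Measure.ext_of_Ico _ _ fun c d hcd => ?_).symm
  rw [hν c d hcd.le, backwardMeasure, h.map_apply_of_ae_mem_iff h.monotone_tsCeil.measurable
    measurableSet_Ico (h.tsRho_mem c) (h.tsRho_mem d)]
  filter_upwards [h.ae_tsCeil_lt_iff c, h.ae_tsCeil_lt_iff d] with y hc hd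
  rw [mem_Ico, ← not_lt, hc, hd, not_le]

theorem ae_forwardMeasure_mem (h : IsBoundedTimeScale X a b) :
    ∀ᵐ t ∂forwardMeasure X a b, t ∈ X :=
  (ae_map_iff (p := (· ∈ X)) h.monotone_tsFloor.measurable.aemeasurable
    h.isClosed.measurableSet).2 (Eventually.of_forall h.tsFloor_mem)

theorem ae_backwardMeasure_mem (h : IsBoundedTimeScale X a b) :
    ∀ᵐ t ∂backwardMeasure X a b, t ∈ X :=
  (ae_map_iff (p := (· ∈ X)) h.monotone_tsCeil.measurable.aemeasurable
    h.isClosed.measurableSet).2 (Eventually.of_forall h.tsCeil_mem)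

theorem isCompact (h : IsBoundedTimeScale X a b) : IsCompact X :=
  isCompact_Icc.of_isClosed_subset h.isClosed h.subset_Icc

theorem integrable_continuousOn_mul (h : IsBoundedTimeScale X a b) {f g : ℝ → ℝ} {μ : Measure ℝ}
    (hμ : ∀ᵐ t ∂μ, t ∈ X) (hf : ContinuousOn f (uIcc a b)) (hg : Integrable g μ) :
    Integrable (fun t => f t * g t) μ := by
  have hfX : ContinuousOn f X := hf.mono fun t ht => Icc_subset_uIcc (h.subset_Icc ht)
  rw [← Measure.restrict_eq_self_of_ae_mem hμ] at hg ⊢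
  exact IntegrableOn.continuousOn_mul hfX hg h.isCompact

/-! ### Extension of the coefficients to the gaps -/

theorem intervalIntegrable_gapExtend (h : IsBoundedTimeScale X a b) {q : ℝ → ℝ}
    (hq : Integrable q (forwardMeasure X a b)) :
    IntervalIntegrable (gapExtend X a b q) volume a b := by
  have hind := hq.indicator (measurableSet_Ioi (a := a))
  exact (intervalIntegrable_iff_integrableOn_Icc_of_le h.le).2 <| h.integrableOn_gapWeight_mul <|
    (integrable_map_measure hind.1 h.monotone_tsFloor.measurable.aemeasurable).1 hind

theorem integrableOn_comp_tsCeil (h : IsBoundedTimeScale X a b) {H : ℝ → ℝ}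
    (hH : Integrable H (backwardMeasure X a b)) :
    IntegrableOn (fun t => H (tsCeil X b t)) (Icc a b) :=
  (integrable_map_measure hH.1 h.monotone_tsCeil.measurable.aemeasurable).1 hH

theorem intervalIntegrable_gapExtendInv (h : IsBoundedTimeScale X a b) {p : ℝ → ℝ}
    (hp : Integrable (fun t => 1 / p t) (backwardMeasure X a b)) :
    IntervalIntegrable (gapExtendInv X a b p) volume a b := by
  have hceil := h.integrableOn_comp_tsCeil hp
  refine (intervalIntegrable_iff_integrableOn_Icc_of_le h.le).2 <|
    ((hceil.const_mul 2).sub (h.integrableOn_gapWeight_mul hceil)).congr <|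
    Eventually.of_forall fun t => ?_
  simp only [Pi.sub_apply, gapExtendInv]
  ring

theorem setIntegral_Ioc_forwardMeasure (h : IsBoundedTimeScale X a b) {k : ℝ → ℝ}
    (hk : Integrable k (forwardMeasure X a b)) (x : ℝ) :
    ∫ t in Ioc a x, k t ∂forwardMeasure X a b = ∫ t in a..tsSigma X x, gapExtend X a b k t := by
  have hind := hk.indicator (measurableSet_Ioi (a := a))
  have hm := h.monotone_tsFloor.measurable
  rw [← Ioi_inter_Iic, inter_comm, ← setIntegral_indicator measurableSet_Ioi, forwardMeasure,
    h.integral_Iic_map hm (h.tsSigma_mem x) (h.ae_tsFloor_le_iff x) hind,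
    ← h.integral_gapWeight_mul_comp hm h.tsSigma_mem h.ae_tsFloor_le_iff hind x,
    integral_Icc_eq_integral_Ioc, ← intervalIntegral.integral_of_le]
  · rfl
  · exact h.isLeast.2 (h.tsSigma_mem x)

theorem ae_gapWeight_mul_comp_tsFloor (h : IsBoundedTimeScale X a b) {y g : ℝ → ℝ}
    (hy : HasACDerivOn y (fun t => (2 - gapWeight X a b t) * g t) a b) :
    ∀ᵐ t ∂volume.restrict (Icc a b),
      gapWeight X a b t * y (tsFloor X a t) = gapWeight X a b t * y t := by
  filter_upwards [h.ae_lt_mid_or_mid_lt, ae_restrict_mem measurableSet_Icc] with t hmid ht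
  by_cases htX : t ∈ X
  · rw [h.tsFloor_eq_self htX]
  rcases hmid htX with hlt | hlt
  · congr 1
    refine (hy.eq_of_eqOn_zero (h.subset_Icc (h.tsFloor_mem t)) ht (h.tsFloor_le ht.1)
      fun z hz => ?_).symm
    obtain ⟨hfloor, hceil⟩ := h.tsFloor_eq_tsCeil_eq_of_mem_Ioo
      ⟨hz.1, hz.2.trans (h.lt_tsCeil ht.2 htX)⟩
    simp [gapWeight_of_lt_mid (y := z) (by rw [hfloor, hceil]; linarith [hz.2])]
  · rw [gapWeight_of_mid_lt hlt, zero_mul, zero_mul]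

theorem ae_gapWeight_mul_comp_tsCeil (h : IsBoundedTimeScale X a b) {y g : ℝ → ℝ}
    (hy : HasACDerivOn y (fun t => gapWeight X a b t * g t) a b) :
    ∀ᵐ t ∂volume.restrict (Icc a b),
      (2 - gapWeight X a b t) * y (tsCeil X b t) = (2 - gapWeight X a b t) * y t := by
  filter_upwards [h.ae_lt_mid_or_mid_lt, ae_restrict_mem measurableSet_Icc] with t hmid ht
  by_cases htX : t ∈ X
  · rw [h.tsCeil_eq_self htX]
  rcases hmid htX with hlt | hlt
  · rw [gapWeight_of_lt_mid hlt, sub_self, zero_mul, zero_mul]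
  · congr 1
    refine hy.eq_of_eqOn_zero ht (h.subset_Icc (h.tsCeil_mem t)) (h.le_tsCeil ht.2) fun z hz => ?_
    obtain ⟨hfloor, hceil⟩ := h.tsFloor_eq_tsCeil_eq_of_mem_Ioo
      ⟨(h.tsFloor_lt ht.1 htX).trans hz.1, hz.2⟩
    simp [gapWeight_of_mid_lt (y := z) (by rw [hfloor, hceil]; linarith [hz.1])]

variable {p y y₁ k : ℝ → ℝ}

theorem ae_comp_tsSigma_div (h : IsBoundedTimeScale X a b) (y₁ p : ℝ → ℝ) :
    (fun t => y₁ (tsSigma X t) / p (tsCeil X b t)) =ᵐ[volume.restrict (Icc a b)]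
      fun t => y₁ (tsCeil X b t) * (1 / p (tsCeil X b t)) := by
  filter_upwards [h.ae_tsSigma_eq_tsCeil] with t ht
  rw [ht, mul_one_div]

theorem integrableOn_comp_tsSigma_div (h : IsBoundedTimeScale X a b)
    (hy₁ : ContinuousOn y₁ (uIcc a b))
    (hp : Integrable (fun t => 1 / p t) (backwardMeasure X a b)) :
    IntegrableOn (fun t => y₁ (tsSigma X t) / p (tsCeil X b t)) (Icc a b) :=
  (h.integrableOn_comp_tsCeil <| h.integrable_continuousOn_mul h.ae_backwardMeasure_mem hy₁
    hp).congr (h.ae_comp_tsSigma_div y₁ p).symm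

theorem integral_comp_tsSigma_div (h : IsBoundedTimeScale X a b)
    (hy₁ : HasACDerivOn y₁ (fun t => gapWeight X a b t * k t) a b)
    (hp : Integrable (fun t => 1 / p t) (backwardMeasure X a b)) {x : ℝ} (hx : x ∈ X) :
    ∫ t in a..x, y₁ (tsSigma X t) / p (tsCeil X b t) =
      ∫ t in a..x, gapExtendInv X a b p t * y₁ t := by
  have hH := h.integrable_continuousOn_mul h.ae_backwardMeasure_mem hy₁.continuousOn hp
  have hsub : Icc a x ⊆ Icc a b := Icc_subset_Icc_right (h.isGreatest.2 hx)
  have hint := (h.integrableOn_comp_tsCeil hH).mono_set hsub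
  have hweight := h.integral_gapWeight_mul_comp h.monotone_tsCeil.measurable h.tsFloor_mem
    h.ae_tsCeil_le_iff hH x
  rw [h.tsFloor_eq_self hx] at hweight
  have hext : (fun t => gapExtendInv X a b p t * y₁ t) =ᵐ[volume.restrict (Icc a b)] fun t =>
      2 * (y₁ (tsCeil X b t) * (1 / p (tsCeil X b t))) -
        gapWeight X a b t * (y₁ (tsCeil X b t) * (1 / p (tsCeil X b t))) := by
    filter_upwards [h.ae_gapWeight_mul_comp_tsCeil hy₁] with t ht
    rw [gapExtendInv, div_mul_eq_mul_div, ← ht]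
    ring
  rw [intervalIntegral.integral_of_le (h.isLeast.2 hx),
    intervalIntegral.integral_of_le (h.isLeast.2 hx), ← integral_Icc_eq_integral_Ioc,
    ← integral_Icc_eq_integral_Ioc,
    integral_congr_ae (ae_restrict_of_ae_restrict_of_subset hsub (h.ae_comp_tsSigma_div y₁ p)),
    integral_congr_ae (ae_restrict_of_ae_restrict_of_subset hsub hext),
    integral_sub (hint.const_mul 2) (h.integrableOn_gapWeight_mul hint), hweight,
    integral_const_mul]
  ring

theorem ae_gapExtend_mul (h : IsBoundedTimeScale X a b)
    (hy : HasACDerivOn y (fun t => gapExtendInv X a b p t * y₁ t) a b) (q : ℝ → ℝ) :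
    gapExtend X a b (fun t => q t * y t) =ᵐ[volume.restrict (Icc a b)]
      fun t => gapExtend X a b q t * y t := by
  have hy' : HasACDerivOn y
      (fun t => (2 - gapWeight X a b t) * (y₁ t / p (tsCeil X b t))) a b :=
    hy.congr_ae <| Eventually.of_forall fun t => by simp only [gapExtendInv]; ring
  filter_upwards [h.ae_gapWeight_mul_comp_tsFloor hy'] with t ht
  simp only [gapExtend, indicator_apply]
  split_ifs
  · linear_combination q (tsFloor X a t) * ht
  · ring

end IsBoundedTimeScale

/-! ### Sturm–Liouville systems -/

/-- The Sturm–Liouville system `y' = P y₁`, `y₁' = -W y` on `[a, b]`, where `y₁` is the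
quasi-derivative of `y`. -/
structure IsSLSolution (P W y y₁ : ℝ → ℝ) (a b : ℝ) : Prop where
  hasACDerivOn : HasACDerivOn y (fun t => P t * y₁ t) a b
  hasACDerivOn_quasi : HasACDerivOn y₁ (fun t => -(W t * y t)) a b

namespace IsSLSolution

variable {P W y y₁ z z₁ v v₁ θ : ℝ → ℝ} {a b : ℝ}

theorem exists_of_pruferAngle (hP : IntervalIntegrable P volume a b)
    (hW : IntervalIntegrable W volume a b)
    (hθ : HasACDerivOn θ (fun s => pruferField P W s (θ s)) a b) :
    ∃ ρ : ℝ → ℝ, ρ a = 1 ∧ (∀ x, 0 < ρ x) ∧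
      IsSLSolution P W (fun t => ρ t * Real.sin (θ t)) (fun t => ρ t * Real.cos (θ t)) a b := by
  have hlog : IntervalIntegrable
      (fun s => (P s - W s) * (Real.sin (θ s) * Real.cos (θ s))) volume a b :=
    (hP.sub hW).mul_continuousOn ((Real.continuous_sin.comp_continuousOn hθ.continuousOn).mul
      (Real.continuous_cos.comp_continuousOn hθ.continuousOn))
  obtain ⟨J, hJa, hJ⟩ : ∃ J : ℝ → ℝ, J a = 0 ∧ HasACDerivOn J
      (fun s => (P s - W s) * (Real.sin (θ s) * Real.cos (θ s))) a b :=
    ⟨_, by simp, .of_intervalIntegrable hθ.le hlog 0⟩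
  refine ⟨fun x => Real.exp (J x), by simp [hJa], fun x => Real.exp_pos _, ?_, ?_⟩
  · refine hJ.comp₂ hθ (F := fun z => Real.exp z.1 * Real.sin z.2) (by fun_prop)
      fun x hJx hθx => ?_
    convert! hJx.exp.mul hθx.sin using 1
    linear_combination (norm := (simp only [pruferField]; ring))
      -(P x * Real.exp (J x) * Real.cos (θ x)) * Real.sin_sq_add_cos_sq (θ x)
  · refine hJ.comp₂ hθ (F := fun z => Real.exp z.1 * Real.cos z.2) (by fun_prop)
      fun x hJx hθx => ?_
    convert! hJx.exp.mul hθx.cos using 1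
    linear_combination (norm := (simp only [pruferField]; ring))
      W x * Real.exp (J x) * Real.sin (θ x) * Real.sin_sq_add_cos_sq (θ x)

theorem wronskian_eq (hy : IsSLSolution P W y y₁ a b) (hv : IsSLSolution P W v v₁ a b) {x : ℝ}
    (hx : x ∈ Icc a b) : y x * v₁ x - y₁ x * v x = y a * v₁ a - y₁ a * v a := by
  have hwr := (hy.hasACDerivOn.mul hv.hasACDerivOn_quasi).sub
    (hy.hasACDerivOn_quasi.mul hv.hasACDerivOn)
  exact hwr.eq_of_eqOn_zero (left_mem_Icc.2 hwr.le) hx hx.1 fun t _ => by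
    simp only [Pi.zero_apply]
    ring

theorem eq_const_mul_of_wronskian_eq_zero (hy : IsSLSolution P W y y₁ a b)
    (hv : IsSLSolution P W v v₁ a b) (hz : IsSLSolution P W z z₁ a b)
    (hvz : v a * z₁ a - v₁ a * z a ≠ 0) (hyv : y a * v₁ a - y₁ a * v a = 0) :
    ∃ κ : ℝ, ∀ x ∈ Icc a b, y x = κ * v x ∧ y₁ x = κ * v₁ x := by
  refine ⟨(y a * z₁ a - y₁ a * z a) / (v a * z₁ a - v₁ a * z a), fun x hx => ?_⟩
  have hvz' := hv.wronskian_eq hz hx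
  have hyz' := hy.wronskian_eq hz hx
  have hyv' := (hy.wronskian_eq hv hx).trans hyv
  rw [← hyz', ← hvz', div_mul_eq_mul_div, div_mul_eq_mul_div, eq_div_iff (hvz'.trans_ne hvz),
    eq_div_iff (hvz'.trans_ne hvz)]
  constructor
  · linear_combination -z x * hyv'
  · linear_combination -z₁ x * hyv'

theorem eq_const_mul_of_pruferAngle (hP : IntervalIntegrable P volume a b)
    (hW : IntervalIntegrable W volume a b) {ρ : ℝ → ℝ} (hρ : ρ a = 1)
    (hv : IsSLSolution P W (fun t => ρ t * Real.sin (θ t)) (fun t => ρ t * Real.cos (θ t)) a b)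
    (hy : IsSLSolution P W y y₁ a b)
    (hbc : y a * Real.cos (θ a) - y₁ a * Real.sin (θ a) = 0) :
    ∃ κ : ℝ, ∀ x ∈ Icc a b, y x = κ * (ρ x * Real.sin (θ x)) ∧
      y₁ x = κ * (ρ x * Real.cos (θ x)) := by
  obtain ⟨ϑ, hϑa, hϑ⟩ :=
    exists_hasACDerivOn_pruferField hv.hasACDerivOn.le hP hW (θ a + Real.pi / 2)
  obtain ⟨ρ', hρ', -, hz⟩ := exists_of_pruferAngle hP hW hϑ
  refine hy.eq_const_mul_of_wronskian_eq_zero hv hz ?_ (by simpa [hρ] using hbc)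
  have hwr : -(Real.sin (θ a) * Real.sin (θ a)) - Real.cos (θ a) * Real.cos (θ a) = -1 := by
    linear_combination -Real.sin_sq_add_cos_sq (θ a)
  simp [hρ, hρ', hϑa, Real.sin_add_pi_div_two, Real.cos_add_pi_div_two, hwr]

end IsSLSolution

/-! ### Transfer between the time scale and the interval -/

theorem gapExtend_const_mul_sub (X : Set ℝ) (a b E : ℝ) (r q : ℝ → ℝ) :
    gapExtend X a b (fun t => E * r t - q t) =
      fun t => E * gapExtend X a b r t - gapExtend X a b q t := by
  ext t
  simp only [gapExtend, indicator_apply]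
  split_ifs <;> ring

namespace IsBoundedTimeScale

variable {X : Set ℝ} {a b : ℝ} {p w k u u₁ v v₁ : ℝ → ℝ}

theorem exists_hasACDerivOn_gapExtend (h : IsBoundedTimeScale X a b)
    (hk : Integrable k (forwardMeasure X a b))
    (hu₁ : ∀ x, a ≤ x → u₁ x = u₁ a + ∫ t in Ioc a x, k t ∂forwardMeasure X a b) :
    ∃ y₁ : ℝ → ℝ, HasACDerivOn y₁ (gapExtend X a b k) a b ∧ y₁ a = u₁ a ∧
      ∀ x, a ≤ x → y₁ (tsSigma X x) = u₁ x := by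
  refine ⟨fun x => u₁ a + ∫ t in a..x, gapExtend X a b k t,
    .of_intervalIntegrable h.le (h.intervalIntegrable_gapExtend hk) _, by simp, fun x hx => ?_⟩
  rw [hu₁ x hx, h.setIntegral_Ioc_forwardMeasure hk]

theorem exists_isSLSolution (h : IsBoundedTimeScale X a b)
    (hp : Integrable (fun t => 1 / p t) (backwardMeasure X a b))
    (hk : Integrable k (forwardMeasure X a b))
    (hkw : ∀ᵐ t ∂forwardMeasure X a b, k t = -(w t * u t))
    (hu : ∀ x ∈ Icc a b, u x = u a + ∫ t in a..x, u₁ t / p (tsCeil X b t))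
    (hu₁ : ∀ x, a ≤ x → u₁ x = u₁ a + ∫ t in Ioc a x, k t ∂forwardMeasure X a b) :
    ∃ y y₁ : ℝ → ℝ, IsSLSolution (gapExtendInv X a b p) (gapExtend X a b w) y y₁ a b ∧
      EqOn y u X ∧ y₁ a = u₁ a ∧ y₁ b = u₁ b := by
  obtain ⟨y₁, hy₁, hy₁a, hy₁u⟩ := h.exists_hasACDerivOn_gapExtend hk hu₁
  obtain ⟨y, hya, hy⟩ : ∃ y : ℝ → ℝ, y a = u a ∧
      HasACDerivOn y (fun t => gapExtendInv X a b p t * y₁ t) a b :=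
    ⟨_, by simp, .of_intervalIntegrable h.le
      ((h.intervalIntegrable_gapExtendInv hp).mul_continuousOn hy₁.continuousOn) (u a)⟩
  have hyu : EqOn y u X := by
    intro x hx
    have hxI := h.subset_Icc hx
    rw [hy.eq_add_integral x hxI, hya, hu x hxI, ← h.integral_comp_tsSigma_div hy₁ hp hx]
    congr 1
    refine intervalIntegral.integral_congr fun t ht => ?_
    rw [uIcc_of_le hxI.1] at ht
    rw [hy₁u t ht.1]
  refine ⟨y, y₁, ⟨hy, hy₁.congr_ae ?_⟩, hyu, hy₁a, ?_⟩
  · have hk' : ∀ᵐ t ∂volume.restrict (Icc a b),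
        k (tsFloor X a t) = -(w (tsFloor X a t) * u (tsFloor X a t)) :=
      ae_of_ae_map h.monotone_tsFloor.measurable.aemeasurable hkw
    filter_upwards [hk', h.ae_gapExtend_mul hy w] with t hkt hwt
    rw [← hwt]
    simp only [gapExtend, indicator_apply, hkt]
    split_ifs
    · rw [hyu (h.tsFloor_mem t), mul_neg]
    · rw [mul_zero, neg_zero]
  · rw [← hy₁u b h.le, h.tsSigma_of_ge le_rfl]

theorem integrable_mul_of_isSLSolution (h : IsBoundedTimeScale X a b)
    (hw : Integrable w (forwardMeasure X a b))
    {P W : ℝ → ℝ} (hv : IsSLSolution P W v v₁ a b) :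
    Integrable (fun t => -(w t * v t)) (forwardMeasure X a b) := by
  simpa only [mul_comm] using! (h.integrable_continuousOn_mul h.ae_forwardMeasure_mem
    hv.hasACDerivOn.continuousOn hw).neg

theorem hasACDerivOn_gapExtend_of_isSLSolution (h : IsBoundedTimeScale X a b)
    (hv : IsSLSolution (gapExtendInv X a b p) (gapExtend X a b w) v v₁ a b) :
    HasACDerivOn v₁ (gapExtend X a b fun t => -(w t * v t)) a b := by
  refine hv.hasACDerivOn_quasi.congr_ae ?_
  filter_upwards [h.ae_gapExtend_mul hv.hasACDerivOn w] with t ht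
  rw [← ht]
  simp only [gapExtend, indicator_apply]
  split_ifs
  · rw [mul_neg]
  · rw [mul_zero, neg_zero]

theorem comp_tsSigma_eq_of_isSLSolution (h : IsBoundedTimeScale X a b)
    (hw : Integrable w (forwardMeasure X a b))
    (hv : IsSLSolution (gapExtendInv X a b p) (gapExtend X a b w) v v₁ a b) (x : ℝ) :
    v₁ (tsSigma X x) = v₁ a + ∫ t in Ioc a x, -(w t * v t) ∂forwardMeasure X a b := by
  rw [h.setIntegral_Ioc_forwardMeasure (h.integrable_mul_of_isSLSolution hw hv)]
  exact (h.hasACDerivOn_gapExtend_of_isSLSolution hv).eq_add_integral _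
    (h.subset_Icc (h.tsSigma_mem x))

theorem eqOn_of_isSLSolution (h : IsBoundedTimeScale X a b)
    (hp : Integrable (fun t => 1 / p t) (backwardMeasure X a b))
    (hv : IsSLSolution (gapExtendInv X a b p) (gapExtend X a b w) v v₁ a b) :
    EqOn (fun x => v a + ∫ t in a..x, v₁ (tsSigma X t) / p (tsCeil X b t)) v X := by
  intro x hx
  beta_reduce
  rw [h.integral_comp_tsSigma_div (h.hasACDerivOn_gapExtend_of_isSLSolution hv) hp hx,
    ← hv.hasACDerivOn.eq_add_integral x (h.subset_Icc hx)]

end IsBoundedTimeScale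

/-! ### The time scale with its left endpoint removed -/

namespace IsBoundedTimeScale

variable {T X : Set ℝ} {a b : ℝ}

theorem tsKappa_eq (h : IsBoundedTimeScale T a b) : tsKappa T = T ∩ Ici (tsSigma T a) := by
  rw [tsKappa, h.isLeast.csInf_eq]
  split_ifs with hlt
  · ext s
    refine ⟨fun hs => ⟨hs.1, h.tsSigma_le hs.1 (lt_of_le_of_ne' (h.isLeast.2 hs.1) hs.2)⟩,
      fun hs => ⟨hs.1, fun hsa => ?_⟩⟩
    exact (hlt.2.trans_le (mem_Ici.1 hs.2)).ne' (mem_singleton_iff.1 hsa)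
  · have hσ : tsSigma T a ≤ a := not_lt.1 fun hlt' => hlt ⟨h.isLeast.bddBelow, hlt'⟩
    exact (inter_eq_left.2 fun s hs => hσ.trans (h.isLeast.2 hs)).symm

theorem isBoundedTimeScale_tsKappa (h : IsBoundedTimeScale T a b) :
    IsBoundedTimeScale (tsKappa T) (tsSigma T a) b := by
  have hσ := h.tsSigma_mem a
  rw [h.tsKappa_eq]
  exact ⟨h.isClosed.inter isClosed_Ici, ⟨⟨hσ, self_mem_Ici⟩, fun s hs => hs.2⟩,
    ⟨⟨h.isGreatest.1, h.isGreatest.2 hσ⟩, fun s hs => h.isGreatest.2 hs.1⟩⟩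

theorem tsCeil_tsKappa (h : IsBoundedTimeScale T a b) {y : ℝ} (hy : y ∈ Icc (tsSigma T a) b) :
    tsCeil (tsKappa T) b y = tsCeil T b y := by
  rw [tsCeil, tsCeil, min_eq_left hy.2, h.tsKappa_eq, inter_assoc, Ici_inter_Ici, max_eq_right hy.1]

theorem backwardMeasure_tsKappa_le (h : IsBoundedTimeScale T a b) :
    backwardMeasure (tsKappa T) (tsSigma T a) b ≤ backwardMeasure T a b := by
  have hσ := h.le_tsSigma h.le
  rw [backwardMeasure, Measure.map_congr (g := tsCeil T b)]
  · exact Measure.map_mono (Measure.restrict_mono_set _ (Icc_subset_Icc_left hσ))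
      h.monotone_tsCeil.measurable
  · filter_upwards [ae_restrict_mem measurableSet_Icc] with y hy using h.tsCeil_tsKappa hy

theorem setIntegral_tsKappa (h : IsBoundedTimeScale T a b) (g : ℝ → ℝ) :
    ∫ t in tsKappa T, g t = ∫ t in T, g t := by
  refine setIntegral_congr_set ?_
  filter_upwards [volume.ae_ne a] with t ht
  rw [h.tsKappa_eq]
  exact propext ⟨fun hs => hs.1, fun hs =>
    ⟨hs, h.tsSigma_le hs (lt_of_le_of_ne' (h.isLeast.2 hs) ht)⟩⟩

/-! ### Positivity of the extended coefficients -/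

theorem gapExtend_nonneg (h : IsBoundedTimeScale X a b) {r : ℝ → ℝ}
    (hr : 0 ≤ᵐ[forwardMeasure X a b] r) : 0 ≤ᵐ[volume.restrict (Icc a b)] gapExtend X a b r := by
  filter_upwards [ae_of_ae_map h.monotone_tsFloor.measurable.aemeasurable hr] with t ht
  exact mul_nonneg (gapWeight_mem_Icc X a b t).1 (indicator_apply_nonneg fun _ => ht)

theorem gapExtendInv_nonneg (h : IsBoundedTimeScale X a b) {p : ℝ → ℝ}
    (hp : 0 ≤ᵐ[backwardMeasure X a b] p) :
    0 ≤ᵐ[volume.restrict (Icc a b)] gapExtendInv X a b p := by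
  filter_upwards [ae_of_ae_map h.monotone_tsCeil.measurable.aemeasurable hp] with t ht
  exact div_nonneg (sub_nonneg.2 (gapWeight_mem_Icc X a b t).2) ht

theorem ae_gapExtendInv_mul_gapExtend (h : IsBoundedTimeScale X a b) (p r : ℝ → ℝ) :
    (fun t => gapExtendInv X a b p t * gapExtend X a b r t) =ᵐ[volume.restrict (Icc a b)]
      X.indicator fun t => r t / p t := by
  filter_upwards [h.ae_lt_mid_or_mid_lt, ae_restrict_of_ae (volume.ae_ne a),
    ae_restrict_mem measurableSet_Icc] with t hmid hta ht
  by_cases htX : t ∈ X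
  · have hat : t ∈ Ioi a := lt_of_le_of_ne' ht.1 hta
    rw [indicator_of_mem htX, gapExtendInv, gapExtend, h.gapWeight_of_mem htX,
      h.tsFloor_eq_self htX, h.tsCeil_eq_self htX, indicator_of_mem hat]
    ring
  · rw [indicator_of_notMem htX]
    rcases hmid htX with hlt | hlt
    · simp [gapExtendInv, gapWeight_of_lt_mid hlt]
    · simp [gapExtend, gapWeight_of_mid_lt hlt]

theorem integral_sqrt_gapExtendInv_mul_gapExtend (h : IsBoundedTimeScale X a b) (p r : ℝ → ℝ) :
    ∫ t in a..b, √(gapExtendInv X a b p t * gapExtend X a b r t) = ∫ t in X, √(r t / p t) := by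
  have hsqrt : (fun t => √(gapExtendInv X a b p t * gapExtend X a b r t))
      =ᵐ[volume.restrict (Icc a b)] X.indicator fun t => √(r t / p t) := by
    filter_upwards [h.ae_gapExtendInv_mul_gapExtend p r] with t ht
    rw [ht]
    exact congrFun (indicator_comp_of_zero Real.sqrt_zero).symm t
  rw [intervalIntegral.integral_of_le h.le, ← integral_Icc_eq_integral_Ioc,
    integral_congr_ae hsqrt, setIntegral_indicator h.isClosed.measurableSet,
    inter_eq_right.2 h.subset_Icc]

end IsBoundedTimeScale

theorem not_mul_ae_eq_zero_of_integral_sqrt_pos {P R : ℝ → ℝ} {a b : ℝ}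
    (hab : a ≤ b) (hL : 0 < ∫ t in a..b, √(P t * R t)) :
    ¬(fun t => P t * R t) =ᵐ[volume.restrict (Icc a b)] 0 := fun hPR => by
  rw [intervalIntegral.integral_of_le hab, ← integral_Icc_eq_integral_Ioc,
    integral_eq_zero_of_ae (hPR.mono fun t ht => by simp [ht])] at hL
  exact hL.false

/-! ### Pairs with real density -/

theorem intervalIntegrable_of_integrableOn_Icc_of_const {f : ℝ → ℝ} {a b l r : ℝ}
    (hf : IntegrableOn f (Icc a b)) (hl : ∀ t < a, f t = l) (hr : ∀ t, b < t → f t = r)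
    (c d : ℝ) : IntervalIntegrable f volume c d := by
  have hconst : ∀ {s : Set ℝ} (e : ℝ), MeasurableSet s → (∀ t ∈ s, f t = e) →
      IntegrableOn f (uIoc c d ∩ s) := fun {s} e hs he =>
    (integrableOn_const (C := e) ((measure_mono inter_subset_left).trans_lt
      (by simp [uIoc])).ne).congr_fun (fun t ht => (he t ht.2).symm) (measurableSet_uIoc.inter hs)
  refine intervalIntegrable_iff.2 ((((hconst l measurableSet_Iio hl).union hf).union
    (hconst r measurableSet_Ioi hr)).mono_set fun t ht => ?_)
  rcases lt_or_ge t a with hta | hta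
  · exact Or.inl (Or.inl ⟨ht, hta⟩)
  · exact (le_or_gt t b).imp (fun htb => Or.inr ⟨hta, htb⟩) fun htb => ⟨ht, htb⟩

namespace IsBoundedTimeScale

variable {T X : Set ℝ} {a b : ℝ} {p w k v v₁ : ℝ → ℝ}

theorem setIntegral_Iic_forwardMeasure_of_lt (h : IsBoundedTimeScale X a b) (k : ℝ → ℝ) {t : ℝ}
    (ht : t < a) : ∫ s in Iic t, k s ∂forwardMeasure X a b = 0 :=
  setIntegral_measure_zero _ <| measure_eq_zero_iff_ae_notMem.2 <|
    h.ae_forwardMeasure_mem.mono fun _ hs hst => ((h.isLeast.2 hs).trans hst).not_gt ht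

theorem setIntegral_Iic_forwardMeasure_of_ge (h : IsBoundedTimeScale X a b) (k : ℝ → ℝ) {t : ℝ}
    (ht : b ≤ t) : ∫ s in Iic t, k s ∂forwardMeasure X a b = ∫ s, k s ∂forwardMeasure X a b := by
  rw [Measure.restrict_eq_self_of_ae_mem (s := Iic t)
    (h.ae_forwardMeasure_mem.mono fun s hs => (h.isGreatest.2 hs).trans ht)]

theorem extK_cR (h : IsBoundedTimeScale (tsKappa T) a b) (p : ℝ → ℝ) (t : ℝ) :
    extK T (cR p) t = ((p (tsCeil (tsKappa T) b t) : ℝ) : ℂ) := by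
  unfold extK cR
  split_ifs with ht
  · rw [h.tsCeil_eq_self ht]
  · rw [h.tsSigma_eq_tsCeil_of_notMem ht]

theorem isPair_ofReal (h : IsBoundedTimeScale (tsKappa T) a b)
    (hk : Integrable k (forwardMeasure (tsKappa T) a b)) {u₁ : ℝ → ℝ} {c₀ : ℝ}
    (hu₁ : ∀ x, u₁ x = c₀ + ∫ t in Iic x, k t ∂forwardMeasure (tsKappa T) a b)
    (hint : IntegrableOn (fun t => u₁ t / p (tsCeil (tsKappa T) b t)) (Icc a b)) (d₀ : ℝ) :
    IsPair T (forwardMeasure (tsKappa T) a b) (cR p)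
      (fun x => ((d₀ + ∫ t in a..x, u₁ t / p (tsCeil (tsKappa T) b t) : ℝ) : ℂ))
      (fun x => (u₁ x : ℂ)) (fun x => (k x : ℂ)) := by
  have hint' := intervalIntegrable_of_integrableOn_Icc_of_const (l := c₀ / p a)
    (r := (c₀ + ∫ t, k t ∂forwardMeasure (tsKappa T) a b) / p b) hint
    (fun t ht => by
      rw [hu₁, h.setIntegral_Iic_forwardMeasure_of_lt k ht, h.tsCeil_of_lt ht, add_zero])
    (fun t ht => by
      rw [hu₁, h.setIntegral_Iic_forwardMeasure_of_ge k ht.le, h.tsCeil_of_ge ht.le])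
  refine fun c x hcx => ⟨?_, ?_⟩
  · simp only [h.extK_cR, ← Complex.ofReal_div, intervalIntegral.integral_ofReal]
    rw [← Complex.ofReal_add, add_assoc,
      intervalIntegral.integral_add_adjacent_intervals (hint' a c) (hint' c x)]
  · simp only
    rw [integral_complex_ofReal, ← Complex.ofReal_add, hu₁ x, hu₁ c, ← Iic_union_Ioc_eq_Iic hcx,
      setIntegral_union (Iic_disjoint_Ioc le_rfl) measurableSet_Ioc hk.integrableOn
        hk.integrableOn, add_assoc]

theorem exists_isPair_of_isSLSolution (h : IsBoundedTimeScale (tsKappa T) a b)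
    (hp : Integrable (fun t => 1 / p t) (backwardMeasure (tsKappa T) a b))
    (hw : Integrable w (forwardMeasure (tsKappa T) a b))
    (hv : IsSLSolution (gapExtendInv (tsKappa T) a b p) (gapExtend (tsKappa T) a b w) v v₁ a b) :
    ∃ u u₁ : ℝ → ℂ, IsPair T (forwardMeasure (tsKappa T) a b) (cR p) u u₁
        (fun t => ((-(w t * v t) : ℝ) : ℂ)) ∧
      (∀ x ∈ tsKappa T, u x = v x) ∧ u₁ a = v₁ a ∧ u₁ b = v₁ b := by
  set m := forwardMeasure (tsKappa T) a b
  have hk := h.integrable_mul_of_isSLSolution hw hv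
  obtain ⟨c₀, hc₀⟩ : ∃ c₀, c₀ = v₁ a - ∫ t in Iic a, -(w t * v t) ∂m := ⟨_, rfl⟩
  obtain ⟨u₁, hu₁⟩ : ∃ u₁ : ℝ → ℝ, ∀ x, u₁ x = c₀ + ∫ t in Iic x, -(w t * v t) ∂m :=
    ⟨_, fun _ => rfl⟩
  have hu₁v : ∀ x, a ≤ x → u₁ x = v₁ (tsSigma (tsKappa T) x) := by
    intro x hx
    rw [h.comp_tsSigma_eq_of_isSLSolution hw hv, hu₁, hc₀, ← Iic_union_Ioc_eq_Iic hx,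
      setIntegral_union (Iic_disjoint_Ioc le_rfl) measurableSet_Ioc hk.integrableOn
        hk.integrableOn]
    ring
  have hint : IntegrableOn (fun t => u₁ t / p (tsCeil (tsKappa T) b t)) (Icc a b) :=
    (h.integrableOn_comp_tsSigma_div hv.hasACDerivOn_quasi.continuousOn hp).congr_fun
      (fun t ht => by simp only [hu₁v t ht.1]) measurableSet_Icc
  refine ⟨_, _, h.isPair_ofReal hk hu₁ hint (v a), fun x hx => ?_, ?_, ?_⟩
  · rw [← h.eqOn_of_isSLSolution hp hv hx, intervalIntegral.integral_congr fun t ht => ?_]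
    rw [uIcc_of_le (h.isLeast.2 hx)] at ht
    simp only [hu₁v t ht.1]
  · rw [hu₁, hc₀, sub_add_cancel]
  · rw [hu₁v b h.le, h.tsSigma_of_ge le_rfl]

end IsBoundedTimeScale

/-! ### The weighted space -/

section WeightedSpace

variable {T : Set ℝ} {μ : Measure ℝ} {r q : ℝ → ℝ} {h u : ℝ → ℂ} {t E C : ℝ}

theorem ae_wM_iff (hμ : ∀ᵐ t ∂μ, t ∈ tsKappa T) (hr : AEMeasurable r μ) (hrpos : ∀ᵐ t ∂μ, 0 < r t)
    {Φ : ℝ → Prop} : (∀ᵐ t ∂wM T μ r, Φ t) ↔ ∀ᵐ t ∂μ, Φ t := by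
  rw [wM, Measure.restrict_eq_self_of_ae_mem hμ, ae_withDensity_iff' hr.ennreal_ofReal]
  refine eventually_congr (hrpos.mono fun t ht => ?_)
  simp [ht]

theorem memLp_wM_of_bound (hμ : ∀ᵐ t ∂μ, t ∈ tsKappa T) (hr : Integrable r μ)
    (hu : AEStronglyMeasurable u μ) (hC : ∀ᵐ t ∂μ, ‖u t‖ ≤ C) : MemLp u 2 (wM T μ r) := by
  rw [wM, Measure.restrict_eq_self_of_ae_mem hμ]
  have := isFiniteMeasure_withDensity_ofReal hr.2
  have hac := withDensity_absolutelyContinuous μ fun t => ENNReal.ofReal (r t)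
  exact MemLp.of_bound (hu.mono_ac hac) C (hac.ae_le hC)

theorem memL2T_of_bound (hμ : ∀ᵐ t ∂μ, t ∈ tsKappa T) (hr : Integrable r μ)
    (hC : ∀ᵐ t ∂μ, ‖u t‖ ≤ C) : MemL2T T μ r u := by
  rw [MemL2T, Measure.restrict_eq_self_of_ae_mem hμ]
  calc ∫⁻ t, sqWeight r u t ∂μ ≤ ∫⁻ t, ENNReal.ofReal C ^ 2 * ENNReal.ofReal (r t) ∂μ := by
        refine lintegral_mono_ae (hC.mono fun t ht => ?_)
        rw [sqWeight, ← enorm_eq_nnnorm, ← ofReal_norm]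
        gcongr
    _ = ENNReal.ofReal C ^ 2 * ∫⁻ t, ENNReal.ofReal (r t) ∂μ :=
        lintegral_const_mul' _ _ (by finiteness)
    _ < ∞ := ENNReal.mul_lt_top (by finiteness) hr.lintegral_lt_top

theorem ellApply_eq_mul_iff (hr : r t ≠ 0) :
    ellApply r q h u t = (E : ℂ) * u t ↔ h t = -(((E * r t - q t : ℝ) : ℂ) * u t) := by
  rw [ellApply, div_eq_iff (Complex.ofReal_ne_zero.2 hr)]
  push_cast
  constructor <;> intro heq <;> linear_combination -heq

end WeightedSpace

/-! ### Real parts of complex pairs -/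

theorem map_mul_ofReal (L : ℂ →L[ℝ] ℝ) (z : ℂ) (c : ℝ) : L (z * c) = L z * c := by
  rw [mul_comm, ← Complex.real_smul, map_smul, smul_eq_mul, mul_comm]

theorem map_div_ofReal (L : ℂ →L[ℝ] ℝ) (z : ℂ) (c : ℝ) : L (z / c) = L z / c := by
  rw [div_eq_mul_inv, ← Complex.ofReal_inv, map_mul_ofReal, div_eq_mul_inv]

namespace IsPair

variable {T : Set ℝ} {a b : ℝ} {p w : ℝ → ℝ} {u u₁ k : ℝ → ℂ}

theorem map_quasi {μ : Measure ℝ} {p : ℝ → ℂ} (hpair : IsPair T μ p u u₁ k) (hk : Integrable k μ)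
    (L : ℂ →L[ℝ] ℝ) {c x : ℝ} (hcx : c ≤ x) :
    L (u₁ x) = L (u₁ c) + ∫ t in Ioc c x, L (k t) ∂μ := by
  rw [(hpair c x hcx).2, map_add, L.integral_comp_comm hk.integrableOn]

theorem integrableOn_map_div (h : IsBoundedTimeScale (tsKappa T) a b)
    (hp : Integrable (fun t => 1 / p t) (backwardMeasure (tsKappa T) a b))
    (hk : Integrable k (forwardMeasure (tsKappa T) a b))
    (hpair : IsPair T (forwardMeasure (tsKappa T) a b) (cR p) u u₁ k) (L : ℂ →L[ℝ] ℝ) :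
    IntegrableOn (fun t => L (u₁ t / extK T (cR p) t)) (Icc a b) := by
  obtain ⟨y₁, hy₁, -, hy₁u⟩ := h.exists_hasACDerivOn_gapExtend (u₁ := fun x => L (u₁ x))
    (L.integrable_comp hk) fun x hx => hpair.map_quasi hk L hx
  refine (h.integrableOn_comp_tsSigma_div hy₁.continuousOn hp).congr_fun (fun t ht => ?_)
    measurableSet_Icc
  simp only [h.extK_cR, map_div_ofReal, hy₁u t ht.1]

theorem map_eq_add_integral (h : IsBoundedTimeScale (tsKappa T) a b)
    (hp : Integrable (fun t => 1 / p t) (backwardMeasure (tsKappa T) a b))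
    (hk : Integrable k (forwardMeasure (tsKappa T) a b))
    (hpair : IsPair T (forwardMeasure (tsKappa T) a b) (cR p) u u₁ k) (L : ℂ →L[ℝ] ℝ) {x : ℝ}
    (hx : x ∈ Icc a b) :
    L (u x) = L (u a) + ∫ t in a..x, L (u₁ t) / p (tsCeil (tsKappa T) b t) := by
  have hint : IntegrableOn (fun t => u₁ t / extK T (cR p) t) (Icc a b) :=
    Integrable.re_im_iff.1 ⟨hpair.integrableOn_map_div h hp hk Complex.reCLM,
      hpair.integrableOn_map_div h hp hk Complex.imCLM⟩
  have hint' : IntervalIntegrable (fun t => u₁ t / extK T (cR p) t) volume a x :=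
    (intervalIntegrable_iff_integrableOn_Icc_of_le hx.1).2
      (hint.mono_set (Icc_subset_Icc_right hx.2))
  rw [(hpair a x hx.1).1, map_add, ← L.intervalIntegral_comp_comm hint']
  simp only [h.extK_cR, map_div_ofReal]

theorem exists_isSLSolution (h : IsBoundedTimeScale (tsKappa T) a b)
    (hp : Integrable (fun t => 1 / p t) (backwardMeasure (tsKappa T) a b))
    (hk : Integrable k (forwardMeasure (tsKappa T) a b))
    (hpair : IsPair T (forwardMeasure (tsKappa T) a b) (cR p) u u₁ k)
    (hkw : ∀ᵐ t ∂forwardMeasure (tsKappa T) a b, k t = -((w t : ℂ) * u t)) (L : ℂ →L[ℝ] ℝ) :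
    ∃ y y₁ : ℝ → ℝ,
      IsSLSolution (gapExtendInv (tsKappa T) a b p) (gapExtend (tsKappa T) a b w) y y₁ a b ∧
      EqOn y (fun x => L (u x)) (tsKappa T) ∧ y₁ a = L (u₁ a) ∧ y₁ b = L (u₁ b) :=
  h.exists_isSLSolution hp (L.integrable_comp hk)
    (hkw.mono fun t ht => by rw [ht, map_neg, mul_comm, map_mul_ofReal, mul_comm])
    (fun _ hx => hpair.map_eq_add_integral h hp hk L hx) fun _ hx => hpair.map_quasi hk L hx

end IsPair

/-! ### Eigenvalues and the Prüfer angle -/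

theorem sin_mul_cos_sub_cos_mul_sin_eq_zero_iff {x φ : ℝ} :
    Real.sin x * Real.cos φ - Real.cos x * Real.sin φ = 0 ↔ ∃ k : ℤ, x = φ + k * Real.pi := by
  rw [← Real.sin_sub, Real.sin_eq_zero_iff]
  exact exists_congr fun k => ⟨fun hk => by linarith, fun hk => by linarith⟩

theorem IsSLSolution.eqOn_zero_or_exists_int {P W y y₁ θ : ℝ → ℝ} {a b φ : ℝ}
    (hP : IntervalIntegrable P volume a b) (hW : IntervalIntegrable W volume a b)
    (hθ : HasACDerivOn θ (fun s => pruferField P W s (θ s)) a b) (hy : IsSLSolution P W y y₁ a b)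
    (hya : y a * Real.cos (θ a) - y₁ a * Real.sin (θ a) = 0)
    (hyb : y b * Real.cos φ - y₁ b * Real.sin φ = 0) :
    EqOn y 0 (Icc a b) ∨ ∃ k : ℤ, θ b = φ + k * Real.pi := by
  obtain ⟨ρ, hρa, hρ, hv⟩ := exists_of_pruferAngle hP hW hθ
  obtain ⟨κ, hκ⟩ := eq_const_mul_of_pruferAngle hP hW hρa hv hy hya
  rcases eq_or_ne κ 0 with rfl | hκ0
  · exact Or.inl fun x hx => by rw [(hκ x hx).1, zero_mul, Pi.zero_apply]
  · have hb := hκ b (right_mem_Icc.2 hθ.le)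
    refine Or.inr (sin_mul_cos_sub_cos_mul_sin_eq_zero_iff.1 ?_)
    refine (mul_eq_zero.1 ?_).resolve_left (mul_ne_zero hκ0 (hρ b).ne')
    rw [hb.1, hb.2] at hyb
    linear_combination hyb

theorem IsPair.eqOn_zero_or_exists_int {T : Set ℝ} {a b φ : ℝ} {p w θ : ℝ → ℝ} {u u₁ k : ℝ → ℂ}
    (h : IsBoundedTimeScale (tsKappa T) a b)
    (hp : Integrable (fun t => 1 / p t) (backwardMeasure (tsKappa T) a b))
    (hw : Integrable w (forwardMeasure (tsKappa T) a b))
    (hθ : HasACDerivOn θ (fun s => pruferField (gapExtendInv (tsKappa T) a b p)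
      (gapExtend (tsKappa T) a b w) s (θ s)) a b)
    (hk : Integrable k (forwardMeasure (tsKappa T) a b))
    (hpair : IsPair T (forwardMeasure (tsKappa T) a b) (cR p) u u₁ k)
    (hkw : ∀ᵐ t ∂forwardMeasure (tsKappa T) a b, k t = -((w t : ℂ) * u t))
    (ha : u a * (Real.cos (θ a) : ℂ) - u₁ a * (Real.sin (θ a) : ℂ) = 0)
    (hb : u b * (Real.cos φ : ℂ) - u₁ b * (Real.sin φ : ℂ) = 0) :
    EqOn u 0 (tsKappa T) ∨ ∃ k : ℤ, θ b = φ + k * Real.pi := by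
  have hreal : ∀ L : ℂ →L[ℝ] ℝ, (∀ x ∈ tsKappa T, L (u x) = 0) ∨
      ∃ k : ℤ, θ b = φ + k * Real.pi := by
    intro L
    obtain ⟨y, y₁, hy, hyu, hya, hyb⟩ := hpair.exists_isSLSolution h hp hk hkw L
    refine (hy.eqOn_zero_or_exists_int (h.intervalIntegrable_gapExtendInv hp)
      (h.intervalIntegrable_gapExtend hw) hθ ?_ ?_).imp_left fun hy0 x hx => ?_
    · rw [hyu h.isLeast.1, hya, ← map_mul_ofReal, ← map_mul_ofReal, ← map_sub, ha, map_zero]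
    · rw [hyu h.isGreatest.1, hyb, ← map_mul_ofReal, ← map_mul_ofReal, ← map_sub, hb, map_zero]
    · exact (hyu hx).symm.trans (hy0 (h.subset_Icc hx))
  rcases hreal Complex.reCLM with hre | hangle
  · exact (hreal Complex.imCLM).imp_left fun him x hx => Complex.ext (hre x hx) (him x hx)
  · exact Or.inr hangle

namespace IsBoundedTimeScale

variable {X : Set ℝ} {a b : ℝ} {p r θ ρ v₁ W : ℝ → ℝ}

theorem not_ae_mul_sin_pruferAngle_eq_zero (h : IsBoundedTimeScale X a b)
    (hr : Integrable r (forwardMeasure X a b)) (hr0 : 0 ≤ᵐ[forwardMeasure X a b] r)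
    (hPR : ¬(fun t => gapExtendInv X a b p t * gapExtend X a b r t)
      =ᵐ[volume.restrict (Icc a b)] 0)
    (hθ : HasACDerivOn θ (fun s => pruferField (gapExtendInv X a b p) W s (θ s)) a b)
    (hρ : ∀ x, 0 < ρ x)
    (hv : IsSLSolution (gapExtendInv X a b p) W (fun t => ρ t * Real.sin (θ t)) v₁ a b) :
    ¬∀ᵐ t ∂forwardMeasure X a b, ρ t * Real.sin (θ t) = 0 := by
  intro hzero
  refine (integral_mul_sin_sq_pruferAngle_pos (h.intervalIntegrable_gapExtend hr)
    (h.gapExtend_nonneg hr0) hPR hθ).ne' ?_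
  refine (intervalIntegral.integral_congr_ae_restrict (g := fun _ => 0) ?_).trans (by simp)
  rw [uIoc_of_le h.le]
  refine ae_restrict_of_ae_restrict_of_subset Ioc_subset_Icc_self ?_
  filter_upwards [h.ae_gapExtend_mul hv.hasACDerivOn r,
    ae_of_ae_map h.monotone_tsFloor.measurable.aemeasurable hzero] with t hrv hvt
  have hrs : gapExtend X a b r t * Real.sin (θ t) = 0 := by
    refine (mul_eq_zero.1 ?_).resolve_left (hρ t).ne'
    rw [mul_left_comm, ← hrv]
    simp [gapExtend, indicator_apply, hvt]
  rw [sq, ← mul_assoc, hrs, zero_mul]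

end IsBoundedTimeScale

/-! ### The eigenvalues -/

/-- The graph of the relation which the Sturm–Liouville expression `ℓ` induces on
`L²(𝕋_κ; r dσ_κ)` with separated boundary conditions at `a` and `b`: the class `F` has a
representative `u` in `D_ℓ²` satisfying the boundary conditions, and `G` is the class of `ℓu`.
The relation is multivalued if `a` is a right-scattered point of `𝕋_κ`. -/
def IsSLRelated (T : Set ℝ) (μ : Measure ℝ) (a b : ℝ) (p r q : ℝ → ℝ) (φα φβ : ℝ)
    (F G : Lp ℂ 2 (wM T μ r)) : Prop :=
  ∃ u u₁ h : ℝ → ℂ, MemD2 T μ p r q u u₁ h ∧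
    (∀ᵐ t ∂wM T μ r, F t = u t) ∧ (∀ᵐ t ∂wM T μ r, G t = ellApply r q h u t) ∧
    u a * (Real.cos φα : ℂ) - u₁ a * (Real.sin φα : ℂ) = 0 ∧
    u b * (Real.cos φβ : ℂ) - u₁ b * (Real.sin φβ : ℂ) = 0

/-- The real eigenvalues of the relation `IsSLRelated`. -/
def slEigenvalues (T : Set ℝ) (μ : Measure ℝ) (a b : ℝ) (p r q : ℝ → ℝ) (φα φβ : ℝ) : Set ℝ :=
  {E : ℝ | ∃ F : Lp ℂ 2 (wM T μ r), F ≠ 0 ∧ IsSLRelated T μ a b p r q φα φβ F ((E : ℂ) • F)}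

section Related

variable {T : Set ℝ} {μ : Measure ℝ} {a b φα φβ E C : ℝ} {p q r : ℝ → ℝ} {u u₁ k : ℝ → ℂ}

theorem ae_smul_eq_ellApply_iff (hμ : ∀ᵐ t ∂μ, t ∈ tsKappa T) (hr : AEMeasurable r μ)
    (hrpos : ∀ᵐ t ∂μ, 0 < r t) {F : Lp ℂ 2 (wM T μ r)} (hF : ∀ᵐ t ∂wM T μ r, F t = u t) :
    (∀ᵐ t ∂wM T μ r, ((E : ℂ) • F) t = ellApply r q k u t) ↔
      ∀ᵐ t ∂μ, k t = -(((E * r t - q t : ℝ) : ℂ) * u t) := by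
  have hsmul : ∀ᵐ t ∂wM T μ r, ((E : ℂ) • F) t = (E : ℂ) * u t := by
    filter_upwards [Lp.coeFn_smul (E : ℂ) F, hF] with t hEF hFu
    rw [hEF, Pi.smul_apply, hFu, smul_eq_mul]
  calc (∀ᵐ t ∂wM T μ r, ((E : ℂ) • F) t = ellApply r q k u t)
      ↔ ∀ᵐ t ∂wM T μ r, ellApply r q k u t = (E : ℂ) * u t :=
        eventually_congr (hsmul.mono fun t ht => by rw [ht, eq_comm])
    _ ↔ ∀ᵐ t ∂μ, ellApply r q k u t = (E : ℂ) * u t := ae_wM_iff hμ hr hrpos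
    _ ↔ ∀ᵐ t ∂μ, k t = -(((E * r t - q t : ℝ) : ℂ) * u t) :=
        eventually_congr (hrpos.mono fun t ht => ellApply_eq_mul_iff ht.ne')

theorem exists_isSLRelated_of_isPair (hμ : ∀ᵐ t ∂μ, t ∈ tsKappa T) (hr : Integrable r μ)
    (hrpos : ∀ᵐ t ∂μ, 0 < r t) (hk : Integrable k μ) (hpair : IsPair T μ (cR p) u u₁ k)
    (hkw : ∀ᵐ t ∂μ, k t = -(((E * r t - q t : ℝ) : ℂ) * u t)) (hu : AEStronglyMeasurable u μ)
    (hC : ∀ᵐ t ∂μ, ‖u t‖ ≤ C)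
    (ha : u a * (Real.cos φα : ℂ) - u₁ a * (Real.sin φα : ℂ) = 0)
    (hb : u b * (Real.cos φβ : ℂ) - u₁ b * (Real.sin φβ : ℂ) = 0) :
    ∃ F : Lp ℂ 2 (wM T μ r), (∀ᵐ t ∂μ, F t = u t) ∧
      IsSLRelated T μ a b p r q φα φβ F ((E : ℂ) • F) := by
  have hLp := memLp_wM_of_bound hμ hr hu hC
  have hF : ∀ᵐ t ∂wM T μ r, hLp.toLp u t = u t := hLp.coeFn_toLp
  refine ⟨hLp.toLp u, (ae_wM_iff hμ hr.aemeasurable hrpos).1 hF, u, u₁, k,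
    ⟨hk.locallyIntegrable, hpair, memL2T_of_bound hμ hr hC,
      memL2T_of_bound (C := |E| * C) hμ hr ?_⟩,
    hF, (ae_smul_eq_ellApply_iff hμ hr.aemeasurable hrpos hF).2 hkw, ha, hb⟩
  filter_upwards [hkw, hrpos, hC] with t hkt hrt hCt
  rw [(ellApply_eq_mul_iff hrt.ne').2 hkt, norm_mul, Complex.norm_real, Real.norm_eq_abs]
  gcongr

end Related

namespace IsBoundedTimeScale

variable {T : Set ℝ} {a b φ φα φβ E : ℝ} {p q r v v₁ θ : ℝ → ℝ}

theorem integrable_of_locallyIntegrable {X : Set ℝ} {k : ℝ → ℂ} (h : IsBoundedTimeScale X a b)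
    (hk : LocallyIntegrable k (forwardMeasure X a b)) : Integrable k (forwardMeasure X a b) := by
  have := hk.integrableOn_isCompact h.isCompact
  rwa [IntegrableOn, Measure.restrict_eq_self_of_ae_mem h.ae_forwardMeasure_mem] at this

theorem exists_int_of_isSLRelated (h : IsBoundedTimeScale (tsKappa T) a b)
    (hp : Integrable (fun t => 1 / p t) (backwardMeasure (tsKappa T) a b))
    (hq : Integrable q (forwardMeasure (tsKappa T) a b))
    (hr : Integrable r (forwardMeasure (tsKappa T) a b))
    (hrpos : ∀ᵐ t ∂forwardMeasure (tsKappa T) a b, 0 < r t)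
    (hθ : HasACDerivOn θ (fun s => pruferField (gapExtendInv (tsKappa T) a b p)
      (gapExtend (tsKappa T) a b fun t => E * r t - q t) s (θ s)) a b)
    {F : Lp ℂ 2 (wM T (forwardMeasure (tsKappa T) a b) r)} (hF0 : F ≠ 0)
    (hF : IsSLRelated T (forwardMeasure (tsKappa T) a b) a b p r q (θ a) φ F ((E : ℂ) • F)) :
    ∃ k : ℤ, θ b = φ + k * Real.pi := by
  obtain ⟨u, u₁, k, ⟨hk, hpair, -, -⟩, hFu, hEF, ha, hb⟩ := hF
  have hmem := h.ae_forwardMeasure_mem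
  have hkw := (ae_smul_eq_ellApply_iff hmem hr.aemeasurable hrpos hFu).1 hEF
  refine (hpair.eqOn_zero_or_exists_int h hp ((hr.const_mul E).sub hq) hθ
    (h.integrable_of_locallyIntegrable hk) hkw ha hb).resolve_left fun hu0 => hF0 ?_
  have hu0' := (ae_wM_iff hmem hr.aemeasurable hrpos).2 (hmem.mono hu0)
  refine Lp.eq_zero_iff_ae_eq_zero.2 ?_
  filter_upwards [hFu, hu0'] with t hFt hut using hFt.trans hut

theorem exists_isSLRelated_of_isSLSolution (h : IsBoundedTimeScale (tsKappa T) a b)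
    (hp : Integrable (fun t => 1 / p t) (backwardMeasure (tsKappa T) a b))
    (hq : Integrable q (forwardMeasure (tsKappa T) a b))
    (hr : Integrable r (forwardMeasure (tsKappa T) a b))
    (hrpos : ∀ᵐ t ∂forwardMeasure (tsKappa T) a b, 0 < r t)
    (hv : IsSLSolution (gapExtendInv (tsKappa T) a b p)
      (gapExtend (tsKappa T) a b fun t => E * r t - q t) v v₁ a b)
    (ha : v a * Real.cos φα - v₁ a * Real.sin φα = 0)
    (hb : v b * Real.cos φβ - v₁ b * Real.sin φβ = 0) :
    ∃ F : Lp ℂ 2 (wM T (forwardMeasure (tsKappa T) a b) r),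
      (∀ᵐ t ∂forwardMeasure (tsKappa T) a b, F t = v t) ∧
      IsSLRelated T (forwardMeasure (tsKappa T) a b) a b p r q φα φβ F ((E : ℂ) • F) := by
  have hmem := h.ae_forwardMeasure_mem
  have hmemI := hmem.mono fun _ ht => h.subset_Icc ht
  have hw : Integrable (fun t => E * r t - q t) (forwardMeasure (tsKappa T) a b) :=
    (hr.const_mul E).sub hq
  have hk : Integrable (fun t => ((-((E * r t - q t) * v t) : ℝ) : ℂ))
      (forwardMeasure (tsKappa T) a b) := (h.integrable_mul_of_isSLSolution hw hv).ofReal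
  obtain ⟨u, u₁, hpair, huv, hu₁a, hu₁b⟩ := h.exists_isPair_of_isSLSolution hp hw hv
  have huv' : ∀ᵐ t ∂forwardMeasure (tsKappa T) a b, u t = v t := hmem.mono huv
  have hcont : ContinuousOn v (Icc a b) := uIcc_of_le h.le ▸ hv.hasACDerivOn.continuousOn
  obtain ⟨C, hC⟩ := isCompact_Icc.exists_bound_of_continuousOn hcont
  have hvm : AEStronglyMeasurable v (forwardMeasure (tsKappa T) a b) := by
    have := hcont.aestronglyMeasurable (μ := forwardMeasure (tsKappa T) a b) measurableSet_Icc
    rwa [Measure.restrict_eq_self_of_ae_mem hmemI] at this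
  have hum : AEStronglyMeasurable u (forwardMeasure (tsKappa T) a b) :=
    (Complex.continuous_ofReal.comp_aestronglyMeasurable hvm).congr (huv'.mono fun t => Eq.symm)
  obtain ⟨F, hFu, hF⟩ := exists_isSLRelated_of_isPair (E := E) (q := q) (a := a) (b := b)
    (φα := φα) (φβ := φβ) (C := C) hmem hr hrpos
    hk hpair (huv'.mono fun t ht => by rw [ht, Complex.ofReal_neg, Complex.ofReal_mul]) hum
    (by filter_upwards [huv', hmemI] with t ht htI; rw [ht, Complex.norm_real]; exact hC t htI)
    (by rw [huv a h.isLeast.1, hu₁a]; exact_mod_cast ha)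
    (by rw [huv b h.isGreatest.1, hu₁b]; exact_mod_cast hb)
  exact ⟨F, by filter_upwards [hFu, huv'] with t hFt hut using hFt.trans hut, hF⟩

theorem mem_slEigenvalues_iff_exists_int (h : IsBoundedTimeScale (tsKappa T) a b)
    (hp : Integrable (fun t => 1 / p t) (backwardMeasure (tsKappa T) a b))
    (hq : Integrable q (forwardMeasure (tsKappa T) a b))
    (hr : Integrable r (forwardMeasure (tsKappa T) a b))
    (hrpos : ∀ᵐ t ∂forwardMeasure (tsKappa T) a b, 0 < r t)
    (hPR : ¬(fun t => gapExtendInv (tsKappa T) a b p t * gapExtend (tsKappa T) a b r t)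
      =ᵐ[volume.restrict (Icc a b)] 0)
    (hθ : HasACDerivOn θ (fun s => pruferField (gapExtendInv (tsKappa T) a b p)
      (gapExtend (tsKappa T) a b fun t => E * r t - q t) s (θ s)) a b) :
    E ∈ slEigenvalues T (forwardMeasure (tsKappa T) a b) a b p r q (θ a) φ ↔
      ∃ k : ℤ, θ b = φ + k * Real.pi := by
  refine ⟨fun ⟨F, hF0, hF⟩ => h.exists_int_of_isSLRelated hp hq hr hrpos hθ hF0 hF,
    fun hangle => ?_⟩
  obtain ⟨ρ, -, hρ, hv⟩ := IsSLSolution.exists_of_pruferAngle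
    (h.intervalIntegrable_gapExtendInv hp)
    (h.intervalIntegrable_gapExtend ((hr.const_mul E).sub hq)) hθ
  obtain ⟨F, hFv, hF⟩ := h.exists_isSLRelated_of_isSLSolution (φα := θ a) (φβ := φ)
    hp hq hr hrpos hv (by ring)
    (by linear_combination ρ b * sin_mul_cos_sub_cos_mul_sin_eq_zero_iff.2 hangle)
  refine ⟨F, ?_, hF⟩
  rintro rfl
  refine h.not_ae_mul_sin_pruferAngle_eq_zero hr (hrpos.mono fun _ => le_of_lt) hPR hθ hρ hv ?_
  have hzero := (ae_wM_iff h.ae_forwardMeasure_mem hr.aemeasurable hrpos).1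
    (Lp.coeFn_zero ℂ 2 (wM T (forwardMeasure (tsKappa T) a b) r))
  filter_upwards [hFv, hzero] with t hFt h0
  exact Complex.ofReal_eq_zero.1 (hFt.symm.trans h0)

theorem slEigenvalues_asymptotics (h : IsBoundedTimeScale (tsKappa T) a b)
    (hp : Integrable (fun t => 1 / p t) (backwardMeasure (tsKappa T) a b))
    (hppos : ∀ᵐ t ∂backwardMeasure (tsKappa T) a b, 0 < p t)
    (hq : Integrable q (forwardMeasure (tsKappa T) a b))
    (hr : Integrable r (forwardMeasure (tsKappa T) a b))
    (hrpos : ∀ᵐ t ∂forwardMeasure (tsKappa T) a b, 0 < r t)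
    (hφα : 0 ≤ φα) (hφβ : 0 ≤ φβ) (hφβ' : φβ < Real.pi)
    (hL : 0 < ∫ t in tsKappa T, √(r t / p t)) {Λ : Set ℝ}
    (hΛ : Λ = slEigenvalues T (forwardMeasure (tsKappa T) a b) a b p r q φα φβ) :
    Λ.Infinite ∧ BddBelow Λ ∧ (∀ x, ¬AccPt x (Filter.principal Λ)) ∧
      ∃ E : ℕ → ℝ, StrictMono E ∧ range E = Λ ∧ Tendsto (fun n => E n / (n : ℝ) ^ 2) atTop
        (nhds (Real.pi ^ 2 / (∫ t in tsKappa T, √(r t / p t)) ^ 2)) := by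
  have hP := h.intervalIntegrable_gapExtendInv hp
  have hQ := h.intervalIntegrable_gapExtend hq
  have hR := h.intervalIntegrable_gapExtend hr
  have hP0 := h.gapExtendInv_nonneg (hppos.mono fun _ => le_of_lt)
  have hR0 := h.gapExtend_nonneg (hrpos.mono fun _ => le_of_lt)
  rw [← h.integral_sqrt_gapExtendInv_mul_gapExtend] at hL ⊢
  have hPR := not_mul_ae_eq_zero_of_integral_sqrt_pos h.le hL
  obtain ⟨θ, hθ⟩ := exists_isPruferFamily h.le hP hQ hR φα
  refine infinite_bddBelow_tendsto_div_sq_of_levels (hθ.continuous hP hQ hR hR0 hPR)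
    (hθ.strictMono hP hQ hR hR0 hPR) (hθ.nonneg hQ hR hP0 hφα) hL
    (hθ.tendsto_div_atTop hP hQ hR hP0 hR0) hφβ hφβ' (hΛ.trans (ext fun E => ?_))
  have hθE := hθ.hasACDerivOn E
  rw [← gapExtend_const_mul_sub] at hθE
  rw [← hθ.left_eq E, h.mem_slEigenvalues_iff_exists_int hp hq hr hrpos hPR hθE, mem_ofPred_eq]

end IsBoundedTimeScale

theorem eigenvalue_asymptotics_bounded_time_scale_general
    (T : Set ℝ) (hne : T.Nonempty) (hcl : IsClosed T) (hbb : BddBelow T) (hba : BddAbove T)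
    (μ ν : Measure ℝ)
    (hμ : ∀ c d : ℝ, c ≤ d →
      μ (Ioc c d) = ENNReal.ofReal (tsSigma (tsKappa T) d - tsSigma (tsKappa T) c))
    (hν : ∀ c d : ℝ, c ≤ d → ν (Ico c d) = ENNReal.ofReal (tsRho T d - tsRho T c))
    (p r q : ℝ → ℝ)
    (hr : Integrable r (μ.restrict (tsKappa T))) (hrpos : ∀ᵐ t ∂μ, 0 < r t)
    (hq : Integrable q (μ.restrict (tsKappa T)))
    (hppos : ∀ᵐ t ∂ν, 0 < p t) (hp : Integrable (fun t => 1 / p t) ν)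
    (φα φβ : ℝ) (hφα : 0 ≤ φα) (hφβ : 0 ≤ φβ ∧ φβ < Real.pi)
    (hL : 0 < ∫ t in T, √(r t / p t)) {Λ : Set ℝ}
    (hΛ : Λ = slEigenvalues T μ (tsSigma T (sInf T)) (sSup T) p r q φα φβ) :
    Λ.Infinite ∧ BddBelow Λ ∧ (∀ x, ¬AccPt x (Filter.principal Λ)) ∧
      ∃ E : ℕ → ℝ, StrictMono E ∧ range E = Λ ∧ Tendsto (fun n => E n / (n : ℝ) ^ 2) atTop
        (nhds (Real.pi ^ 2 / (∫ t in T, √(r t / p t)) ^ 2)) := by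
  have hT := IsBoundedTimeScale.of_bddBelow_of_bddAbove hne hcl hbb hba
  have hX := hT.isBoundedTimeScale_tsKappa
  obtain rfl := hX.eq_forwardMeasure hμ
  obtain rfl := hT.eq_backwardMeasure hν
  rw [Measure.restrict_eq_self_of_ae_mem hX.ae_forwardMeasure_mem] at hr hq
  rw [← hT.setIntegral_tsKappa] at hL ⊢
  exact hX.slEigenvalues_asymptotics (hp.mono_measure hT.backwardMeasure_tsKappa_le)
    (ae_mono hT.backwardMeasure_tsKappa_le hppos) hq hr hrpos hφα hφβ.1 hφβ.2 hL hΛ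

/-- Eigenvalue asymptotics: if `𝕋` is bounded, `p > 0`, the space `L²(𝕋_κ; r dσ_κ)` is
infinite dimensional and `L = ∫_𝕋 √(r/p) dt > 0`, then the self-adjoint operator `S` with
separated boundary conditions has an infinite set of eigenvalues which is bounded from below
and has no finite accumulation point, and enumerating them as `E₀ < E₁ < ⋯` one has
`E_n / n² → π² / L²`. -/
theorem eigenvalue_asymptotics_bounded_time_scale
    (T : Set ℝ) (hne : T.Nonempty) (hcl : IsClosed T)
    (hbb : BddBelow T) (hba : BddAbove T)
    (hfive : ∃ s : Finset ℝ, ↑s ⊆ T ∧ 5 ≤ s.card)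
    (μ ν : Measure ℝ)
    (hμ : ∀ c d : ℝ, c ≤ d →
      μ (Set.Ioc c d) = ENNReal.ofReal (tsSigma (tsKappa T) d - tsSigma (tsKappa T) c))
    (hν : ∀ c d : ℝ, c ≤ d → ν (Set.Ico c d) = ENNReal.ofReal (tsRho T d - tsRho T c))
    (p r q : ℝ → ℝ)
    (hr : Integrable r (μ.restrict (tsKappa T))) (hrpos : ∀ᵐ t ∂μ, 0 < r t)
    (hq : Integrable q (μ.restrict (tsKappa T)))
    (hppos : ∀ᵐ t ∂ν, 0 < p t) (hp : Integrable (fun t => 1 / p t) ν)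
    (φα φβ : ℝ) (hφα : 0 ≤ φα ∧ φα < Real.pi) (hφβ : 0 ≤ φβ ∧ φβ < Real.pi)
    (hα : tsSigma T (sInf T) < tsSigma T (tsSigma T (sInf T)) → φα ≠ 0)
    (hβ : tsRho T (sSup T) < tsSigma T (tsRho T (sSup T)) →
      p (sSup T) * Real.sin φβ ≠ (sSup T - tsRho T (sSup T)) * Real.cos φβ)
    (S : Lp ℂ 2 (wM T μ r) →ₗ.[ℂ] Lp ℂ 2 (wM T μ r))
    (hSsa : IsSelfAdjoint S)
    (hSgraph : ∀ F G : Lp ℂ 2 (wM T μ r), (F, G) ∈ S.graph ↔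
      ∃ u u1 h : ℝ → ℂ, MemD2 T μ p r q u u1 h ∧
        (∀ᵐ t ∂(wM T μ r), F t = u t) ∧
        (∀ᵐ t ∂(wM T μ r), G t = ellApply r q h u t) ∧
        u (tsSigma T (sInf T)) * (Real.cos φα : ℂ) -
          u1 (tsSigma T (sInf T)) * (Real.sin φα : ℂ) = 0 ∧
        u (sSup T) * (Real.cos φβ : ℂ) - u1 (sSup T) * (Real.sin φβ : ℂ) = 0)
    (hinf : ¬ FiniteDimensional ℂ (Lp ℂ 2 (wM T μ r)))
    (hL : 0 < ∫ t in T, Real.sqrt (r t / p t)) :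
    Set.Infinite {E : ℝ | ∃ F : Lp ℂ 2 (wM T μ r), F ≠ 0 ∧ (F, (E : ℂ) • F) ∈ S.graph} ∧
    BddBelow {E : ℝ | ∃ F : Lp ℂ 2 (wM T μ r), F ≠ 0 ∧ (F, (E : ℂ) • F) ∈ S.graph} ∧
    (∀ x : ℝ, ¬ AccPt x (Filter.principal
      {E : ℝ | ∃ F : Lp ℂ 2 (wM T μ r), F ≠ 0 ∧ (F, (E : ℂ) • F) ∈ S.graph})) ∧
    ∃ E : ℕ → ℝ, StrictMono E ∧
      Set.range E = {E : ℝ | ∃ F : Lp ℂ 2 (wM T μ r), F ≠ 0 ∧ (F, (E : ℂ) • F) ∈ S.graph} ∧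
      Filter.Tendsto (fun n => E n / (n : ℝ) ^ 2) Filter.atTop
        (nhds (Real.pi ^ 2 / (∫ t in T, Real.sqrt (r t / p t)) ^ 2)) := by
  simp only [hSgraph]
  exact eigenvalue_asymptotics_bounded_time_scale_general T hne hcl hbb hba μ ν hμ hν p r q hr
    hrpos hq hppos hp φα φβ hφα.1 hφβ hL rfl
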